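/- arXiv:2605.24955 — 2 statements merged into one kernel-verified Lean document; each statement's English description precedes it below -/
import Mathlib

section
/- Second moment of the debiased oblique projection (Theorem 3.2, second moment): There exist absolute constants C > 0 and C' > 0 such that the following holds. Let n ≥ p ≥ 1 with n ≥ 3, let X ∈ ℝ^{n×p} have Xᵀ X invertible and satisfy the row-norm condition with exponent α > 0, let π be a sampling distribution with π i > 0 and ℓ_i(X) < m · π i for all i, let 0 < δ ≤ n^{−(3+α)}, and assume m ≥ C · θ_max(X) · p · log(p/δ). Then there exists an event ζ ⊆ Ω with P(ζ) ≥ 1 − δ such that (Š(ω) X)ᵀ Š(ω) X is invertible for every ω ∈ ζ and, writing P̌(ω) = X ((Š(ω) X)ᵀ Š(ω) X)⁻¹ (Š(ω) X)ᵀ Š(ω), P = X (Xᵀ X)⁻¹ Xᵀ and P⊥ = I_n − P, one has |E_ζ[‖P̌ − P‖_F²] − trace(P⊥ · diag(ℓ_i(X)/(m · π i))_{1≤i≤n})| ≤ ε · ‖P⊥‖_F², where ε = C' · (log n / log log n) · √(θ_max(X)³ · p³ / m³). -/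
/-!
Write `X = U B` with `B` invertible and `Uᵀ U = 1`. Then `ℓ_i = ‖U_i‖²`, `P = U Uᵀ`, and, with
`w_i = 1 / (m π_i - ℓ_i)`, `A(ω) = ∑ₛ w_{ω s} U_{ω s} U_{ω s}ᵀ` and
`Z(ω) = ∑ₛ w_{ω s} U_{ω s} (P⊥)_{ω s}ᵀ`, the projection error is `P̌ - P = U A⁻¹ Z`, so that
`‖P̌ - P‖_F² = ‖A⁻¹ Z‖_F²`. Everything is measured in powers of `γ = θ_max p / m`, which bounds
`ℓ_i / (m π_i)` and is at most `1 / 224`, and of `q = ‖P⊥‖_F²`.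

*Main term.* `Z` is a sum of i.i.d. rank-one matrices, and the debiased weights are chosen so that
`E ‖Z‖_F²` is the trace in the statement up to `O(γ² q)` (`abs_Ex_nsq_crossS_sub_le`).

*Good event.* `ζ = {A ⪰ 1/2}`. There `A` is invertible, and
`A⁻¹ Z = Z - A⁻¹ (A - 1) Z`, so Young's inequality with weight `√γ` bounds
`|‖A⁻¹ Z‖² - ‖Z‖²|` by `√γ ‖Z‖² + 8 γ^{-1/2} ‖(A - 1) Z‖²` (`Good.abs_nsq_inv_mul_sub_le`).
Splitting the product of the two i.i.d. sums into diagonal and off-diagonal parts gives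
`E ‖(A - 1) Z‖² = O(γ² q)` (`Ex_nsq_dev_mul_cross_le`), hence an error `O(γ^{3/2} q)`.

*Probability of the good event.* The barrier `tr (1 + A)⁻ᴺ` with `N ∼ 1 / γ` decreases in
expectation by a definite factor with each draw (`Ex_trace_inv_pow_le`) but is at least `(2/3)ᴺ`
off `ζ` (`trace_inv_pow_ge`). By Markov's inequality the failure probability is at most
`p exp (-1 / (112 γ))`, which the lower bound on `m` turns into `≤ δ`, and also `≤ 224 γ δ`
(`Ex_bad_le`).

*Bad event.* The row-norm condition bounds nonzero leverage scores below by `n^{-α}`, which controls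
the fourth moment of `Z` (`Ex_nsq_sq_ccross_le`); a truncation argument then shows that the bad
event contributes `O(γ^{3/2} q)` to `E ‖Z‖²` (`Ex_bad_mul_nsq_crossS_le`). As
`P(ζ) ≥ 1 - 9 γ`, conditioning on `ζ` changes the result by `O(γ² q)` only.

The resulting bound is `5000 γ^{3/2} q`; the factor `log n / log log n ≥ 1` only weakens it.
-/


open Matrix Finset

noncomputable section

/-- Probability of the i.i.d. sample `ω` of `m` draws from the sampling
distribution `π` (pmf of the product measure on `Ω = Fin m → Fin n`). -/
def samplingP {n : ℕ} (π : Fin n → ℝ) {m : ℕ} (ω : Fin m → Fin n) : ℝ :=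
  ∏ s, π (ω s)

/-- The sampling matrix `S(ω) ∈ ℝ^{m×n}` with `S(ω)_{s,j} = 1/√(m π_{ω s})` if
`j = ω s` and `0` otherwise. -/
def samplingS {n : ℕ} (π : Fin n → ℝ) {m : ℕ} (ω : Fin m → Fin n) :
    Matrix (Fin m) (Fin n) ℝ :=
  Matrix.of fun s j => if j = ω s then 1 / Real.sqrt (m * π (ω s)) else 0

/-- The `i`-th leverage score `ℓ_i(X) = x_iᵀ (Xᵀ X)⁻¹ x_i`. -/
def lev {n p : ℕ} (X : Matrix (Fin n) (Fin p) ℝ) (i : Fin n) : ℝ :=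
  X i ⬝ᵥ ((Xᵀ * X)⁻¹ *ᵥ X i)

/-- Maximum importance sampling approximation factor
`θ_max(X) = max_i ℓ_i(X)/(p π_i)`. -/
def thetaMax {n p : ℕ} (X : Matrix (Fin n) (Fin p) ℝ) (π : Fin n → ℝ) : ℝ :=
  ⨆ i, lev X i / (p * π i)

/-- Probability of an event `ζ` relative to the pmf `P`. -/
def eventProb {Ω : Type*} (P : Ω → ℝ) (ζ : Finset Ω) : ℝ :=
  ∑ ω ∈ ζ, P ω

/-- Conditional expectation `E_ζ[f] = P(ζ)⁻¹ ∑_{ω ∈ ζ} P(ω) f(ω)`. -/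
def condExp {Ω V : Type*} [AddCommMonoid V] [Module ℝ V]
    (P : Ω → ℝ) (ζ : Finset Ω) (f : Ω → V) : V :=
  (eventProb P ζ)⁻¹ • ∑ ω ∈ ζ, P ω • f ω

/-- Frobenius norm `‖A‖_F = √(trace (Aᵀ A))`. -/
def frobNorm {k l : ℕ} (A : Matrix (Fin k) (Fin l) ℝ) : ℝ :=
  Real.sqrt ((Aᵀ * A).trace)

/-- Loewner order: `A ⪯ B` iff `B − A` is positive semidefinite. -/
def loewnerLE {k : ℕ} (A B : Matrix (Fin k) (Fin k) ℝ) : Prop :=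
  (B - A).PosSemidef

/-- Debiased sampling matrix
`Š(ω) = diag(1/√(1 − ℓ_{ω s}(X)/(m π_{ω s})))_{s} · S(ω)`. -/
def samplingSdeb {n p : ℕ} (X : Matrix (Fin n) (Fin p) ℝ) (π : Fin n → ℝ) {m : ℕ}
    (ω : Fin m → Fin n) : Matrix (Fin m) (Fin n) ℝ :=
  Matrix.diagonal (fun s => 1 / Real.sqrt (1 - lev X (ω s) / (m * π (ω s)))) *
    samplingS π ω

/-- The orthogonal projection `P = X (Xᵀ X)⁻¹ Xᵀ` onto the column space of `X`. -/
def projX {n p : ℕ} (X : Matrix (Fin n) (Fin p) ℝ) : Matrix (Fin n) (Fin n) ℝ :=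
  X * (Xᵀ * X)⁻¹ * Xᵀ

/-- The debiased random oblique projection
`P̌(ω) = X ((Š(ω) X)ᵀ Š(ω) X)⁻¹ (Š(ω) X)ᵀ Š(ω)`. -/
def projDeb {n p : ℕ} (X : Matrix (Fin n) (Fin p) ℝ) (π : Fin n → ℝ) {m : ℕ}
    (ω : Fin m → Fin n) : Matrix (Fin n) (Fin n) ℝ :=
  X * ((samplingSdeb X π ω * X)ᵀ * (samplingSdeb X π ω * X))⁻¹ *
    (samplingSdeb X π ω * X)ᵀ * samplingSdeb X π ω

/-! ### Expectation over i.i.d. draws -/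

/-- Expectation of `F` over `k` i.i.d. draws from `π`. -/
def Ex {n : ℕ} (π : Fin n → ℝ) (k : ℕ) (F : (Fin k → Fin n) → ℝ) : ℝ :=
  ∑ ω, samplingP π ω * F ω

/-- One draw can be integrated out after the others. -/
lemma Ex_succ {n : ℕ} (π : Fin n → ℝ) (k : ℕ) (F : (Fin (k + 1) → Fin n) → ℝ) :
    Ex π (k + 1) F = Ex π k (fun ω => ∑ i, π i * F (Fin.snoc ω i)) := by
  unfold Ex
  rw [← (Fin.snocEquiv (fun _ : Fin (k + 1) => Fin n)).sum_comp]
  rw [Fintype.sum_prod_type, Finset.sum_comm]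
  refine Finset.sum_congr rfl fun ω _ => ?_
  rw [Finset.mul_sum]
  refine Finset.sum_congr rfl fun i _ => ?_
  simp only [samplingP, Fin.snocEquiv, Equiv.coe_fn_mk, Fin.prod_univ_castSucc,
    Fin.snoc_castSucc, Fin.snoc_last]
  ring

lemma Ex_zero {n : ℕ} (π : Fin n → ℝ) (F : (Fin 0 → Fin n) → ℝ) :
    Ex π 0 F = F default := by
  simp [Ex, samplingP]

lemma Ex_add {n : ℕ} (π : Fin n → ℝ) (k : ℕ) (F G : (Fin k → Fin n) → ℝ) :
    Ex π k (fun ω => F ω + G ω) = Ex π k F + Ex π k G := by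
  simp [Ex, mul_add, Finset.sum_add_distrib]

lemma Ex_sub {n : ℕ} (π : Fin n → ℝ) (k : ℕ) (F G : (Fin k → Fin n) → ℝ) :
    Ex π k (fun ω => F ω - G ω) = Ex π k F - Ex π k G := by
  simp [Ex, mul_sub, Finset.sum_sub_distrib]

lemma Ex_const_mul {n : ℕ} (π : Fin n → ℝ) (k : ℕ) (c : ℝ) (F : (Fin k → Fin n) → ℝ) :
    Ex π k (fun ω => c * F ω) = c * Ex π k F := by
  simp only [Ex, Finset.mul_sum]
  exact Finset.sum_congr rfl fun _ _ => by ring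

lemma Ex_mul_const {n : ℕ} (π : Fin n → ℝ) (k : ℕ) (c : ℝ) (F : (Fin k → Fin n) → ℝ) :
    Ex π k (fun ω => F ω * c) = Ex π k F * c := by
  simp only [mul_comm _ c, Ex_const_mul]

lemma Ex_sum {n : ℕ} {ι : Type*} (t : Finset ι) (π : Fin n → ℝ) (k : ℕ)
    (F : ι → (Fin k → Fin n) → ℝ) :
    Ex π k (fun ω => ∑ i ∈ t, F i ω) = ∑ i ∈ t, Ex π k (F i) := by
  simp only [Ex, Finset.mul_sum]
  exact Finset.sum_comm

lemma samplingP_nonneg {n k : ℕ} {π : Fin n → ℝ} (hπ : ∀ i, 0 ≤ π i) (ω : Fin k → Fin n) :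
    0 ≤ samplingP π ω :=
  Finset.prod_nonneg fun _ _ => hπ _

lemma Ex_mono {n : ℕ} {π : Fin n → ℝ} (hπ : ∀ i, 0 ≤ π i) {k : ℕ}
    {F G : (Fin k → Fin n) → ℝ} (h : ∀ ω, F ω ≤ G ω) : Ex π k F ≤ Ex π k G :=
  Finset.sum_le_sum fun ω _ => mul_le_mul_of_nonneg_left (h ω) (samplingP_nonneg hπ ω)

lemma Ex_const {n : ℕ} {π : Fin n → ℝ} (h1 : ∑ i, π i = 1) (k : ℕ) (c : ℝ) :
    Ex π k (fun _ => c) = c := by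
  induction k with
  | zero => rw [Ex_zero]
  | succ k ih => rw [Ex_succ]; simpa [← Finset.sum_mul, h1] using ih

lemma Ex_nonneg {n : ℕ} {π : Fin n → ℝ} (hπ : ∀ i, 0 ≤ π i) {k : ℕ}
    {F : (Fin k → Fin n) → ℝ} (h : ∀ ω, 0 ≤ F ω) : 0 ≤ Ex π k F :=
  Finset.sum_nonneg fun ω _ => mul_nonneg (samplingP_nonneg hπ ω) (h ω)

/-! ### Squared Frobenius norm and inner product -/

/-- Frobenius inner product of real matrices. -/
def ip {a b : ℕ} (M K : Matrix (Fin a) (Fin b) ℝ) : ℝ := ∑ i, ∑ j, M i j * K i j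

/-- Squared Frobenius norm of a real matrix. -/
def nsq {a b : ℕ} (M : Matrix (Fin a) (Fin b) ℝ) : ℝ := ∑ i, ∑ j, M i j ^ 2

section Frob
variable {a b c : ℕ}

lemma nsq_nonneg (M : Matrix (Fin a) (Fin b) ℝ) : 0 ≤ nsq M :=
  Finset.sum_nonneg fun _ _ => Finset.sum_nonneg fun _ _ => sq_nonneg _

lemma nsq_add (M K : Matrix (Fin a) (Fin b) ℝ) :
    nsq (M + K) = nsq M + 2 * ip M K + nsq K := by
  simp only [nsq, ip, Finset.mul_sum, ← Finset.sum_add_distrib, Matrix.add_apply]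
  exact Finset.sum_congr rfl fun _ _ => Finset.sum_congr rfl fun _ _ => by ring

lemma nsq_neg (M : Matrix (Fin a) (Fin b) ℝ) : nsq (-M) = nsq M := by
  simp [nsq]

lemma nsq_zero : nsq (0 : Matrix (Fin a) (Fin b) ℝ) = 0 := by
  simp [nsq]

lemma ip_neg (M K : Matrix (Fin a) (Fin b) ℝ) : ip M (-K) = -ip M K := by
  simp [ip]

lemma nsq_smul (r : ℝ) (M : Matrix (Fin a) (Fin b) ℝ) : nsq (r • M) = r ^ 2 * nsq M := by
  simp [nsq, Finset.mul_sum, mul_pow]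

lemma ip_young {r : ℝ} (hr : 0 < r) (M K : Matrix (Fin a) (Fin b) ℝ) :
    |2 * ip M K| ≤ r * nsq M + r⁻¹ * nsq K := by
  have key : ∀ x y : ℝ, |2 * (x * y)| ≤ r * x ^ 2 + r⁻¹ * y ^ 2 := by
    intro x y
    have e1 : r * x ^ 2 + r⁻¹ * y ^ 2 - 2 * (x * y) = r⁻¹ * (r * x - y) ^ 2 := by
      field_simp; ring
    have e2 : r * x ^ 2 + r⁻¹ * y ^ 2 + 2 * (x * y) = r⁻¹ * (r * x + y) ^ 2 := by
      field_simp; ring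
    have h1 : 0 ≤ r⁻¹ * (r * x - y) ^ 2 := by positivity
    have h2 : 0 ≤ r⁻¹ * (r * x + y) ^ 2 := by positivity
    rw [abs_le]; constructor <;> linarith
  simp only [nsq, ip, Finset.mul_sum, ← Finset.sum_add_distrib]
  refine (Finset.abs_sum_le_sum_abs _ _).trans (Finset.sum_le_sum fun i _ => ?_)
  exact (Finset.abs_sum_le_sum_abs _ _).trans (Finset.sum_le_sum fun j _ => key _ _)

lemma nsq_add_le (M K : Matrix (Fin a) (Fin b) ℝ) :
    nsq (M + K) ≤ 2 * nsq M + 2 * nsq K := by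
  have := (abs_le.1 (ip_young one_pos M K)).2
  rw [nsq_add]; simp at this; linarith

lemma nsq_sub_le (M K : Matrix (Fin a) (Fin b) ℝ) :
    nsq (M - K) ≤ 2 * nsq M + 2 * nsq K := by
  simpa [sub_eq_add_neg, nsq_neg] using nsq_add_le M (-K)

lemma ip_sq_le (M K : Matrix (Fin a) (Fin b) ℝ) : ip M K ^ 2 ≤ nsq M * nsq K := by
  simp only [ip, nsq, ← Fintype.sum_prod_type']
  exact Finset.sum_mul_sq_le_sq_mul_sq _ _ _

lemma nsq_eq_trace (M : Matrix (Fin a) (Fin b) ℝ) : nsq M = (Mᵀ * M).trace := by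
  simp only [nsq, Matrix.trace, Matrix.diag, Matrix.mul_apply, Matrix.transpose_apply]
  rw [Finset.sum_comm]
  exact Finset.sum_congr rfl fun _ _ => Finset.sum_congr rfl fun _ _ => by ring

lemma nsq_transpose (M : Matrix (Fin a) (Fin b) ℝ) : nsq Mᵀ = nsq M := by
  simp only [nsq, Matrix.transpose_apply]; exact Finset.sum_comm

lemma frobNorm_sq (M : Matrix (Fin a) (Fin b) ℝ) : frobNorm M ^ 2 = nsq M := by
  rw [frobNorm, ← nsq_eq_trace, Real.sq_sqrt (nsq_nonneg M)]

lemma nsq_eq_sum_rows (M : Matrix (Fin a) (Fin b) ℝ) : nsq M = ∑ i, M i ⬝ᵥ M i := by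
  simp only [nsq, dotProduct, sq]

lemma nsq_isometry_mul {U : Matrix (Fin a) (Fin b) ℝ} (hU : Uᵀ * U = 1)
    (M : Matrix (Fin b) (Fin c) ℝ) : nsq (U * M) = nsq M := by
  rw [nsq_eq_trace, nsq_eq_trace, Matrix.transpose_mul, Matrix.mul_assoc,
    ← Matrix.mul_assoc Uᵀ, hU, Matrix.one_mul]

lemma nsq_isometry_transpose_mul_le {U : Matrix (Fin a) (Fin b) ℝ} (hU : Uᵀ * U = 1)
    (M : Matrix (Fin a) (Fin c) ℝ) : nsq (Uᵀ * M) ≤ nsq M := by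
  -- Pythagoras: `M = U Uᵀ M + (M - U Uᵀ M)` is an orthogonal decomposition.
  have h : nsq (M - U * (Uᵀ * M)) = nsq M - nsq (Uᵀ * M) := by
    simp only [nsq_eq_trace, Matrix.transpose_sub, Matrix.transpose_mul,
      Matrix.transpose_transpose, Matrix.sub_mul, Matrix.mul_sub, Matrix.trace_sub]
    have e : Mᵀ * U * Uᵀ * (U * (Uᵀ * M)) = Mᵀ * U * (Uᵀ * M) := by
      rw [Matrix.mul_assoc (Mᵀ * U), ← Matrix.mul_assoc Uᵀ U, hU, Matrix.one_mul]
    have e' : Mᵀ * (U * (Uᵀ * M)) = Mᵀ * U * (Uᵀ * M) := by rw [Matrix.mul_assoc]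
    have e2 : Mᵀ * U * Uᵀ * M = Mᵀ * U * (Uᵀ * M) := by rw [Matrix.mul_assoc]
    rw [e, e', e2]; ring
  linarith [nsq_nonneg (M - U * (Uᵀ * M))]

lemma nsq_diagonal_mul_le {t : Fin a → ℝ} {r : ℝ} (ht : ∀ i, 0 ≤ t i) (ht' : ∀ i, t i ≤ r)
    (M : Matrix (Fin a) (Fin b) ℝ) : nsq (Matrix.diagonal t * M) ≤ r ^ 2 * nsq M := by
  simp only [nsq, Finset.mul_sum, Matrix.diagonal_mul, mul_pow]
  exact Finset.sum_le_sum fun i _ => Finset.sum_le_sum fun j _ =>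
    mul_le_mul_of_nonneg_right (pow_le_pow_left₀ (ht i) (ht' i) 2) (sq_nonneg _)

lemma nsq_vecMulVec (x : Fin a → ℝ) (y : Fin b → ℝ) :
    nsq (Matrix.vecMulVec x y) = (x ⬝ᵥ x) * (y ⬝ᵥ y) := by
  simp only [nsq, Matrix.vecMulVec_apply, dotProduct, Finset.sum_mul_sum]
  exact Finset.sum_congr rfl fun _ _ => Finset.sum_congr rfl fun _ _ => by ring

lemma dot_self_nonneg (x : Fin a → ℝ) : 0 ≤ x ⬝ᵥ x :=
  Finset.sum_nonneg fun _ _ => mul_self_nonneg _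

lemma dot_sq_le (x y : Fin a → ℝ) : (x ⬝ᵥ y) ^ 2 ≤ (x ⬝ᵥ x) * (y ⬝ᵥ y) := by
  simp only [dotProduct, ← sq]
  exact Finset.sum_mul_sq_le_sq_mul_sq _ _ _

lemma vecMul_dot_le (x : Fin a → ℝ) (M : Matrix (Fin a) (Fin b) ℝ) :
    (x ᵥ* M) ⬝ᵥ (x ᵥ* M) ≤ (x ⬝ᵥ x) * nsq M := by
  rw [← nsq_transpose M, nsq_eq_sum_rows, Finset.mul_sum]
  refine Finset.sum_le_sum fun j _ => ?_
  rw [← sq]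
  exact dot_sq_le x (Mᵀ j)

end Frob

/-! ### Second and fourth moments of i.i.d. matrix sums -/

section Moments
variable {n a b c : ℕ} {π : Fin n → ℝ}

lemma sum_mul_ip (M : Matrix (Fin a) (Fin b) ℝ) (f : Fin n → Matrix (Fin a) (Fin b) ℝ) :
    ∑ i, π i * ip M (f i) = ip M (∑ i, π i • f i) := by
  simp only [ip, Finset.mul_sum, Matrix.sum_apply, Matrix.smul_apply, smul_eq_mul]
  rw [Finset.sum_comm]
  refine Finset.sum_congr rfl fun x _ => ?_
  rw [Finset.sum_comm]
  exact Finset.sum_congr rfl fun y _ => Finset.sum_congr rfl fun _ _ => by ring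

lemma ip_zero (M : Matrix (Fin a) (Fin b) ℝ) : ip M 0 = 0 := by simp [ip]

/-- Centred increments are orthogonal in mean to whatever came before. -/
lemma sum_nsq_add (h1 : ∑ i, π i = 1) (M : Matrix (Fin a) (Fin b) ℝ)
    {f : Fin n → Matrix (Fin a) (Fin b) ℝ} (h0 : ∑ i, π i • f i = 0) :
    ∑ i, π i * nsq (M + f i) = nsq M + ∑ i, π i * nsq (f i) := by
  have h : ∀ i, π i * nsq (M + f i) = π i * nsq M + 2 * (π i * ip M (f i)) + π i * nsq (f i) :=
    fun i => by rw [nsq_add]; ring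
  simp only [h, Finset.sum_add_distrib, ← Finset.mul_sum, ← Finset.sum_mul, sum_mul_ip, h1, h0,
    ip_zero]
  ring

lemma sum_nsq_center (h1 : ∑ i, π i = 1) (f : Fin n → Matrix (Fin a) (Fin b) ℝ) :
    ∑ i, π i * nsq (f i - ∑ j, π j • f j) = ∑ i, π i * nsq (f i) - nsq (∑ j, π j • f j) := by
  have h0 : ∑ i, π i • (f i - ∑ j, π j • f j) = 0 := by
    simp [smul_sub, ← Finset.sum_smul, h1]
  have := sum_nsq_add h1 (∑ j, π j • f j) h0
  simp only [add_sub_cancel] at this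
  linarith

lemma sum_snoc {M : Type*} [AddCommMonoid M] {k : ℕ} (f : Fin n → M) (ω : Fin k → Fin n)
    (i : Fin n) :
    ∑ s, f ((Fin.snoc ω i : Fin (k + 1) → Fin n) s) = ∑ s, f (ω s) + f i := by
  simp [Fin.sum_univ_castSucc]

lemma Ex_nsq_add_sum (h1 : ∑ i, π i = 1) (K : Matrix (Fin a) (Fin b) ℝ)
    {f : Fin n → Matrix (Fin a) (Fin b) ℝ} (h0 : ∑ i, π i • f i = 0) (k : ℕ) :
    Ex π k (fun ω => nsq (K + ∑ s, f (ω s))) = nsq K + k * ∑ i, π i * nsq (f i) := by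
  induction k with
  | zero => simp [Ex_zero]
  | succ k ih =>
    rw [Ex_succ]
    simp only [sum_snoc, ← add_assoc, sum_nsq_add h1 _ h0]
    rw [Ex_add, ih, Ex_const h1]; push_cast; ring

lemma Ex_nsq_sum (h1 : ∑ i, π i = 1)
    {f : Fin n → Matrix (Fin a) (Fin b) ℝ} (h0 : ∑ i, π i • f i = 0) (k : ℕ) :
    Ex π k (fun ω => nsq (∑ s, f (ω s))) = k * ∑ i, π i * nsq (f i) := by
  simpa [nsq_zero] using Ex_nsq_add_sum h1 0 h0 k

/-- Second moment of an i.i.d. sum without centring. -/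
lemma Ex_nsq_sum_le (h1 : ∑ i, π i = 1) (f : Fin n → Matrix (Fin a) (Fin b) ℝ) (k : ℕ) :
    Ex π k (fun ω => nsq (∑ s, f (ω s))) ≤
      k * ∑ i, π i * nsq (f i) + nsq ((k : ℝ) • ∑ i, π i • f i) := by
  have h0 : ∑ i, π i • (f i - ∑ j, π j • f j) = 0 := by
    simp [smul_sub, ← Finset.sum_smul, h1]
  have := Ex_nsq_add_sum h1 ((k : ℝ) • ∑ i, π i • f i) h0 k
  simp only [Finset.sum_sub_distrib, Finset.sum_const, Finset.card_univ, Fintype.card_fin,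
    Nat.cast_smul_eq_nsmul, add_sub_cancel] at this
  rw [this, sum_nsq_center h1, Nat.cast_smul_eq_nsmul]
  nlinarith [mul_nonneg (Nat.cast_nonneg (α := ℝ) k) (nsq_nonneg (∑ i, π i • f i))]

/-- The off-diagonal part `∑_{s ≠ t} f(ω_s) g(ω_t)` of a product of two centred i.i.d. sums is a
martingale in the number of draws, which bounds its second moment. -/
lemma Ex_nsq_offdiag_le (hπ : ∀ i, 0 ≤ π i) (h1 : ∑ i, π i = 1)
    {f : Fin n → Matrix (Fin a) (Fin b) ℝ} {g : Fin n → Matrix (Fin b) (Fin c) ℝ}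
    (hf0 : ∑ i, π i • f i = 0) (hg0 : ∑ i, π i • g i = 0) {A B : ℝ} (hA : 0 ≤ A)
    (hf : ∀ M : Matrix (Fin b) (Fin c) ℝ, ∑ i, π i * nsq (f i * M) ≤ A * nsq M)
    (hg : ∑ i, π i * nsq (g i) ≤ B) (k : ℕ) :
    Ex π k (fun ω => nsq ((∑ s, f (ω s)) * (∑ s, g (ω s)) - ∑ s, f (ω s) * g (ω s))) ≤
      2 * k ^ 2 * A * B := by
  have hB : 0 ≤ B := (Finset.sum_nonneg fun i _ => mul_nonneg (hπ i) (nsq_nonneg _)).trans hg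
  induction k with
  | zero => simp [Ex_zero, nsq_zero]
  | succ k ih =>
    rw [Ex_succ]
    have hstep : ∀ ω : Fin k → Fin n,
        ∑ i, π i * nsq ((∑ s, f ((Fin.snoc ω i : Fin (k + 1) → Fin n) s)) *
            (∑ s, g ((Fin.snoc ω i : Fin (k + 1) → Fin n) s)) -
            ∑ s, f ((Fin.snoc ω i : Fin (k + 1) → Fin n) s) *
              g ((Fin.snoc ω i : Fin (k + 1) → Fin n) s)) ≤
          nsq ((∑ s, f (ω s)) * (∑ s, g (ω s)) - ∑ s, f (ω s) * g (ω s)) +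
          (∑ i, 2 * (π i * nsq ((∑ s, f (ω s)) * g i)) + 2 * A * nsq (∑ s, g (ω s))) := by
      intro ω
      set F := ∑ s, f (ω s)
      set G := ∑ s, g (ω s)
      have e : ∀ i, (∑ s, f ((Fin.snoc ω i : Fin (k + 1) → Fin n) s)) *
            (∑ s, g ((Fin.snoc ω i : Fin (k + 1) → Fin n) s)) -
            ∑ s, f ((Fin.snoc ω i : Fin (k + 1) → Fin n) s) *
              g ((Fin.snoc ω i : Fin (k + 1) → Fin n) s) =
          (F * G - ∑ s, f (ω s) * g (ω s)) + (F * g i + f i * G) := by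
        intro i
        rw [sum_snoc, sum_snoc, sum_snoc (fun j => f j * g j)]
        simp only [Matrix.add_mul, Matrix.mul_add]
        abel
      have h0 : ∑ i, π i • (F * g i + f i * G) = 0 := by
        have e1 : ∑ i, π i • (F * g i) = 0 := by
          simp only [← Matrix.mul_smul, ← Matrix.mul_sum, hg0, Matrix.mul_zero]
        have e2 : ∑ i, π i • (f i * G) = 0 := by
          simp only [← Matrix.smul_mul, ← Matrix.sum_mul, hf0, Matrix.zero_mul]
        simp only [smul_add, Finset.sum_add_distrib, e1, e2, add_zero]
      simp only [e]
      rw [sum_nsq_add h1 _ h0]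
      gcongr
      calc ∑ i, π i * nsq (F * g i + f i * G)
          ≤ ∑ i, (2 * (π i * nsq (F * g i)) + 2 * (π i * nsq (f i * G))) :=
            Finset.sum_le_sum fun i _ => by nlinarith [nsq_add_le (F * g i) (f i * G), hπ i]
        _ ≤ _ := by
            rw [Finset.sum_add_distrib, ← Finset.mul_sum _ _ (2 : ℝ), ← Finset.mul_sum _ _ (2 : ℝ)]
            linarith [hf G]
    refine (Ex_mono hπ hstep).trans ?_
    rw [Ex_add, Ex_add, Ex_sum, Ex_const_mul, Ex_nsq_sum h1 hg0]
    have h2 : ∀ i, Ex π k (fun ω => 2 * (π i * nsq ((∑ s, f (ω s)) * g i))) ≤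
        2 * k * A * (π i * nsq (g i)) := by
      intro i
      rw [Ex_const_mul, Ex_const_mul]
      have h0 : ∑ j, π j • (f j * g i) = 0 := by
        simp only [← Matrix.smul_mul, ← Matrix.sum_mul, hf0, Matrix.zero_mul]
      have := Ex_nsq_sum h1 h0 k
      simp only [← Matrix.sum_mul] at this
      rw [this]
      have h3 := mul_le_mul_of_nonneg_left (hf (g i))
        (mul_nonneg (hπ i) (Nat.cast_nonneg (α := ℝ) k))
      nlinarith
    have h3 := Finset.sum_le_sum fun i (_ : i ∈ Finset.univ) => h2 i
    rw [← Finset.mul_sum] at h3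
    have hk : (0 : ℝ) ≤ k := Nat.cast_nonneg k
    have h4 : 2 * k * A * ∑ i, π i * nsq (g i) ≤ 2 * k * A * B := by gcongr
    have h5 : 2 * A * (k * ∑ i, π i * nsq (g i)) ≤ 2 * k * A * B := by
      calc _ = 2 * k * A * ∑ i, π i * nsq (g i) := by ring
        _ ≤ _ := h4
    push_cast
    nlinarith [mul_nonneg hA hB]

/-- Rosenthal-type fourth moment bound for a centred i.i.d. sum. -/
lemma Ex_nsq_sq_le (hπ : ∀ i, 0 ≤ π i) (h1 : ∑ i, π i = 1)
    {f : Fin n → Matrix (Fin a) (Fin b) ℝ} (h0 : ∑ i, π i • f i = 0) (k : ℕ) :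
    Ex π k (fun ω => nsq (∑ s, f (ω s)) ^ 2) ≤
      4 * (k * ∑ i, π i * nsq (f i)) ^ 2 + 3 * (k * ∑ i, π i * nsq (f i) ^ 2) := by
  set V := ∑ i, π i * nsq (f i) with hV
  set Q := ∑ i, π i * nsq (f i) ^ 2 with hQ
  induction k with
  | zero => simp [Ex_zero, nsq_zero]
  | succ k ih =>
    rw [Ex_succ]
    have hstep : ∀ ω : Fin k → Fin n,
        ∑ i, π i * nsq (∑ s, f ((Fin.snoc ω i : Fin (k + 1) → Fin n) s)) ^ 2 ≤
          nsq (∑ s, f (ω s)) ^ 2 + (8 * V * nsq (∑ s, f (ω s)) + 3 * Q) := by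
      intro ω
      set F := ∑ s, f (ω s)
      have e : ∀ i, π i * nsq (F + f i) ^ 2 ≤ π i * nsq F ^ 2 + 4 * nsq F * (π i * ip F (f i)) +
          8 * nsq F * (π i * nsq (f i)) + 3 * (π i * nsq (f i) ^ 2) := by
        intro i
        have : nsq (F + f i) ^ 2 ≤ nsq F ^ 2 + 4 * nsq F * ip F (f i) +
            8 * nsq F * nsq (f i) + 3 * nsq (f i) ^ 2 := by
          rw [nsq_add]
          nlinarith [ip_sq_le F (f i), sq_nonneg (ip F (f i) - nsq (f i))]
        nlinarith [mul_le_mul_of_nonneg_left this (hπ i)]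
      simp only [sum_snoc]
      refine (Finset.sum_le_sum fun i _ => e i).trans (le_of_eq ?_)
      simp only [Finset.sum_add_distrib, ← Finset.mul_sum, ← Finset.sum_mul, sum_mul_ip, h0,
        ip_zero, h1, ← hV, ← hQ]
      ring
    refine (Ex_mono hπ hstep).trans ?_
    rw [Ex_add, Ex_add, Ex_const_mul, Ex_nsq_sum h1 h0, Ex_const h1, ← hV]
    push_cast
    nlinarith [sq_nonneg V]

end Moments

/-! ### A lower-tail matrix Chernoff bound -/

section Chernoff
variable {p : ℕ}

/-- Spectral decomposition of all powers of a positive semidefinite matrix at once. -/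
lemma exists_spectral {R : Matrix (Fin p) (Fin p) ℝ} (hR : R.PosSemidef) :
    ∃ (r : Fin p → ℝ) (V : Matrix (Fin p) (Fin p) ℝ), (∀ i, 0 ≤ r i) ∧ Vᵀ * V = 1 ∧
      ∀ k : ℕ, R ^ k = V * Matrix.diagonal (fun i => r i ^ k) * Vᵀ := by
  have hH := hR.1
  let V : Matrix (Fin p) (Fin p) ℝ := hH.eigenvectorUnitary
  have hV : Vᵀ * V = 1 := by
    have := Unitary.coe_star_mul_self hH.eigenvectorUnitary
    rwa [Matrix.star_eq_conjTranspose, Matrix.conjTranspose_eq_transpose_of_trivial] at this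
  have hV' : V * Vᵀ = 1 := mul_eq_one_comm.1 hV
  refine ⟨hH.eigenvalues, V, hR.eigenvalues_nonneg, hV, fun k => ?_⟩
  have h1 : R = V * Matrix.diagonal hH.eigenvalues * Vᵀ := by
    have := hH.spectral_theorem
    rw [Unitary.conjStarAlgAut_apply] at this
    simpa [Matrix.star_eq_conjTranspose, Matrix.conjTranspose_eq_transpose_of_trivial,
      Function.comp_def] using this
  clear_value V
  generalize hH.eigenvalues = d at h1 ⊢
  induction k with
  | zero => simp [hV']
  | succ k ih =>
    rw [pow_succ, ih]
    nth_rewrite 1 [h1]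
    rw [Matrix.mul_assoc (V * _), ← Matrix.mul_assoc Vᵀ, ← Matrix.mul_assoc Vᵀ, hV, Matrix.one_mul,
      Matrix.mul_assoc V, ← Matrix.mul_assoc (Matrix.diagonal _) (Matrix.diagonal _),
      Matrix.diagonal_mul_diagonal, ← Matrix.mul_assoc]
    simp [pow_succ]

lemma dot_conj_diagonal (V : Matrix (Fin p) (Fin p) ℝ) (d : Fin p → ℝ) (x : Fin p → ℝ) :
    x ⬝ᵥ ((V * Matrix.diagonal d * Vᵀ) *ᵥ x) = ∑ i, d i * (Vᵀ *ᵥ x) i ^ 2 := by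
  rw [← Matrix.mulVec_mulVec, ← Matrix.mulVec_mulVec, Matrix.dotProduct_mulVec,
    ← Matrix.mulVec_transpose]
  simp only [dotProduct, Matrix.mulVec_diagonal]
  exact Finset.sum_congr rfl fun _ _ => by ring

lemma trace_conj_diagonal {V : Matrix (Fin p) (Fin p) ℝ} (hV : Vᵀ * V = 1) (d : Fin p → ℝ) :
    (V * Matrix.diagonal d * Vᵀ).trace = ∑ i, d i := by
  rw [Matrix.mul_assoc, Matrix.trace_mul_comm, Matrix.mul_assoc, hV, Matrix.mul_one,
    Matrix.trace_diagonal]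

/-- Chebyshev's inequality for the moment sequence of a measure on `[0, ∞)`. -/
lemma moment_chebyshev {ι : Type*} [Fintype ι] {c r : ι → ℝ} (hc : ∀ i, 0 ≤ c i)
    (hr : ∀ i, 0 ≤ r i) (j k : ℕ) :
    (∑ i, c i * r i ^ j) * (∑ i, c i * r i ^ k) ≤ (∑ i, c i) * ∑ i, c i * r i ^ (j + k) := by
  have h : 0 ≤ ∑ i, ∑ l, c i * c l * ((r i ^ j - r l ^ j) * (r i ^ k - r l ^ k)) := by
    refine Finset.sum_nonneg fun i _ => Finset.sum_nonneg fun l _ => mul_nonneg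
      (mul_nonneg (hc i) (hc l)) ?_
    rcases le_total (r i) (r l) with h | h
    · exact mul_nonneg_of_nonpos_of_nonpos (sub_nonpos.2 (pow_le_pow_left₀ (hr i) h j))
        (sub_nonpos.2 (pow_le_pow_left₀ (hr i) h k))
    · exact mul_nonneg (sub_nonneg.2 (pow_le_pow_left₀ (hr l) h j))
        (sub_nonneg.2 (pow_le_pow_left₀ (hr l) h k))
  have e : ∑ i, ∑ l, c i * c l * ((r i ^ j - r l ^ j) * (r i ^ k - r l ^ k)) =
      2 * ((∑ i, c i) * ∑ i, c i * r i ^ (j + k)) -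
        2 * ((∑ i, c i * r i ^ j) * (∑ i, c i * r i ^ k)) := by
    have e0 : ∀ i l, c i * c l * ((r i ^ j - r l ^ j) * (r i ^ k - r l ^ k)) =
        (c l * (c i * r i ^ (j + k)) + c i * (c l * r l ^ (j + k))) -
        ((c i * r i ^ j) * (c l * r l ^ k) + (c l * r l ^ j) * (c i * r i ^ k)) := by
      intro i l; rw [pow_add, pow_add]; ring
    simp only [e0, Finset.sum_add_distrib, Finset.sum_sub_distrib, ← Finset.mul_sum,
      ← Finset.sum_mul]
    ring
  linarith

/-- If the renewal equation `a_n = b_n + ∑_{j ≤ n} b_j a_{n-j}` holds for a sequence `b ≥ 0` with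
`b_0 < 1` and `b_j b_k ≤ b_0 b_{j+k}`, then `a_n` exceeds `b_n` by at most the geometric factor
`(1 - b_0)^{-(n+1)}`. -/
lemma renewal_le {a b : ℕ → ℝ} (hb : ∀ n, 0 ≤ b n) (hb0 : b 0 < 1)
    (hcheb : ∀ j k, b j * b k ≤ b 0 * b (j + k))
    (hab : ∀ n, a n = b n + ∑ i ∈ Finset.range (n + 1), b i * a (n - i)) (n : ℕ) :
    (1 - b 0) ^ (n + 1) * a n ≤ b n := by
  induction n using Nat.strong_induction_on with
  | _ n ih =>
    have ht : 0 < 1 - b 0 := by linarith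
    have h1 : (1 - b 0) * a n = b n + ∑ i ∈ Finset.range n, b (i + 1) * a (n - (i + 1)) := by
      have := hab n
      rw [Finset.sum_range_succ'] at this
      simp only [Nat.sub_zero] at this
      linarith
    have h2 : ∀ i ∈ Finset.range n, (1 - b 0) ^ n * (b (i + 1) * a (n - (i + 1))) ≤
        b n * (b 0 * (1 - b 0) ^ i) := by
      intro i hi
      have hi' : i < n := Finset.mem_range.1 hi
      have h3 := ih (n - (i + 1)) (by omega)
      have e1 : n - (i + 1) + 1 = n - i := by omega
      have e2 : i + 1 + (n - (i + 1)) = n := by omega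
      have e3 : (1 - b 0) ^ n = (1 - b 0) ^ i * (1 - b 0) ^ (n - i) := by
        rw [← pow_add]; congr 1; omega
      rw [e1] at h3
      have h4 := hcheb (i + 1) (n - (i + 1))
      rw [e2] at h4
      calc (1 - b 0) ^ n * (b (i + 1) * a (n - (i + 1)))
          = (1 - b 0) ^ i * (b (i + 1) * ((1 - b 0) ^ (n - i) * a (n - (i + 1)))) := by
            rw [e3]; ring
        _ ≤ (1 - b 0) ^ i * (b (i + 1) * b (n - (i + 1))) := by
            have := hb (i + 1); gcongr
        _ ≤ (1 - b 0) ^ i * (b 0 * b n) := by gcongr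
        _ = _ := by ring
    have h5 := Finset.sum_le_sum h2
    rw [← Finset.mul_sum, ← Finset.mul_sum, ← Finset.mul_sum] at h5
    have h6 : b 0 * ∑ i ∈ Finset.range n, (1 - b 0) ^ i = 1 - (1 - b 0) ^ n := by
      have := mul_neg_geom_sum (1 - b 0) n
      rw [← this]; ring
    rw [h6] at h5
    calc (1 - b 0) ^ (n + 1) * a n = (1 - b 0) ^ n * ((1 - b 0) * a n) := by ring
      _ = (1 - b 0) ^ n * b n +
          (1 - b 0) ^ n * ∑ i ∈ Finset.range n, b (i + 1) * a (n - (i + 1)) := by rw [h1]; ring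
      _ ≤ b n := by linarith

/-- One step of the barrier argument: a rank-one update `B + v vᵀ` lowers `tr B^{-N}` by almost
its first-order amount `N vᵀ B^{-(N+1)} v`, provided `N ‖v‖²` is small and `B + v vᵀ ⪰ 1`. -/
lemma trace_inv_pow_update {B C : Matrix (Fin p) (Fin p) ℝ} {v : Fin p → ℝ} (hB : B.PosDef)
    (hC : C.PosDef) (hBC : C = B + Matrix.vecMulVec v v) (hC1 : ∀ x, x ⬝ᵥ x ≤ x ⬝ᵥ (C *ᵥ x))
    {N : ℕ} (hN : ((N : ℝ) + 1) * (v ⬝ᵥ v) ≤ 1 / 4) :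
    (C⁻¹ ^ N).trace ≤ (B⁻¹ ^ N).trace - 3 / 4 * N * (v ⬝ᵥ ((B⁻¹ ^ (N + 1)) *ᵥ v)) := by
  set R := B⁻¹ with hRdef
  set S := C⁻¹ with hSdef
  have hBu : IsUnit B.det := (Matrix.isUnit_iff_isUnit_det _).1 hB.isUnit
  have hCu : IsUnit C.det := (Matrix.isUnit_iff_isUnit_det _).1 hC.isUnit
  have hR : R.PosSemidef := hB.inv.posSemidef
  have hS : S.PosSemidef := hC.inv.posSemidef
  have hRS : R = S + S * Matrix.vecMulVec v v * R := by
    have e : Matrix.vecMulVec v v = C - B := by rw [hBC]; abel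
    rw [e, Matrix.mul_sub, Matrix.nonsing_inv_mul C hCu, Matrix.sub_mul, Matrix.one_mul,
      Matrix.mul_assoc, Matrix.mul_nonsing_inv B hBu, Matrix.mul_one]
    abel
  have hRS' : R = S + R * Matrix.vecMulVec v v * S := by
    have e : Matrix.vecMulVec v v = C - B := by rw [hBC]; abel
    rw [e, Matrix.mul_sub, Matrix.nonsing_inv_mul B hBu, Matrix.sub_mul, Matrix.one_mul,
      Matrix.mul_assoc, Matrix.mul_nonsing_inv C hCu, Matrix.mul_one]
    abel
  let a : ℕ → ℝ := fun k => v ⬝ᵥ ((R ^ k) *ᵥ v)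
  let b : ℕ → ℝ := fun k => v ⬝ᵥ ((S ^ k) *ᵥ v)
  have ha : ∀ k, 0 ≤ a k := fun k => by
    simpa using (hR.pow k).dotProduct_mulVec_nonneg v
  have hb : ∀ k, 0 ≤ b k := fun k => by
    simpa using (hS.pow k).dotProduct_mulVec_nonneg v
  -- Mixed moments `vᵀ S^j R^k v` interpolate between `a` and `b`.
  have hmix : ∀ k j, v ⬝ᵥ ((S ^ j * R ^ k) *ᵥ v) =
      b (j + k) + ∑ i ∈ Finset.range k, b (j + i + 1) * a (k - i) := by
    intro k
    induction k with
    | zero => intro j; simp [b]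
    | succ k ih =>
      intro j
      have e : S ^ j * R ^ (k + 1) =
          S ^ (j + 1) * R ^ k + S ^ (j + 1) * Matrix.vecMulVec v v * R ^ (k + 1) := by
        calc S ^ j * R ^ (k + 1) = S ^ j * ((S + S * Matrix.vecMulVec v v * R) * R ^ k) := by
              rw [← hRS, pow_succ']
          _ = _ := by
              rw [Matrix.add_mul, Matrix.mul_add, pow_succ S, pow_succ' R]
              simp only [Matrix.mul_assoc]
      have e2 : v ⬝ᵥ ((S ^ (j + 1) * Matrix.vecMulVec v v * R ^ (k + 1)) *ᵥ v) =
          b (j + 1) * a (k + 1) := by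
        rw [Matrix.mul_vecMulVec, Matrix.vecMulVec_mul, Matrix.vecMulVec_mulVec,
          ← Matrix.dotProduct_mulVec]
        simp only [op_smul_eq_smul, dotProduct_smul, smul_eq_mul, a, b]
        ring
      rw [e, Matrix.add_mulVec, dotProduct_add, ih (j + 1), e2, Finset.sum_range_succ']
      have e3 : ∀ i, j + 1 + i + 1 = j + (i + 1) + 1 := fun i => by omega
      have e4 : j + 1 + k = j + (k + 1) := by omega
      simp only [e3, e4, Nat.add_sub_add_right, Nat.sub_zero, add_zero]
      ring
  have hmix_ge : ∀ k j, b (j + k) ≤ v ⬝ᵥ ((S ^ j * R ^ k) *ᵥ v) := by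
    intro k j
    rw [hmix]
    linarith [Finset.sum_nonneg fun i (_ : i ∈ Finset.range k) =>
      mul_nonneg (hb (j + i + 1)) (ha (k - i))]
  have htr : ∀ k j, (S ^ (j + k)).trace + k * b (j + k + 1) ≤ (S ^ j * R ^ k).trace := by
    intro k
    induction k with
    | zero => intro j; simp
    | succ k ih =>
      intro j
      have e : (S ^ j * R ^ (k + 1)).trace =
          (S ^ (j + 1) * R ^ k).trace + v ⬝ᵥ ((S ^ (j + 1) * R ^ (k + 1)) *ᵥ v) := by
        have e1 : S ^ j * R ^ (k + 1) =
            S ^ j * R ^ k * S + S ^ j * R ^ (k + 1) * Matrix.vecMulVec v v * S := by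
          calc S ^ j * R ^ (k + 1) = S ^ j * (R ^ k * (S + R * Matrix.vecMulVec v v * S)) := by
                rw [← hRS', pow_succ]
            _ = _ := by
                rw [Matrix.mul_add, Matrix.mul_add, pow_succ R]
                simp only [Matrix.mul_assoc]
        rw [e1, Matrix.trace_add, Matrix.trace_mul_comm, Matrix.trace_mul_comm _ S,
          Matrix.mul_vecMulVec, Matrix.mul_vecMulVec, Matrix.trace_vecMulVec, dotProduct_comm,
          Matrix.mulVec_mulVec, ← Matrix.mul_assoc, ← Matrix.mul_assoc, ← pow_succ']
      have h1 := ih (j + 1)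
      have h2 := hmix_ge (k + 1) (j + 1)
      rw [e]
      have e4 : j + 1 + k = j + (k + 1) := by omega
      have e5 : j + 1 + (k + 1) = j + (k + 1) + 1 := by omega
      rw [e4] at h1; rw [e5] at h2
      push_cast
      linarith
  -- `vᵀ C⁻¹ v ≤ ‖v‖²` because `C ⪰ 1`.
  have hb1 : b 1 ≤ v ⬝ᵥ v := by
    have hCz : C *ᵥ (S *ᵥ v) = v := by
      rw [Matrix.mulVec_mulVec, Matrix.mul_nonsing_inv C hCu, Matrix.one_mulVec]
    have h1 := hC1 (S *ᵥ v)
    rw [hCz, dotProduct_comm] at h1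
    have h2 := dot_sq_le v (S *ᵥ v)
    have e : b 1 = v ⬝ᵥ (S *ᵥ v) := by simp [b]
    rw [dotProduct_comm (S *ᵥ v) v] at h1
    rw [← e] at h1 h2
    have h3 := dot_self_nonneg v
    have h4 := hb 1
    rcases h4.eq_or_lt with h | h
    · rw [← h]; exact h3
    · have h5 : b 1 ^ 2 ≤ (v ⬝ᵥ v) * b 1 := h2.trans (by
        refine mul_le_mul_of_nonneg_left ?_ h3
        linarith [h1, dotProduct_comm (S *ᵥ v) (S *ᵥ v)])
      nlinarith
  have hN0 : (0 : ℝ) ≤ N := Nat.cast_nonneg N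
  have hv0 := dot_self_nonneg v
  have hb14 : (N + 1) * b 1 ≤ 1 / 4 := le_trans (by gcongr) hN
  have hb1lt : b 1 < 1 := by nlinarith [hb 1]
  have hcheb : ∀ j k, b (j + 1) * b (k + 1) ≤ b (0 + 1) * b (j + k + 1) := by
    obtain ⟨r, V, hr, -, hV⟩ := exists_spectral hS
    have e : ∀ k, b (k + 1) = ∑ i, (r i * (Vᵀ *ᵥ v) i ^ 2) * r i ^ k := by
      intro k
      simp only [b, hV, dot_conj_diagonal]
      exact Finset.sum_congr rfl fun _ _ => by ring
    intro j k
    rw [e, e, e, e]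
    simpa using moment_chebyshev (fun i => mul_nonneg (hr i) (sq_nonneg _)) hr j k
  have hren := renewal_le (a := fun k => a (k + 1)) (b := fun k => b (k + 1)) (fun k => hb _)
    (by simpa using hb1lt) hcheb (fun n => by
      have := hmix (n + 1) 0
      simp only [pow_zero, Matrix.one_mul, zero_add] at this
      refine this.trans ?_
      congr 1
      refine Finset.sum_congr rfl fun i hi => ?_
      have : i ≤ n := by have := Finset.mem_range.1 hi; omega
      rw [Nat.sub_add_comm this]) N
  have hbern : 3 / 4 ≤ (1 - b 1) ^ (N + 1) := by
    have := one_add_mul_le_pow (a := -b 1) (by linarith) (N + 1)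
    push_cast at this
    rw [← sub_eq_add_neg] at this
    linarith
  have hfin : 3 / 4 * a (N + 1) ≤ b (N + 1) := by
    simp only [zero_add] at hren
    exact le_trans (mul_le_mul_of_nonneg_right hbern (ha _)) hren
  have h := htr N 0
  simp only [pow_zero, Matrix.one_mul, zero_add] at h
  have : 3 / 4 * N * a (N + 1) ≤ N * b (N + 1) := by nlinarith
  change (S ^ N).trace ≤ (R ^ N).trace - 3 / 4 * N * a (N + 1)
  linarith

lemma posSemidef_vecMulVec_self (v : Fin p → ℝ) : (Matrix.vecMulVec v v).PosSemidef := by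
  simpa using Matrix.posSemidef_vecMulVec_self_star v

lemma dot_posDef_ge {A : Matrix (Fin p) (Fin p) ℝ} (hA : A.PosSemidef) (x : Fin p → ℝ) :
    x ⬝ᵥ x ≤ x ⬝ᵥ ((1 + A) *ᵥ x) := by
  have := hA.dotProduct_mulVec_nonneg x
  simp only [star_trivial] at this
  rw [Matrix.add_mulVec, Matrix.one_mulVec, dotProduct_add]
  linarith

lemma nat_tangent {N : ℕ} {r h : ℝ} (hr : 0 ≤ r) (hh : 0 ≤ h) :
    (N + 1) * h * r ^ N ≤ N * r ^ (N + 1) + h ^ (N + 1) := by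
  rcases hr.eq_or_lt with rfl | hr
  · rcases N with _ | N
    · simp
    · simp; positivity
  · have h1 := one_add_mul_le_pow (a := h / r - 1) (by have := div_nonneg hh hr.le; linarith) (N + 1)
    rw [add_sub_cancel, div_pow, le_div_iff₀ (by positivity)] at h1
    push_cast at h1
    have e : (1 + ((N : ℝ) + 1) * (h / r - 1)) * r ^ (N + 1) =
        (N + 1) * h * r ^ N - N * r ^ (N + 1) := by
      field_simp; ring
    linarith

variable {n : ℕ} {π : Fin n → ℝ}

/-- Expected decay of the barrier `tr (1 + A)^{-N}` along i.i.d. rank-one updates of `A`. -/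
lemma Ex_trace_inv_pow_le (hπ : ∀ i, 0 ≤ π i) (h1 : ∑ i, π i = 1) (v : Fin n → Fin p → ℝ)
    {N : ℕ} {μ : ℝ} (hμ : 0 ≤ μ) (hμN : (N + 1) * μ ≤ 1)
    (hN : ∀ i, ((N : ℝ) + 1) * (v i ⬝ᵥ v i) ≤ 1 / 4)
    (hv : ∀ R : Matrix (Fin p) (Fin p) ℝ, R.PosSemidef →
      μ * R.trace ≤ ∑ i, π i * (v i ⬝ᵥ (R *ᵥ v i))) (k : ℕ) :
    Ex π k (fun ω => (((1 + ∑ s, Matrix.vecMulVec (v (ω s)) (v (ω s)))⁻¹) ^ N).trace) ≤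
      p * (1 / (1 + 3 / 4 * μ * k)) ^ N := by
  induction k with
  | zero => simp [Ex_zero]
  | succ k ih =>
    set h : ℝ := 1 / (1 + 3 / 4 * μ * k) with hh
    have hk : (0 : ℝ) ≤ k := Nat.cast_nonneg k
    have hden : 1 ≤ 1 + 3 / 4 * μ * k := by
      have : 0 ≤ 3 / 4 * μ * k := by positivity
      linarith
    have hh0 : 0 < h := by positivity
    have hh1 : h ≤ 1 := by rw [hh, div_le_one (by linarith)]; exact hden
    have hN0 : (0 : ℝ) ≤ N := Nat.cast_nonneg N
    rw [Ex_succ]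
    have hstep : ∀ ω : Fin k → Fin n,
        ∑ i, π i * (((1 + ∑ s, Matrix.vecMulVec (v ((Fin.snoc ω i : Fin (k + 1) → Fin n) s))
          (v ((Fin.snoc ω i : Fin (k + 1) → Fin n) s)))⁻¹) ^ N).trace ≤
        (1 - 3 / 4 * μ * ((N + 1) * h)) *
          (((1 + ∑ s, Matrix.vecMulVec (v (ω s)) (v (ω s)))⁻¹) ^ N).trace +
          3 / 4 * μ * p * h ^ (N + 1) := by
      intro ω
      set A := ∑ s, Matrix.vecMulVec (v (ω s)) (v (ω s)) with hAdef
      have hA : A.PosSemidef := Matrix.posSemidef_sum _ fun s _ => posSemidef_vecMulVec_self _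
      have hB : (1 + A).PosDef := Matrix.PosDef.one.add_posSemidef hA
      have hR : ((1 + A)⁻¹).PosSemidef := hB.inv.posSemidef
      have e1 : ∀ i, (((1 + ∑ s, Matrix.vecMulVec (v ((Fin.snoc ω i : Fin (k + 1) → Fin n) s))
          (v ((Fin.snoc ω i : Fin (k + 1) → Fin n) s)))⁻¹) ^ N).trace ≤
          ((1 + A)⁻¹ ^ N).trace -
            3 / 4 * N * (v i ⬝ᵥ (((1 + A)⁻¹ ^ (N + 1)) *ᵥ v i)) := by
        intro i
        rw [sum_snoc (fun j => Matrix.vecMulVec (v j) (v j)), ← hAdef]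
        have hA' := hA.add (posSemidef_vecMulVec_self (v i))
        exact trace_inv_pow_update hB (Matrix.PosDef.one.add_posSemidef hA')
          (by rw [add_assoc]) (dot_posDef_ge hA') (hN i)
      have e2 : ∑ i, π i * (((1 + ∑ s, Matrix.vecMulVec
          (v ((Fin.snoc ω i : Fin (k + 1) → Fin n) s))
          (v ((Fin.snoc ω i : Fin (k + 1) → Fin n) s)))⁻¹) ^ N).trace ≤
          ((1 + A)⁻¹ ^ N).trace -
            3 / 4 * N * ∑ i, π i * (v i ⬝ᵥ (((1 + A)⁻¹ ^ (N + 1)) *ᵥ v i)) := by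
        refine (Finset.sum_le_sum fun i _ => mul_le_mul_of_nonneg_left (e1 i) (hπ i)).trans
          (le_of_eq ?_)
        simp only [mul_sub, Finset.sum_sub_distrib, ← Finset.sum_mul, h1, one_mul,
          Finset.mul_sum]
        congr 1
        exact Finset.sum_congr rfl fun _ _ => by ring
      have e3 := hv _ (hR.pow (N + 1))
      have e4 : (N + 1) * h * ((1 + A)⁻¹ ^ N).trace ≤
          N * ((1 + A)⁻¹ ^ (N + 1)).trace + p * h ^ (N + 1) := by
        obtain ⟨r, V, hr, hVV, hV⟩ := exists_spectral hR
        rw [hV, hV, trace_conj_diagonal hVV, trace_conj_diagonal hVV, Finset.mul_sum,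
          Finset.mul_sum]
        have : (p : ℝ) * h ^ (N + 1) = ∑ _i : Fin p, h ^ (N + 1) := by simp
        rw [this, ← Finset.sum_add_distrib]
        exact Finset.sum_le_sum fun i _ => nat_tangent (hr i) hh0.le
      refine e2.trans ?_
      have e5 : (N : ℝ) * (μ * ((1 + A)⁻¹ ^ (N + 1)).trace) ≤
          N * ∑ i, π i * (v i ⬝ᵥ (((1 + A)⁻¹ ^ (N + 1)) *ᵥ v i)) := by gcongr
      have e6 := mul_le_mul_of_nonneg_left e4 hμ
      nlinarith
    refine (Ex_mono hπ hstep).trans ?_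
    rw [Ex_add, Ex_const_mul, Ex_const h1]
    have hcoef : 0 ≤ 1 - 3 / 4 * μ * ((N + 1) * h) := by
      have : (N + 1) * μ * h ≤ 1 * 1 := by gcongr
      nlinarith [mul_nonneg (mul_nonneg (by positivity : (0 : ℝ) ≤ N + 1) hμ) hh0.le]
    have hx : 3 / 4 * μ * h ≤ 1 := by
      have : μ ≤ 1 := by nlinarith
      have : μ * h ≤ 1 * 1 := by gcongr
      linarith
    calc _ ≤ (1 - 3 / 4 * μ * ((N + 1) * h)) * (p * h ^ N) + 3 / 4 * μ * p * h ^ (N + 1) := by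
          gcongr
      _ = p * h ^ N * (1 - N * (3 / 4 * μ * h)) := by ring
      _ ≤ p * h ^ N * (1 / (1 + 3 / 4 * μ * h)) ^ N := by
          have hx0 : 0 ≤ 3 / 4 * μ * h := by positivity
          have h2 := one_add_mul_le_pow (a := -(3 / 4 * μ * h)) (by linarith) N
          have h3 : 1 + -(3 / 4 * μ * h) ≤ 1 / (1 + 3 / 4 * μ * h) := by
            rw [le_div_iff₀ (by positivity)]
            nlinarith
          have h4 := pow_le_pow_left₀ (by linarith) h3 N
          have : 0 ≤ p * h ^ N := by positivity
          refine mul_le_mul_of_nonneg_left ?_ this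
          linarith
      _ = p * (1 / (1 + 3 / 4 * μ * (k + 1 : ℕ))) ^ N := by
          rw [mul_assoc, ← mul_pow]
          congr 2
          rw [hh]
          have : 1 + 3 / 4 * μ * k ≠ 0 := by positivity
          push_cast
          field_simp
          ring

/-- If `A` has a direction with Rayleigh quotient below `1/2`, the barrier is large. -/
lemma trace_inv_pow_ge {A : Matrix (Fin p) (Fin p) ℝ} (hA : A.PosSemidef) (N : ℕ)
    (hbad : ¬ ∀ x, 1 / 2 * (x ⬝ᵥ x) ≤ x ⬝ᵥ (A *ᵥ x)) :
    (2 / 3 : ℝ) ^ N ≤ ((1 + A)⁻¹ ^ N).trace := by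
  have hB : (1 + A).PosDef := Matrix.PosDef.one.add_posSemidef hA
  have hBu : IsUnit (1 + A).det := (Matrix.isUnit_iff_isUnit_det _).1 hB.isUnit
  have hR : ((1 + A)⁻¹).PosSemidef := hB.inv.posSemidef
  obtain ⟨r, V, hr, hVV, hV⟩ := exists_spectral hR
  by_cases hex : ∃ i, 2 / 3 < r i
  · obtain ⟨i, hi⟩ := hex
    rw [hV, trace_conj_diagonal hVV]
    exact (pow_le_pow_left₀ (by norm_num) hi.le N).trans
      (Finset.single_le_sum (f := fun i => r i ^ N) (fun j _ => pow_nonneg (hr j) N)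
        (Finset.mem_univ i))
  · push Not at hex
    refine absurd (fun x => ?_) hbad
    set y := (1 + A) *ᵥ x with hy
    have hx : (1 + A)⁻¹ *ᵥ y = x := by
      rw [hy, Matrix.mulVec_mulVec, Matrix.nonsing_inv_mul _ hBu, Matrix.one_mulVec]
    have hsym : ((1 + A)⁻¹)ᵀ = (1 + A)⁻¹ := by
      have := hR.1
      rwa [Matrix.IsHermitian, Matrix.conjTranspose_eq_transpose_of_trivial] at this
    have e1 : x ⬝ᵥ y = ∑ i, r i * (Vᵀ *ᵥ y) i ^ 2 := by
      have := dot_conj_diagonal V (fun i => r i ^ 1) y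
      rw [← hV 1, pow_one, hx, dotProduct_comm] at this
      simpa using this
    have e2 : x ⬝ᵥ x = ∑ i, r i ^ 2 * (Vᵀ *ᵥ y) i ^ 2 := by
      have := dot_conj_diagonal V (fun i => r i ^ 2) y
      rw [← hV 2, pow_two, ← Matrix.mulVec_mulVec, hx, Matrix.dotProduct_mulVec,
        ← Matrix.mulVec_transpose, hsym, hx] at this
      exact this
    have e3 : x ⬝ᵥ x ≤ 2 / 3 * (x ⬝ᵥ y) := by
      rw [e1, e2, Finset.mul_sum]
      refine Finset.sum_le_sum fun i _ => ?_
      have := mul_le_mul_of_nonneg_right (hex i) (hr i)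
      nlinarith [sq_nonneg ((Vᵀ *ᵥ y) i)]
    have e4 : x ⬝ᵥ y = x ⬝ᵥ x + x ⬝ᵥ (A *ᵥ x) := by
      rw [hy, Matrix.add_mulVec, Matrix.one_mulVec, dotProduct_add]
    linarith

end Chernoff

/-! ### Moments of the sketched matrices for orthonormal columns -/

/-- Whitened sampling data: `U` has orthonormal columns, `γ` bounds all ratios
`ℓ_i / (m π_i)` of leverage scores `ℓ_i = ‖U_i‖²`, and `w_i = 1 / (m π_i - ℓ_i)` are the debiased
squared weights, characterized by `m π_i w_i = 1 + w_i ℓ_i`. -/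
structure WhiteData {n p : ℕ} (m : ℕ) (U : Matrix (Fin n) (Fin p) ℝ) (π w : Fin n → ℝ)
    (γ : ℝ) : Prop where
  orth : Uᵀ * U = 1
  pos : ∀ i, 0 < π i
  sum_one : ∑ i, π i = 1
  w_pos : ∀ i, 0 < w i
  w_eq : ∀ i, m * π i * w i = 1 + w i * (U i ⬝ᵥ U i)
  w_le : ∀ i, w i * (U i ⬝ᵥ U i) ≤ 2 * γ
  γ_le : γ ≤ 1 / 224
  one_le : 1 ≤ γ * m

/-- The complementary projection `1 - U Uᵀ`. -/
def perp {n p : ℕ} (U : Matrix (Fin n) (Fin p) ℝ) : Matrix (Fin n) (Fin n) ℝ := 1 - U * Uᵀ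

/-- Rank-one contribution of index `i` to the sketched Gram matrix. -/
def gramTerm {n p : ℕ} (U : Matrix (Fin n) (Fin p) ℝ) (w : Fin n → ℝ) (i : Fin n) :
    Matrix (Fin p) (Fin p) ℝ := w i • Matrix.vecMulVec (U i) (U i)

/-- Rank-one contribution of index `i` to `Uᵀ D (1 - U Uᵀ)`, where `D` is the diagonal matrix of
sampling weights. -/
def crossTerm {n p : ℕ} (U : Matrix (Fin n) (Fin p) ℝ) (w : Fin n → ℝ) (i : Fin n) :
    Matrix (Fin p) (Fin n) ℝ := w i • Matrix.vecMulVec (U i) (perp U i)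

lemma sum_smul_vecMulVec {n p b : ℕ} (U : Matrix (Fin n) (Fin p) ℝ) (Y : Matrix (Fin n) (Fin b) ℝ)
    (c : Fin n → ℝ) :
    ∑ i, c i • Matrix.vecMulVec (U i) (Y i) = Uᵀ * (Matrix.diagonal c * Y) := by
  ext x y
  simp only [Matrix.sum_apply, Matrix.smul_apply, Matrix.vecMulVec_apply, smul_eq_mul,
    Matrix.mul_apply, Matrix.transpose_apply]
  exact Finset.sum_congr rfl fun _ _ => by
    rw [← Matrix.mul_apply, Matrix.diagonal_mul]; ring

namespace WhiteData

variable {n p m b : ℕ} {U : Matrix (Fin n) (Fin p) ℝ} {π w : Fin n → ℝ} {γ : ℝ}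

lemma γ_pos (h : WhiteData m U π w γ) : 0 < γ := by
  have h1 := h.one_le
  by_contra hc
  push Not at hc
  nlinarith [Nat.cast_nonneg (α := ℝ) m]

lemma m_pos (h : WhiteData m U π w γ) : (0 : ℝ) < m := by
  have h1 := h.one_le
  rcases (Nat.cast_nonneg (α := ℝ) m).eq_or_lt with hm | hm
  · rw [← hm] at h1; linarith
  · exact hm

lemma one_le_m (h : WhiteData m U π w γ) : (1 : ℝ) ≤ m := by
  have := h.m_pos
  exact_mod_cast Nat.one_le_iff_ne_zero.2 (by rintro rfl; simp at this)

lemma inv_m_le (h : WhiteData m U π w γ) : (m : ℝ)⁻¹ ≤ γ := by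
  rw [inv_le_iff_one_le_mul₀ h.m_pos]; exact h.one_le

lemma lev_nonneg (h : WhiteData m U π w γ) (i : Fin n) : 0 ≤ w i * (U i ⬝ᵥ U i) :=
  mul_nonneg (h.w_pos i).le (dot_self_nonneg _)

lemma pi_w (h : WhiteData m U π w γ) (i : Fin n) :
    π i * w i = (m : ℝ)⁻¹ * (1 + w i * (U i ⬝ᵥ U i)) := by
  rw [← h.w_eq i]; have := h.m_pos; field_simp

lemma nsq_sandwich_le (h : WhiteData m U π w γ) {t : Fin n → ℝ} {r : ℝ} (ht : ∀ i, 0 ≤ t i)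
    (ht' : ∀ i, t i ≤ r) (M : Matrix (Fin n) (Fin b) ℝ) :
    nsq (Uᵀ * (Matrix.diagonal t * M)) ≤ r ^ 2 * nsq M :=
  (nsq_isometry_transpose_mul_le h.orth _).trans (nsq_diagonal_mul_le ht ht' M)

lemma nsq_sandwich_mul_le (h : WhiteData m U π w γ) {t : Fin n → ℝ} {r : ℝ} (ht : ∀ i, 0 ≤ t i)
    (ht' : ∀ i, t i ≤ r) (M : Matrix (Fin p) (Fin b) ℝ) :
    nsq (Uᵀ * (Matrix.diagonal t * U) * M) ≤ r ^ 2 * nsq M := by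
  rw [Matrix.mul_assoc, Matrix.mul_assoc, ← nsq_isometry_mul h.orth M]
  exact h.nsq_sandwich_le ht ht' _

lemma transpose_mul_perp (h : WhiteData m U π w γ) : Uᵀ * perp U = 0 := by
  rw [perp, Matrix.mul_sub, ← Matrix.mul_assoc, h.orth]; simp

/-- Debiasing makes `E[A]` equal to the identity up to the bias `Uᵀ diag(w_i ℓ_i) U`. -/
lemma mean_gram (h : WhiteData m U π w γ) :
    (m : ℝ) • ∑ i, π i • gramTerm U w i =
      1 + Uᵀ * (Matrix.diagonal (fun i => w i * (U i ⬝ᵥ U i)) * U) := by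
  have e : (m : ℝ) • ∑ i, π i • gramTerm U w i =
      ∑ i, (1 + w i * (U i ⬝ᵥ U i)) • Matrix.vecMulVec (U i) (U i) := by
    rw [Finset.smul_sum]
    refine Finset.sum_congr rfl fun i _ => ?_
    rw [gramTerm, smul_smul, smul_smul, ← h.w_eq]
  have e1 : ∑ i, Matrix.vecMulVec (U i) (U i) = 1 := by
    have := sum_smul_vecMulVec U U (fun _ => 1)
    simpa [h.orth] using this
  rw [e]
  simp only [add_smul, one_smul, Finset.sum_add_distrib, e1, sum_smul_vecMulVec]

lemma mean_cross (h : WhiteData m U π w γ) :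
    (m : ℝ) • ∑ i, π i • crossTerm U w i =
      Uᵀ * (Matrix.diagonal (fun i => w i * (U i ⬝ᵥ U i)) * perp U) := by
  have e : (m : ℝ) • ∑ i, π i • crossTerm U w i =
      ∑ i, (1 + w i * (U i ⬝ᵥ U i)) • Matrix.vecMulVec (U i) (perp U i) := by
    rw [Finset.smul_sum]
    refine Finset.sum_congr rfl fun i _ => ?_
    rw [crossTerm, smul_smul, smul_smul, ← h.w_eq]
  have e1 : ∑ i, Matrix.vecMulVec (U i) (perp U i) = 0 := by
    have := sum_smul_vecMulVec U (perp U) (fun _ => 1)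
    simpa [h.transpose_mul_perp] using this
  rw [e]
  simp only [add_smul, one_smul, Finset.sum_add_distrib, e1, sum_smul_vecMulVec, zero_add]

lemma nsq_bias_mul_le (h : WhiteData m U π w γ) (M : Matrix (Fin p) (Fin b) ℝ) :
    nsq (Uᵀ * (Matrix.diagonal (fun i => w i * (U i ⬝ᵥ U i)) * U) * M) ≤
      4 * γ ^ 2 * nsq M := by
  have := h.nsq_sandwich_mul_le h.lev_nonneg h.w_le M
  linarith [this, mul_pow 2 γ 2]

lemma nsq_mean_cross_le (h : WhiteData m U π w γ) :
    nsq ((m : ℝ) • ∑ i, π i • crossTerm U w i) ≤ 4 * γ ^ 2 * nsq (perp U) := by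
  rw [h.mean_cross]
  have := h.nsq_sandwich_le h.lev_nonneg h.w_le (perp U)
  linarith [this, mul_pow 2 γ 2]

lemma nsq_gramTerm_mul (M : Matrix (Fin p) (Fin b) ℝ) (i : Fin n) :
    nsq (gramTerm U w i * M) = w i * (w i * (U i ⬝ᵥ U i)) * ((U * M) i ⬝ᵥ (U * M) i) := by
  rw [gramTerm, Matrix.smul_mul, nsq_smul, Matrix.vecMulVec_mul, nsq_vecMulVec,
    Matrix.mul_apply_eq_vecMul]
  ring

lemma nsq_crossTerm (i : Fin n) :
    nsq (crossTerm U w i) = w i * (w i * (U i ⬝ᵥ U i)) * (perp U i ⬝ᵥ perp U i) := by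
  rw [crossTerm, nsq_smul, nsq_vecMulVec]; ring

lemma pi_w_lev_le (h : WhiteData m U π w γ) (i : Fin n) :
    π i * (w i * (w i * (U i ⬝ᵥ U i))) ≤ 4 * γ / m := by
  have h1 := h.lev_nonneg i
  have h2 := h.w_le i
  have h3 := h.γ_le
  have h4 := h.γ_pos
  calc π i * (w i * (w i * (U i ⬝ᵥ U i)))
      = (m : ℝ)⁻¹ * ((1 + w i * (U i ⬝ᵥ U i)) * (w i * (U i ⬝ᵥ U i))) := by
        rw [← mul_assoc, h.pi_w]; ring
    _ ≤ (m : ℝ)⁻¹ * (2 * (2 * γ)) := by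
        have := h.m_pos
        gcongr
        linarith
    _ = _ := by ring

lemma sum_nsq_gramTerm_mul_le (h : WhiteData m U π w γ) (M : Matrix (Fin p) (Fin b) ℝ) :
    ∑ i, π i * nsq (gramTerm U w i * M) ≤ 4 * γ / m * nsq M := by
  rw [← nsq_isometry_mul h.orth M, nsq_eq_sum_rows, Finset.mul_sum]
  refine Finset.sum_le_sum fun i _ => ?_
  rw [nsq_gramTerm_mul, ← mul_assoc]
  exact mul_le_mul_of_nonneg_right (h.pi_w_lev_le i) (dot_self_nonneg _)

lemma sum_nsq_crossTerm_le (h : WhiteData m U π w γ) :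
    ∑ i, π i * nsq (crossTerm U w i) ≤ 4 * γ / m * nsq (perp U) := by
  rw [nsq_eq_sum_rows, Finset.mul_sum]
  refine Finset.sum_le_sum fun i _ => ?_
  rw [nsq_crossTerm, ← mul_assoc]
  exact mul_le_mul_of_nonneg_right (h.pi_w_lev_le i) (dot_self_nonneg _)

lemma nsq_gramTerm_mul_le (h : WhiteData m U π w γ) (M : Matrix (Fin p) (Fin b) ℝ) (i : Fin n) :
    nsq (gramTerm U w i * M) ≤ 4 * γ ^ 2 * nsq M := by
  rw [nsq_gramTerm_mul, Matrix.mul_apply_eq_vecMul]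
  have h1 := vecMul_dot_le (U i) M
  have h2 := h.lev_nonneg i
  have hw := (h.w_pos i).le
  calc w i * (w i * (U i ⬝ᵥ U i)) * ((U i ᵥ* M) ⬝ᵥ (U i ᵥ* M))
      ≤ w i * (w i * (U i ⬝ᵥ U i)) * ((U i ⬝ᵥ U i) * nsq M) := by gcongr
    _ = (w i * (U i ⬝ᵥ U i)) ^ 2 * nsq M := by ring
    _ ≤ (2 * γ) ^ 2 * nsq M := by
        have := nsq_nonneg M
        have := h.w_le i
        gcongr
    _ = _ := by ring

lemma nsq_meanGram_mul_le (h : WhiteData m U π w γ) (M : Matrix (Fin p) (Fin b) ℝ) :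
    nsq ((∑ i, π i • gramTerm U w i) * M) ≤ 4 * γ ^ 2 * nsq M := by
  have e : ∑ i, π i • gramTerm U w i = Uᵀ * (Matrix.diagonal (fun i => π i * w i) * U) := by
    rw [← sum_smul_vecMulVec]
    exact Finset.sum_congr rfl fun i _ => by rw [gramTerm, smul_smul]
  rw [e]
  have := h.nsq_sandwich_mul_le (t := fun i => π i * w i) (r := 2 * γ)
    (fun i => mul_nonneg (h.pos i).le (h.w_pos i).le) (fun i => by
      rw [h.pi_w]
      have h1 := h.inv_m_le
      have h2 := h.w_le i
      have h3 := h.γ_le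
      have h4 := h.lev_nonneg i
      have h5 := h.γ_pos
      calc _ ≤ γ * 2 := by gcongr; linarith
        _ = _ := by ring) M
  linarith [this, mul_pow 2 γ 2]

/-- Centred version of `gramTerm`. -/
def cgram (U : Matrix (Fin n) (Fin p) ℝ) (π w : Fin n → ℝ) (i : Fin n) :
    Matrix (Fin p) (Fin p) ℝ := gramTerm U w i - ∑ j, π j • gramTerm U w j

/-- Centred version of `crossTerm`. -/
def ccross (U : Matrix (Fin n) (Fin p) ℝ) (π w : Fin n → ℝ) (i : Fin n) :
    Matrix (Fin p) (Fin n) ℝ := crossTerm U w i - ∑ j, π j • crossTerm U w j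

lemma cgram_mean (h : WhiteData m U π w γ) : ∑ i, π i • cgram U π w i = 0 := by
  simp [cgram, smul_sub, ← Finset.sum_smul, h.sum_one]

lemma ccross_mean (h : WhiteData m U π w γ) : ∑ i, π i • ccross U π w i = 0 := by
  simp [ccross, smul_sub, ← Finset.sum_smul, h.sum_one]

lemma sum_nsq_cgram_mul_le (h : WhiteData m U π w γ) (M : Matrix (Fin p) (Fin b) ℝ) :
    ∑ i, π i * nsq (cgram U π w i * M) ≤ 4 * γ / m * nsq M := by
  have := sum_nsq_center h.sum_one (fun i => gramTerm U w i * M)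
  simp only [← Matrix.smul_mul, ← Matrix.sum_mul, ← Matrix.sub_mul] at this
  have h2 := nsq_nonneg ((∑ i, π i • gramTerm U w i) * M)
  have h3 := h.sum_nsq_gramTerm_mul_le M
  simp only [cgram]
  linarith

lemma sum_nsq_ccross_le (h : WhiteData m U π w γ) :
    ∑ i, π i * nsq (ccross U π w i) ≤ 4 * γ / m * nsq (perp U) := by
  have := sum_nsq_center h.sum_one (crossTerm U w)
  have h2 := nsq_nonneg (∑ i, π i • crossTerm U w i)
  have h3 := h.sum_nsq_crossTerm_le
  simp only [ccross]
  linarith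

lemma nsq_cgram_mul_le (h : WhiteData m U π w γ) (M : Matrix (Fin p) (Fin b) ℝ) (i : Fin n) :
    nsq (cgram U π w i * M) ≤ 16 * γ ^ 2 * nsq M := by
  rw [cgram, Matrix.sub_mul]
  linarith [nsq_sub_le (gramTerm U w i * M) ((∑ j, π j • gramTerm U w j) * M),
    h.nsq_gramTerm_mul_le M i, h.nsq_meanGram_mul_le M]

/-- The mean of the diagonal products `a_i b_i` of centred terms. -/
lemma nsq_mean_diag_le (h : WhiteData m U π w γ) :
    nsq ((m : ℝ) • ∑ i, π i • (cgram U π w i * ccross U π w i)) ≤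
      33 * γ ^ 2 * nsq (perp U) := by
  have e : (m : ℝ) • ∑ i, π i • (cgram U π w i * ccross U π w i) =
      Uᵀ * (Matrix.diagonal (fun i => (1 + w i * (U i ⬝ᵥ U i)) * (w i * (U i ⬝ᵥ U i))) * perp U) -
      (∑ j, π j • gramTerm U w j) * ((m : ℝ) • ∑ i, π i • crossTerm U w i) := by
    have e1 : ∑ i, π i • (cgram U π w i * ccross U π w i) =
        ∑ i, π i • (cgram U π w i * crossTerm U w i) := by
      simp only [ccross, Matrix.mul_sub, smul_sub, Finset.sum_sub_distrib]
      rw [sub_eq_self]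
      simp only [← Matrix.smul_mul]
      rw [← Matrix.sum_mul, h.cgram_mean, Matrix.zero_mul]
    have e2 : ∑ i, π i • (cgram U π w i * crossTerm U w i) =
        ∑ i, π i • (gramTerm U w i * crossTerm U w i) -
          (∑ j, π j • gramTerm U w j) * ∑ i, π i • crossTerm U w i := by
      conv_lhs => simp only [cgram, Matrix.sub_mul, smul_sub, Finset.sum_sub_distrib]
      simp only [Matrix.mul_sum, Matrix.mul_smul]
    rw [e1, e2, smul_sub, ← Matrix.mul_smul, ← sum_smul_vecMulVec, Finset.smul_sum]
    congr 1
    refine Finset.sum_congr rfl fun i _ => ?_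
    rw [gramTerm, crossTerm, Matrix.smul_mul, Matrix.mul_smul, Matrix.vecMulVec_mul_vecMulVec,
      ← h.w_eq]
    ext x y
    simp only [Matrix.smul_apply, Matrix.vecMulVec_apply, smul_eq_mul, Pi.smul_apply]
    ring
  rw [e]
  refine (nsq_sub_le _ _).trans ?_
  have hγ := h.γ_pos
  have h1 := h.nsq_sandwich_le (r := 4 * γ)
    (t := fun i => (1 + w i * (U i ⬝ᵥ U i)) * (w i * (U i ⬝ᵥ U i)))
    (fun i => mul_nonneg (by linarith [h.lev_nonneg i]) (h.lev_nonneg i)) (fun i => by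
      have h2 := h.w_le i
      have h3 := h.γ_le
      have h4 := h.lev_nonneg i
      calc _ ≤ 2 * (2 * γ) := by gcongr; linarith
        _ = _ := by ring) (perp U)
  have h2 := h.nsq_meanGram_mul_le ((m : ℝ) • ∑ i, π i • crossTerm U w i)
  have h3 := h.nsq_mean_cross_le
  have hq := nsq_nonneg (perp U)
  have h4 : 4 * γ ^ 2 * nsq ((m : ℝ) • ∑ i, π i • crossTerm U w i) ≤
      4 * γ ^ 2 * (4 * γ ^ 2 * nsq (perp U)) := by gcongr
  have h5 : γ ^ 2 ≤ 1 / 32 := by nlinarith [h.γ_le]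
  have h6 : 32 * γ ^ 2 * (γ ^ 2 * nsq (perp U)) ≤ 1 * (γ ^ 2 * nsq (perp U)) := by
    have : 32 * γ ^ 2 ≤ 1 := by linarith
    gcongr
  nlinarith

/-- The sketched Gram matrix `A(ω)`. -/
def gramS (U : Matrix (Fin n) (Fin p) ℝ) (w : Fin n → ℝ) (ω : Fin m → Fin n) :
    Matrix (Fin p) (Fin p) ℝ := ∑ s, gramTerm U w (ω s)

/-- The sketched cross term `Z(ω) = Uᵀ D(ω) (1 - U Uᵀ)`. -/
def crossS (U : Matrix (Fin n) (Fin p) ℝ) (w : Fin n → ℝ) (ω : Fin m → Fin n) :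
    Matrix (Fin p) (Fin n) ℝ := ∑ s, crossTerm U w (ω s)

lemma crossS_eq (ω : Fin m → Fin n) :
    crossS U w ω = ((m : ℝ) • ∑ i, π i • crossTerm U w i) + ∑ s, ccross U π w (ω s) := by
  simp [crossS, ccross, Finset.sum_sub_distrib, Nat.cast_smul_eq_nsmul]

lemma gramS_eq (ω : Fin m → Fin n) :
    gramS U w ω = ((m : ℝ) • ∑ i, π i • gramTerm U w i) + ∑ s, cgram U π w (ω s) := by
  simp [gramS, cgram, Finset.sum_sub_distrib, Nat.cast_smul_eq_nsmul]

lemma Ex_nsq_crossS (h : WhiteData m U π w γ) :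
    Ex π m (fun ω => nsq (crossS U w ω)) =
      nsq ((m : ℝ) • ∑ i, π i • crossTerm U w i) + m * ∑ i, π i * nsq (ccross U π w i) := by
  simp only [crossS_eq (π := π)]
  exact Ex_nsq_add_sum h.sum_one _ h.ccross_mean m

lemma m_sum_nsq_ccross_le (h : WhiteData m U π w γ) :
    m * ∑ i, π i * nsq (ccross U π w i) ≤ 4 * γ * nsq (perp U) := by
  have h1 := mul_le_mul_of_nonneg_left h.sum_nsq_ccross_le h.m_pos.le
  refine h1.trans (le_of_eq ?_)
  have := h.m_pos
  field_simp

lemma Ex_nsq_crossS_le (h : WhiteData m U π w γ) :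
    Ex π m (fun ω => nsq (crossS U w ω)) ≤ 5 * γ * nsq (perp U) := by
  rw [h.Ex_nsq_crossS]
  have h1 := h.nsq_mean_cross_le
  have h2 := h.m_sum_nsq_ccross_le
  have h3 : 4 * γ * (γ * nsq (perp U)) ≤ 1 * (γ * nsq (perp U)) := by
    have := nsq_nonneg (perp U)
    have := h.γ_pos
    have := h.γ_le
    gcongr
    linarith
  nlinarith

/-- The limiting second moment `trace(P⊥ diag(ℓ_i / (m π_i)))`, written through row norms of
`P⊥`. -/
def mainTerm (m : ℕ) (U : Matrix (Fin n) (Fin p) ℝ) (π : Fin n → ℝ) : ℝ :=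
  ∑ i, (U i ⬝ᵥ U i) / (m * π i) * (perp U i ⬝ᵥ perp U i)

lemma ratio_eq (h : WhiteData m U π w γ) (i : Fin n) :
    (U i ⬝ᵥ U i) / (m * π i) = w i * (U i ⬝ᵥ U i) / (1 + w i * (U i ⬝ᵥ U i)) := by
  rw [← h.w_eq]
  have := h.m_pos; have := h.pos i; have := h.w_pos i
  field_simp

lemma mainTerm_nonneg (h : WhiteData m U π w γ) : 0 ≤ mainTerm m U π :=
  Finset.sum_nonneg fun i _ => mul_nonneg
    (div_nonneg (dot_self_nonneg _) (mul_nonneg h.m_pos.le (h.pos i).le)) (dot_self_nonneg _)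

lemma mainTerm_le (h : WhiteData m U π w γ) : mainTerm m U π ≤ 2 * γ * nsq (perp U) := by
  rw [nsq_eq_sum_rows, mainTerm, Finset.mul_sum]
  refine Finset.sum_le_sum fun i _ => mul_le_mul_of_nonneg_right ?_ (dot_self_nonneg _)
  rw [h.ratio_eq]
  exact (div_le_self (h.lev_nonneg i) (by linarith [h.lev_nonneg i])).trans (h.w_le i)

lemma abs_Ex_nsq_crossS_sub_le (h : WhiteData m U π w γ) :
    |Ex π m (fun ω => nsq (crossS U w ω)) - mainTerm m U π| ≤ 16 * γ ^ 2 * nsq (perp U) := by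
  have hm := h.m_pos
  have hm1 := h.one_le_m
  have hγ := h.γ_pos
  set K := ∑ i, π i • crossTerm U w i with hK
  have e : Ex π m (fun ω => nsq (crossS U w ω)) =
      m * ∑ i, π i * nsq (crossTerm U w i) + (m ^ 2 - m) * nsq K := by
    rw [h.Ex_nsq_crossS]
    simp only [ccross]
    rw [sum_nsq_center h.sum_one, nsq_smul]; ring
  have hK2 : m ^ 2 * nsq K ≤ 4 * γ ^ 2 * nsq (perp U) := by
    rw [← nsq_smul]; exact h.nsq_mean_cross_le
  have hK0 := nsq_nonneg K
  have h1 : 0 ≤ m * ∑ i, π i * nsq (crossTerm U w i) - mainTerm m U π ∧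
      m * ∑ i, π i * nsq (crossTerm U w i) - mainTerm m U π ≤ 12 * γ ^ 2 * nsq (perp U) := by
    have e2 : m * ∑ i, π i * nsq (crossTerm U w i) - mainTerm m U π =
        ∑ i, ((1 + w i * (U i ⬝ᵥ U i)) * (w i * (U i ⬝ᵥ U i)) -
          w i * (U i ⬝ᵥ U i) / (1 + w i * (U i ⬝ᵥ U i))) * (perp U i ⬝ᵥ perp U i) := by
      rw [mainTerm, Finset.mul_sum, ← Finset.sum_sub_distrib]
      refine Finset.sum_congr rfl fun i _ => ?_
      rw [nsq_crossTerm, h.ratio_eq, ← h.w_eq i]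
      ring
    have e3 : ∀ i, 0 ≤ (1 + w i * (U i ⬝ᵥ U i)) * (w i * (U i ⬝ᵥ U i)) -
          w i * (U i ⬝ᵥ U i) / (1 + w i * (U i ⬝ᵥ U i)) ∧
        (1 + w i * (U i ⬝ᵥ U i)) * (w i * (U i ⬝ᵥ U i)) -
          w i * (U i ⬝ᵥ U i) / (1 + w i * (U i ⬝ᵥ U i)) ≤ 12 * γ ^ 2 := by
      intro i
      have ht := h.lev_nonneg i
      have ht2 := h.w_le i
      have hg := h.γ_le
      set t := w i * (U i ⬝ᵥ U i)
      have e4 : (1 + t) * t - t / (1 + t) = t ^ 2 * ((2 + t) / (1 + t)) := by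
        have : 1 + t ≠ 0 := by positivity
        field_simp; ring
      have e5 : (2 + t) / (1 + t) ≤ 3 := by rw [div_le_iff₀ (by linarith)]; linarith
      rw [e4]
      refine ⟨by positivity, ?_⟩
      calc t ^ 2 * ((2 + t) / (1 + t)) ≤ (2 * γ) ^ 2 * 3 := by gcongr
        _ = _ := by ring
    rw [e2]
    refine ⟨Finset.sum_nonneg fun i _ => mul_nonneg (e3 i).1 (dot_self_nonneg _), ?_⟩
    rw [nsq_eq_sum_rows, Finset.mul_sum]
    exact Finset.sum_le_sum fun i _ => mul_le_mul_of_nonneg_right (e3 i).2 (dot_self_nonneg _)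
  have h2 : 0 ≤ (m ^ 2 - m) * nsq K := mul_nonneg (by nlinarith) hK0
  have h3 : (m ^ 2 - m) * nsq K ≤ 4 * γ ^ 2 * nsq (perp U) := by nlinarith
  have hq := nsq_nonneg (perp U)
  rw [e, abs_le]
  constructor
  · have : 0 ≤ 16 * γ ^ 2 * nsq (perp U) := by positivity
    linarith [h1.1]
  · linarith [h1.2]

/-- Product of the two centred sums: off-diagonal part by the martingale bound, diagonal part by
the second moment of an i.i.d. sum. -/
lemma Ex_nsq_prod_le (h : WhiteData m U π w γ) :
    Ex π m (fun ω => nsq ((∑ s, cgram U π w (ω s)) * ∑ s, ccross U π w (ω s))) ≤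
      132 * γ ^ 2 * nsq (perp U) := by
  have hπ : ∀ i, 0 ≤ π i := fun i => (h.pos i).le
  have hm := h.m_pos
  have hγ := h.γ_pos
  have hg := h.γ_le
  have hq := nsq_nonneg (perp U)
  have hoff := Ex_nsq_offdiag_le hπ h.sum_one h.cgram_mean h.ccross_mean (A := 4 * γ / m)
    (by positivity) (fun M => h.sum_nsq_cgram_mul_le M) h.sum_nsq_ccross_le m
  have eoff : 2 * (m : ℝ) ^ 2 * (4 * γ / m) * (4 * γ / m * nsq (perp U)) =
      32 * γ ^ 2 * nsq (perp U) := by field_simp; ring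
  rw [eoff] at hoff
  have hdiag := Ex_nsq_sum_le h.sum_one (fun i => cgram U π w i * ccross U π w i) m
  have h1 : m * ∑ i, π i * nsq (cgram U π w i * ccross U π w i) ≤
      γ ^ 2 * nsq (perp U) := by
    calc m * ∑ i, π i * nsq (cgram U π w i * ccross U π w i)
        ≤ m * ∑ i, 16 * γ ^ 2 * (π i * nsq (ccross U π w i)) := by
          refine mul_le_mul_of_nonneg_left (Finset.sum_le_sum fun i _ => ?_) hm.le
          nlinarith [mul_le_mul_of_nonneg_left (h.nsq_cgram_mul_le (ccross U π w i) i) (hπ i)]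
      _ = 16 * γ ^ 2 * (m * ∑ i, π i * nsq (ccross U π w i)) := by
          rw [← Finset.mul_sum]; ring
      _ ≤ 16 * γ ^ 2 * (4 * γ * nsq (perp U)) := by
          have := h.m_sum_nsq_ccross_le
          gcongr
      _ = (64 * γ) * (γ ^ 2 * nsq (perp U)) := by ring
      _ ≤ 1 * (γ ^ 2 * nsq (perp U)) := by gcongr; linarith
      _ = _ := one_mul _
  have h2 := h.nsq_mean_diag_le
  have h3 : ∀ ω : Fin m → Fin n,
      nsq ((∑ s, cgram U π w (ω s)) * ∑ s, ccross U π w (ω s)) ≤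
      2 * nsq ((∑ s, cgram U π w (ω s)) * (∑ s, ccross U π w (ω s)) -
        ∑ s, cgram U π w (ω s) * ccross U π w (ω s)) +
      2 * nsq (∑ s, cgram U π w (ω s) * ccross U π w (ω s)) := by
    intro ω
    have := nsq_add_le ((∑ s, cgram U π w (ω s)) * (∑ s, ccross U π w (ω s)) -
        ∑ s, cgram U π w (ω s) * ccross U π w (ω s))
      (∑ s, cgram U π w (ω s) * ccross U π w (ω s))
    rwa [sub_add_cancel] at this
  refine (Ex_mono hπ h3).trans ?_
  rw [Ex_add, Ex_const_mul, Ex_const_mul]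
  linarith

/-- The key fourth-order estimate: `(A - 1) Z` is a factor `√γ` smaller than `Z`, in mean
square. -/
lemma Ex_nsq_dev_mul_cross_le (h : WhiteData m U π w γ) :
    Ex π m (fun ω => nsq ((gramS U w ω - 1) * crossS U w ω)) ≤ 265 * γ ^ 2 * nsq (perp U) := by
  have hπ : ∀ i, 0 ≤ π i := fun i => (h.pos i).le
  have hm := h.m_pos
  have hγ := h.γ_pos
  have hg := h.γ_le
  have hq := nsq_nonneg (perp U)
  set K1 := Uᵀ * (Matrix.diagonal (fun i => w i * (U i ⬝ᵥ U i)) * U) with hK1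
  set K2 := (m : ℝ) • ∑ i, π i • crossTerm U w i with hK2
  have h3 : ∀ ω : Fin m → Fin n, nsq ((gramS U w ω - 1) * crossS U w ω) ≤
      2 * nsq ((∑ s, cgram U π w (ω s)) * ∑ s, ccross U π w (ω s)) +
      (4 * nsq (∑ s, cgram U π w (ω s) * K2) + 4 * (4 * γ ^ 2) * nsq (crossS U w ω)) := by
    intro ω
    have e : (gramS U w ω - 1) * crossS U w ω =
        (∑ s, cgram U π w (ω s)) * (∑ s, ccross U π w (ω s)) +
        (∑ s, cgram U π w (ω s) * K2 + K1 * crossS U w ω) := by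
      have e1 : gramS U w ω - 1 = K1 + ∑ s, cgram U π w (ω s) := by
        rw [gramS_eq (π := π), h.mean_gram]; abel
      rw [e1, Matrix.add_mul]
      nth_rewrite 2 [crossS_eq (π := π)]
      rw [Matrix.mul_add, ← Matrix.sum_mul]
      abel
    rw [e]
    have h4 := nsq_add_le ((∑ s, cgram U π w (ω s)) * (∑ s, ccross U π w (ω s)))
      (∑ s, cgram U π w (ω s) * K2 + K1 * crossS U w ω)
    have h5 := nsq_add_le (∑ s, cgram U π w (ω s) * K2) (K1 * crossS U w ω)
    have h6 := h.nsq_bias_mul_le (crossS U w ω)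
    linarith
  refine (Ex_mono hπ h3).trans ?_
  rw [Ex_add, Ex_add, Ex_const_mul, Ex_const_mul, Ex_const_mul]
  have h0 : ∑ i, π i • (cgram U π w i * K2) = 0 := by
    simp only [← Matrix.smul_mul, ← Matrix.sum_mul, h.cgram_mean, Matrix.zero_mul]
  rw [Ex_nsq_sum h.sum_one h0]
  have h7 := h.Ex_nsq_prod_le
  have h8 : m * ∑ i, π i * nsq (cgram U π w i * K2) ≤ 16 * γ * (γ ^ 2 * nsq (perp U)) := by
    calc m * ∑ i, π i * nsq (cgram U π w i * K2) ≤ m * (4 * γ / m * nsq K2) := by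
          have := h.sum_nsq_cgram_mul_le K2; gcongr
      _ = 4 * γ * nsq K2 := by field_simp
      _ ≤ 4 * γ * (4 * γ ^ 2 * nsq (perp U)) := by
          have := h.nsq_mean_cross_le; gcongr
      _ = _ := by ring
  have h9 : 4 * (4 * γ ^ 2) * Ex π m (fun ω => nsq (crossS U w ω)) ≤
      4 * (4 * γ ^ 2) * (5 * γ * nsq (perp U)) := by
    have := h.Ex_nsq_crossS_le; gcongr
  have h10 : 144 * γ * (γ ^ 2 * nsq (perp U)) ≤ 1 * (γ ^ 2 * nsq (perp U)) := by
    gcongr; linarith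
  nlinarith

/-- Fourth moment of the centred cross term, where `G` bounds the inverse of the nonzero leverage
scores. -/
lemma Ex_nsq_sq_ccross_le (h : WhiteData m U π w γ) {G : ℝ} (hG : 1 ≤ G)
    (hlev : ∀ i, U i ≠ 0 → 1 ≤ G * (U i ⬝ᵥ U i)) :
    Ex π m (fun ω => nsq (∑ s, ccross U π w (ω s)) ^ 2) ≤
      70 * γ ^ 2 * G * nsq (perp U) ^ 2 := by
  have hπ : ∀ i, 0 ≤ π i := fun i => (h.pos i).le
  have hm := h.m_pos
  have hm1 := h.one_le_m
  have hγ := h.γ_pos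
  have hg := h.γ_le
  have hq := nsq_nonneg (perp U)
  set q := nsq (perp U) with hqdef
  set K := ∑ i, π i • crossTerm U w i with hK
  have hK0 := nsq_nonneg K
  have hK1 : m ^ 2 * nsq K ≤ 4 * γ ^ 2 * q := by
    rw [← nsq_smul]; exact h.nsq_mean_cross_le
  have hterm : ∀ i, m * (π i * nsq (crossTerm U w i) ^ 2) ≤
      16 * γ ^ 3 * G * q * (perp U i ⬝ᵥ perp U i) := by
    intro i
    have ht := h.lev_nonneg i
    have ht2 := h.w_le i
    have hw := h.w_pos i
    have hv := dot_self_nonneg (perp U i)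
    have hvq : perp U i ⬝ᵥ perp U i ≤ q := by
      rw [hqdef, nsq_eq_sum_rows]
      exact Finset.single_le_sum (f := fun i => perp U i ⬝ᵥ perp U i)
        (fun j _ => dot_self_nonneg _) (Finset.mem_univ i)
    have htw : w i * (U i ⬝ᵥ U i) * w i ≤ 4 * γ ^ 2 * G := by
      by_cases hU0 : U i = 0
      · simp only [hU0, dotProduct_zero, mul_zero, zero_mul]; positivity
      · have h1 := hlev i hU0
        have h2 : w i ≤ 2 * γ * G := by
          calc w i = w i * 1 := (mul_one _).symm
            _ ≤ w i * (G * (U i ⬝ᵥ U i)) := by gcongr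
            _ = w i * (U i ⬝ᵥ U i) * G := by ring
            _ ≤ _ := by gcongr
        calc _ ≤ 2 * γ * (2 * γ * G) := by gcongr
          _ = _ := by ring
    have e : m * (π i * nsq (crossTerm U w i) ^ 2) =
        (1 + w i * (U i ⬝ᵥ U i)) * (w i * (U i ⬝ᵥ U i)) * (w i * (U i ⬝ᵥ U i) * w i) *
          (perp U i ⬝ᵥ perp U i) * (perp U i ⬝ᵥ perp U i) := by
      rw [nsq_crossTerm, ← h.w_eq]; ring
    rw [e]
    calc _ ≤ 2 * (2 * γ) * (4 * γ ^ 2 * G) * q * (perp U i ⬝ᵥ perp U i) := by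
          gcongr; linarith
      _ = _ := by ring
  have hsum : m * ∑ i, π i * nsq (crossTerm U w i) ^ 2 ≤ 16 * γ ^ 3 * G * q ^ 2 := by
    rw [Finset.mul_sum]
    refine (Finset.sum_le_sum fun i _ => hterm i).trans (le_of_eq ?_)
    rw [← Finset.mul_sum, ← nsq_eq_sum_rows, ← hqdef]; ring
  have hKsq : m * nsq K ^ 2 ≤ 16 * γ ^ 4 * q ^ 2 := by
    have h2 : (m ^ 2 * nsq K) ^ 2 ≤ (4 * γ ^ 2 * q) ^ 2 := by gcongr
    have h3 : (m : ℝ) ≤ m ^ 4 := le_self_pow₀ hm1 (by norm_num)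
    calc m * nsq K ^ 2 ≤ m ^ 4 * nsq K ^ 2 := by gcongr
      _ = (m ^ 2 * nsq K) ^ 2 := by ring
      _ ≤ _ := h2
      _ = _ := by ring
  have hc : m * ∑ i, π i * nsq (ccross U π w i) ^ 2 ≤
      8 * (m * ∑ i, π i * nsq (crossTerm U w i) ^ 2) + 8 * (m * nsq K ^ 2) := by
    have h2 : ∀ i, π i * nsq (ccross U π w i) ^ 2 ≤
        8 * (π i * nsq (crossTerm U w i) ^ 2) + 8 * (π i * nsq K ^ 2) := by
      intro i
      have h3 : nsq (ccross U π w i) ≤ 2 * nsq (crossTerm U w i) + 2 * nsq K :=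
        nsq_sub_le _ _
      have h4 : nsq (ccross U π w i) ^ 2 ≤ (2 * nsq (crossTerm U w i) + 2 * nsq K) ^ 2 :=
        pow_le_pow_left₀ (nsq_nonneg _) h3 2
      have h5 : nsq (ccross U π w i) ^ 2 ≤ 8 * nsq (crossTerm U w i) ^ 2 + 8 * nsq K ^ 2 := by
        nlinarith [sq_nonneg (nsq (crossTerm U w i) - nsq K)]
      nlinarith [hπ i]
    have h3 := Finset.sum_le_sum fun i (_ : i ∈ Finset.univ) => h2 i
    rw [Finset.sum_add_distrib, ← Finset.mul_sum, ← Finset.mul_sum, ← Finset.sum_mul, h.sum_one]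
      at h3
    nlinarith
  have hmain := Ex_nsq_sq_le hπ h.sum_one h.ccross_mean m
  have hV : (m * ∑ i, π i * nsq (ccross U π w i)) ^ 2 ≤ (4 * γ * q) ^ 2 := by
    have h1 := h.m_sum_nsq_ccross_le
    have h2 : 0 ≤ m * ∑ i, π i * nsq (ccross U π w i) :=
      mul_nonneg hm.le (Finset.sum_nonneg fun i _ => mul_nonneg (hπ i) (nsq_nonneg _))
    gcongr
  refine hmain.trans ?_
  have hX : 0 ≤ γ ^ 2 * q ^ 2 := by positivity
  have hXG : γ ^ 2 * q ^ 2 ≤ γ ^ 2 * q ^ 2 * G := le_mul_of_one_le_right hX hG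
  have hA : γ ^ 3 * G * q ^ 2 ≤ 1 / 224 * (γ ^ 2 * q ^ 2 * G) := by
    calc γ ^ 3 * G * q ^ 2 = γ * (γ ^ 2 * q ^ 2 * G) := by ring
      _ ≤ _ := by gcongr
  have hB : γ ^ 4 * q ^ 2 ≤ 1 / 224 * (γ ^ 2 * q ^ 2) := by
    calc γ ^ 4 * q ^ 2 = γ ^ 2 * (γ ^ 2 * q ^ 2) := by ring
      _ ≤ _ := by gcongr; nlinarith
  nlinarith

end WhiteData

/-! ### The event where the sketched Gram matrix is well conditioned -/

/-- Lower bound `A ⪰ 1/2` in quadratic-form language. -/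
def Good {p : ℕ} (A : Matrix (Fin p) (Fin p) ℝ) : Prop :=
  ∀ x, 1 / 2 * (x ⬝ᵥ x) ≤ x ⬝ᵥ (A *ᵥ x)

namespace Good

variable {p b : ℕ} {A : Matrix (Fin p) (Fin p) ℝ}

lemma isUnit_det (h : Good A) : IsUnit A.det := by
  rw [isUnit_iff_ne_zero]
  intro h0
  obtain ⟨v, hv, hv0⟩ := Matrix.exists_mulVec_eq_zero_iff.2 h0
  have h1 := h v
  rw [hv0, dotProduct_zero] at h1
  exact hv (dotProduct_self_eq_zero.1 (le_antisymm (by linarith) (dot_self_nonneg v)))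

lemma nsq_inv_mul_le (h : Good A) (M : Matrix (Fin p) (Fin b) ℝ) :
    nsq (A⁻¹ * M) ≤ 4 * nsq M := by
  set W := A⁻¹ * M with hW
  have hM : M = A * W := by rw [hW, Matrix.mul_nonsing_inv_cancel_left _ _ h.isUnit_det]
  rw [hM, ← nsq_transpose W, ← nsq_transpose (A * W), nsq_eq_sum_rows, nsq_eq_sum_rows,
    Finset.mul_sum]
  refine Finset.sum_le_sum fun j _ => ?_
  have e : (A * W)ᵀ j = A *ᵥ (Wᵀ j) := rfl
  rw [e]
  have h1 := h (Wᵀ j)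
  have h2 := dot_sq_le (Wᵀ j) (A *ᵥ (Wᵀ j))
  have h3 := dot_self_nonneg (Wᵀ j)
  rcases h3.eq_or_lt with h0 | h0
  · rw [← h0]; exact mul_nonneg (by norm_num) (dot_self_nonneg _)
  · have h4 : (1 / 2 * (Wᵀ j ⬝ᵥ Wᵀ j)) ^ 2 ≤ (Wᵀ j ⬝ᵥ (A *ᵥ Wᵀ j)) ^ 2 := by gcongr
    refine le_of_mul_le_mul_left ?_ h0
    nlinarith

/-- Replacing `A⁻¹ Z` by `Z` costs only a small multiple of `‖Z‖²` plus the second-order quantity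
`‖(A - 1) Z‖²`. -/
lemma abs_nsq_inv_mul_sub_le (h : Good A) {r : ℝ} (hr : 0 < r) (hr1 : r ≤ 1)
    (Z : Matrix (Fin p) (Fin b) ℝ) :
    |nsq (A⁻¹ * Z) - nsq Z| ≤ r * nsq Z + 8 * r⁻¹ * nsq ((A - 1) * Z) := by
  set V := A⁻¹ * ((A - 1) * Z) with hV
  have e : A⁻¹ * Z = Z + -V := by
    rw [hV, Matrix.sub_mul, Matrix.mul_sub, Matrix.nonsing_inv_mul_cancel_left _ _ h.isUnit_det]
    simp
  have h1 := ip_young hr Z (-V)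
  have h2 := h.nsq_inv_mul_le ((A - 1) * Z)
  rw [← hV] at h2
  have h3 : 1 ≤ r⁻¹ := (one_le_inv₀ hr).2 hr1
  have h0 := nsq_nonneg V
  rw [e, nsq_add, nsq_neg]
  rw [nsq_neg] at h1
  have e2 : nsq Z + 2 * ip Z (-V) + nsq V - nsq Z = 2 * ip Z (-V) + nsq V := by ring
  rw [e2]
  refine (abs_add_le _ _).trans ?_
  rw [abs_of_nonneg h0]
  have h4 : nsq V ≤ r⁻¹ * nsq V := le_mul_of_one_le_left h0 h3
  have h5 : r⁻¹ * nsq V ≤ r⁻¹ * (4 * nsq ((A - 1) * Z)) := by gcongr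
  linarith

end Good

namespace WhiteData

variable {n p m b : ℕ} {U : Matrix (Fin n) (Fin p) ℝ} {π w : Fin n → ℝ} {γ : ℝ}

open Classical in
/-- Indicator of the complement of the event `A(ω) ⪰ 1/2`. -/
def bad (U : Matrix (Fin n) (Fin p) ℝ) (w : Fin n → ℝ) (ω : Fin m → Fin n) : ℝ :=
  if Good (gramS U w ω) then 0 else 1

lemma bad_nonneg (ω : Fin m → Fin n) : 0 ≤ bad U w ω := by
  unfold bad; split_ifs <;> norm_num

lemma gramTerm_eq_vecMulVec (h : WhiteData m U π w γ) (i : Fin n) :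
    gramTerm U w i = Matrix.vecMulVec (Real.sqrt (w i) • U i) (Real.sqrt (w i) • U i) := by
  rw [gramTerm, Matrix.smul_vecMulVec, Matrix.vecMulVec_smul, smul_smul,
    Real.mul_self_sqrt (h.w_pos i).le]

lemma gramS_posSemidef (h : WhiteData m U π w γ) (ω : Fin m → Fin n) :
    (gramS U w ω).PosSemidef := by
  unfold gramS
  refine Matrix.posSemidef_sum _ fun s _ => ?_
  rw [h.gramTerm_eq_vecMulVec]
  exact posSemidef_vecMulVec_self _

lemma sum_dot_mulVec (h : WhiteData m U π w γ) (R : Matrix (Fin p) (Fin p) ℝ) :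
    ∑ i, U i ⬝ᵥ (R *ᵥ U i) = R.trace := by
  have e : ∑ i, U i ⬝ᵥ (R *ᵥ U i) = (U * R * Uᵀ).trace := by
    simp only [Matrix.trace, Matrix.diag]
    refine Finset.sum_congr rfl fun i _ => ?_
    rw [Matrix.dotProduct_mulVec, Matrix.mul_apply]
    simp [dotProduct, Matrix.vecMul, Matrix.mul_apply]
  rw [e, Matrix.trace_mul_comm, ← Matrix.mul_assoc, h.orth, Matrix.one_mul]

/-- Lower-tail bound for the sketched Gram matrix, by Markov's inequality for
`tr (1 + A)⁻ᴺ`. -/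
lemma Ex_bad_le_pow (h : WhiteData m U π w γ) {N : ℕ} (hN : ((N : ℝ) + 1) * (8 * γ) ≤ 1) :
    Ex π m (bad U w) ≤ p * (6 / 7) ^ N := by
  have hπ : ∀ i, 0 ≤ π i := fun i => (h.pos i).le
  have hm := h.m_pos
  have hN0 : (0 : ℝ) ≤ (N : ℝ) + 1 := by positivity
  set v : Fin n → Fin p → ℝ := fun i => Real.sqrt (w i) • U i with hv
  have hvv : ∀ i, v i ⬝ᵥ v i = w i * (U i ⬝ᵥ U i) := by
    intro i
    simp only [hv, smul_dotProduct, dotProduct_smul, smul_eq_mul]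
    rw [← mul_assoc, Real.mul_self_sqrt (h.w_pos i).le]
  have key := Ex_trace_inv_pow_le hπ h.sum_one v (N := N) (μ := (m : ℝ)⁻¹) (by positivity)
    (by
      have : ((N : ℝ) + 1) * (m : ℝ)⁻¹ ≤ (N + 1) * (8 * γ) := by
        gcongr; linarith [h.inv_m_le, h.γ_pos]
      linarith)
    (fun i => by
      have : ((N : ℝ) + 1) * (v i ⬝ᵥ v i) ≤ (N + 1) * (2 * γ) := by
        rw [hvv]; exact mul_le_mul_of_nonneg_left (h.w_le i) hN0
      linarith)
    (fun R hR => by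
      rw [← h.sum_dot_mulVec R, Finset.mul_sum]
      refine Finset.sum_le_sum fun i _ => ?_
      have h0 : 0 ≤ U i ⬝ᵥ (R *ᵥ U i) := by simpa using hR.dotProduct_mulVec_nonneg (U i)
      have e : π i * (v i ⬝ᵥ (R *ᵥ v i)) = π i * w i * (U i ⬝ᵥ (R *ᵥ U i)) := by
        simp only [hv, Matrix.mulVec_smul, smul_dotProduct, dotProduct_smul, smul_eq_mul]
        rw [← mul_assoc (Real.sqrt _), Real.mul_self_sqrt (h.w_pos i).le, mul_assoc]
      rw [e, h.pi_w]
      refine mul_le_mul_of_nonneg_right ?_ h0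
      exact le_mul_of_one_le_right (by positivity) (by linarith [h.lev_nonneg i])) m
  have hpt : ∀ ω : Fin m → Fin n, bad U w ω ≤ (3 / 2) ^ N *
      (((1 + ∑ s, Matrix.vecMulVec (v (ω s)) (v (ω s)))⁻¹) ^ N).trace := by
    intro ω
    have e : ∑ s, Matrix.vecMulVec (v (ω s)) (v (ω s)) = gramS U w ω :=
      Finset.sum_congr rfl fun s _ => (h.gramTerm_eq_vecMulVec (ω s)).symm
    rw [e]
    unfold bad
    split_ifs with hg
    · have hR : ((1 + gramS U w ω)⁻¹).PosSemidef :=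
        (Matrix.PosDef.one.add_posSemidef (h.gramS_posSemidef ω)).inv.posSemidef
      exact mul_nonneg (by positivity) (hR.pow N).trace_nonneg
    · have h1 := trace_inv_pow_ge (h.gramS_posSemidef ω) N hg
      calc (1 : ℝ) = (3 / 2) ^ N * (2 / 3) ^ N := by rw [← mul_pow]; norm_num
        _ ≤ _ := by gcongr
  refine (Ex_mono hπ hpt).trans ?_
  rw [Ex_const_mul]
  have e1 : 1 / (1 + 3 / 4 * (m : ℝ)⁻¹ * m) = 4 / 7 := by
    rw [mul_assoc, inv_mul_cancel₀ hm.ne']; norm_num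
  rw [e1] at key
  calc (3 / 2 : ℝ) ^ N * _ ≤ (3 / 2) ^ N * (p * (4 / 7) ^ N) := by gcongr
    _ = p * ((3 / 2) * (4 / 7)) ^ N := by rw [mul_pow]; ring
    _ = _ := by norm_num

lemma Ex_bad_le_exp (h : WhiteData m U π w γ) :
    Ex π m (bad U w) ≤ p * Real.exp (-(1 / (112 * γ))) := by
  have hγ := h.γ_pos
  have hg := h.γ_le
  have hx : 28 ≤ 1 / (8 * γ) := by rw [le_div_iff₀ (by positivity)]; linarith
  have hk1 := Nat.floor_le (show 0 ≤ 1 / (8 * γ) by positivity)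
  have hk2 := Nat.lt_floor_add_one (1 / (8 * γ))
  obtain ⟨N, hN⟩ : ∃ N, ⌊1 / (8 * γ)⌋₊ = N + 1 :=
    Nat.exists_eq_succ_of_ne_zero (by
      have : 0 < ⌊1 / (8 * γ)⌋₊ := Nat.floor_pos.2 (by linarith)
      omega)
  rw [hN] at hk1 hk2
  push_cast at hk1 hk2
  have h1 := h.Ex_bad_le_pow (N := N) (by rwa [le_div_iff₀ (by positivity)] at hk1)
  refine h1.trans ?_
  gcongr
  have h2 : (6 / 7 : ℝ) ≤ Real.exp (-(1 / 7)) := by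
    have := Real.add_one_le_exp (-(1 / 7 : ℝ)); linarith
  refine (pow_le_pow_left₀ (by norm_num) h2 N).trans ?_
  rw [← Real.exp_nat_mul, Real.exp_le_exp]
  have e : 1 / (112 * γ) = 1 / (8 * γ) / 14 := by field_simp; norm_num
  rw [e]
  linarith

/-- A surplus factor `γ` in the failure probability is obtained from the same exponential. -/
lemma Ex_bad_le (h : WhiteData m U π w γ) (hp : 1 ≤ p) {δ : ℝ} (hδ : 0 < δ)
    (hL : γ * (224 * Real.log (p / δ)) ≤ 1) :
    Ex π m (bad U w) ≤ δ ∧ Ex π m (bad U w) ≤ δ * (224 * γ) := by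
  have hγ := h.γ_pos
  have hp0 : (0 : ℝ) < p := by exact_mod_cast hp
  set E := Real.exp (-(1 / (224 * γ))) with hE
  have hE0 : 0 < E := Real.exp_pos _
  have hE1 : E ≤ δ / p := by
    have h1 : Real.log (p / δ) ≤ 1 / (224 * γ) := by
      rw [le_div_iff₀ (by positivity)]; linarith
    calc E ≤ Real.exp (-Real.log (p / δ)) := Real.exp_le_exp.2 (by linarith)
      _ = δ / p := by rw [Real.exp_neg, Real.exp_log (by positivity), inv_div]
  have hy : 0 < 1 / (224 * γ) := by positivity
  have hE2 : E ≤ 1 := Real.exp_le_one_iff.2 (by linarith)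
  have hE3 : E ≤ 224 * γ := by
    rw [hE, Real.exp_neg]
    have h1 : 1 / (224 * γ) ≤ Real.exp (1 / (224 * γ)) := by
      linarith [Real.add_one_le_exp (1 / (224 * γ))]
    calc (Real.exp (1 / (224 * γ)))⁻¹ ≤ (1 / (224 * γ))⁻¹ := inv_anti₀ hy h1
      _ = _ := by simp
  have hB : Ex π m (bad U w) ≤ δ * E := by
    refine h.Ex_bad_le_exp.trans ?_
    have e : Real.exp (-(1 / (112 * γ))) = E * E := by
      rw [hE, ← Real.exp_add]; congr 1; field_simp; norm_num
    rw [e]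
    calc (p : ℝ) * (E * E) ≤ p * (δ / p * E) := by gcongr
      _ = δ * E := by field_simp
  exact ⟨hB.trans (by nlinarith), hB.trans (by gcongr)⟩

/-- The contribution of the bad event to `E ‖Z‖²`: a truncation at level `√γ G q` reduces it to the
fourth moment and the failure probability. -/
lemma Ex_bad_mul_nsq_crossS_le (h : WhiteData m U π w γ) {G : ℝ} (hG : 1 ≤ G)
    (hlev : ∀ i, U i ≠ 0 → 1 ≤ G * (U i ⬝ᵥ U i)) (hbad : Ex π m (bad U w) * G ≤ 9 * γ) :
    Ex π m (fun ω => bad U w ω * nsq (crossS U w ω)) ≤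
      81 * Real.sqrt γ ^ 3 * nsq (perp U) := by
  have hπ : ∀ i, 0 ≤ π i := fun i => (h.pos i).le
  have hγ := h.γ_pos
  have hg := h.γ_le
  have hq := nsq_nonneg (perp U)
  set q := nsq (perp U) with hqdef
  set σ := Real.sqrt γ with hσ
  have hσ0 : 0 < σ := Real.sqrt_pos.2 hγ
  have hσ2 : σ ^ 2 = γ := Real.sq_sqrt hγ.le
  have hσ1 : σ ≤ 1 / 14 := by
    rw [hσ]; apply Real.sqrt_le_iff.2; constructor <;> norm_num; linarith
  have hb1 : ∀ ω : Fin m → Fin n, bad U w ω ≤ 1 := fun ω => by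
    unfold bad; split_ifs <;> norm_num
  rcases hq.eq_or_lt with h0 | hq0
  · have h1 : Ex π m (fun ω => bad U w ω * nsq (crossS U w ω)) ≤
        Ex π m (fun ω => nsq (crossS U w ω)) :=
      Ex_mono hπ fun ω => mul_le_of_le_one_left (nsq_nonneg _) (hb1 ω)
    have h2 := h.Ex_nsq_crossS_le
    rw [← hqdef, ← h0] at h2
    rw [← h0]; linarith
  set K := σ * G * q with hK
  have hK0 : 0 < K := by positivity
  have hbb : 0 ≤ Ex π m (bad U w) := Ex_nonneg hπ fun ω => bad_nonneg ω
  have hbγ : Ex π m (bad U w) ≤ 9 * γ := (le_mul_of_one_le_right hbb hG).trans hbad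
  have hpt : ∀ ω : Fin m → Fin n, bad U w ω * nsq (crossS U w ω) ≤
      (8 * γ ^ 2 * q + K) * bad U w ω + K⁻¹ * nsq (∑ s, ccross U π w (ω s)) ^ 2 := by
    intro ω
    have h1 := nsq_add_le ((m : ℝ) • ∑ i, π i • crossTerm U w i) (∑ s, ccross U π w (ω s))
    rw [← crossS_eq] at h1
    have h2 := h.nsq_mean_cross_le
    have h3 := nsq_nonneg (∑ s, ccross U π w (ω s))
    set x := nsq (∑ s, ccross U π w (ω s))
    have h4 : 2 * x ≤ K + K⁻¹ * x ^ 2 := by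
      have : K + K⁻¹ * x ^ 2 - 2 * x = K⁻¹ * (K - x) ^ 2 := by field_simp; ring
      have h5 : 0 ≤ K⁻¹ * (K - x) ^ 2 := by positivity
      linarith
    have h6 : 0 ≤ K⁻¹ * x ^ 2 := by positivity
    unfold bad
    split_ifs
    · simpa using h6
    · linarith
  refine (Ex_mono hπ hpt).trans ?_
  rw [Ex_add, Ex_const_mul, Ex_const_mul]
  have h4 := h.Ex_nsq_sq_ccross_le hG hlev
  have t1 : K⁻¹ * Ex π m (fun ω => nsq (∑ s, ccross U π w (ω s)) ^ 2) ≤ 70 * σ ^ 3 * q := by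
    calc _ ≤ K⁻¹ * (70 * γ ^ 2 * G * q ^ 2) := by gcongr
      _ = 70 * σ ^ 3 * q := by rw [hK, ← hσ2]; field_simp
  have t2 : K * Ex π m (bad U w) ≤ 9 * σ ^ 3 * q := by
    calc K * Ex π m (bad U w) = σ * q * (Ex π m (bad U w) * G) := by rw [hK]; ring
      _ ≤ σ * q * (9 * γ) := by gcongr
      _ = _ := by rw [← hσ2]; ring
  have t3 : 8 * γ ^ 2 * q * Ex π m (bad U w) ≤ 2 * σ ^ 3 * q := by
    calc 8 * γ ^ 2 * q * Ex π m (bad U w) ≤ 8 * γ ^ 2 * q * (9 * γ) := by gcongr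
      _ = (72 * σ * γ) * (σ ^ 3 * q) := by rw [← hσ2]; ring
      _ ≤ 2 * (σ ^ 3 * q) := by
        gcongr
        calc 72 * σ * γ ≤ 72 * (1 / 14) * (1 / 224) := by gcongr
          _ ≤ 2 := by norm_num
      _ = _ := by ring
  linarith

/-- The truncated second moment of `A⁻¹ Z` is the main term up to `O(γ^{3/2})`. -/
lemma abs_Ex_good_sub_le (h : WhiteData m U π w γ) {G : ℝ} (hG : 1 ≤ G)
    (hlev : ∀ i, U i ≠ 0 → 1 ≤ G * (U i ⬝ᵥ U i)) (hbad : Ex π m (bad U w) * G ≤ 9 * γ) :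
    |Ex π m (fun ω => (1 - bad U w ω) * nsq ((gramS U w ω)⁻¹ * crossS U w ω)) -
      mainTerm m U π| ≤ 2222 * Real.sqrt γ ^ 3 * nsq (perp U) := by
  have hπ : ∀ i, 0 ≤ π i := fun i => (h.pos i).le
  have hγ := h.γ_pos
  have hg := h.γ_le
  have hq := nsq_nonneg (perp U)
  have hB := h.Ex_bad_mul_nsq_crossS_le hG hlev hbad
  have hM := abs_le.1 h.abs_Ex_nsq_crossS_sub_le
  have hZ := h.Ex_nsq_crossS_le
  have hD := h.Ex_nsq_dev_mul_cross_le
  set q := nsq (perp U) with hqdef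
  set σ := Real.sqrt γ with hσ
  have hσ0 : 0 < σ := Real.sqrt_pos.2 hγ
  have hσ2 : σ ^ 2 = γ := Real.sq_sqrt hγ.le
  have hσ1 : σ ≤ 1 := by
    rw [hσ]; apply Real.sqrt_le_iff.2; constructor <;> norm_num; linarith
  set EZ := Ex π m (fun ω => nsq (crossS U w ω))
  set ED := Ex π m (fun ω => nsq ((gramS U w ω - 1) * crossS U w ω))
  set EB := Ex π m (fun ω => bad U w ω * nsq (crossS U w ω))
  have t1 : σ * EZ ≤ 5 * (σ ^ 3 * q) := by
    calc σ * EZ ≤ σ * (5 * γ * q) := by gcongr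
      _ = _ := by rw [← hσ2]; ring
  have t2 : 8 * σ⁻¹ * ED ≤ 2120 * (σ ^ 3 * q) := by
    calc 8 * σ⁻¹ * ED ≤ 8 * σ⁻¹ * (265 * γ ^ 2 * q) := by gcongr
      _ = _ := by rw [← hσ2]; field_simp; ring
  have t3 : 16 * γ ^ 2 * q ≤ 16 * (σ ^ 3 * q) := by
    calc 16 * γ ^ 2 * q = 16 * (σ * (σ ^ 3 * q)) := by rw [← hσ2]; ring
      _ ≤ 16 * (1 * (σ ^ 3 * q)) := by gcongr
      _ = _ := by ring
  have hup : ∀ ω : Fin m → Fin n,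
      (1 - bad U w ω) * nsq ((gramS U w ω)⁻¹ * crossS U w ω) ≤
        nsq (crossS U w ω) + (σ * nsq (crossS U w ω) +
          8 * σ⁻¹ * nsq ((gramS U w ω - 1) * crossS U w ω)) := by
    intro ω
    have n1 := nsq_nonneg (crossS U w ω)
    have n2 := nsq_nonneg ((gramS U w ω - 1) * crossS U w ω)
    unfold bad
    split_ifs with hgood
    · have := abs_le.1 (hgood.abs_nsq_inv_mul_sub_le hσ0 hσ1 (crossS U w ω))
      linarith
    · simp only [sub_self, zero_mul]; positivity
  have hlo : ∀ ω : Fin m → Fin n,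
      nsq (crossS U w ω) - ((σ * nsq (crossS U w ω) +
          8 * σ⁻¹ * nsq ((gramS U w ω - 1) * crossS U w ω)) +
            bad U w ω * nsq (crossS U w ω)) ≤
        (1 - bad U w ω) * nsq ((gramS U w ω)⁻¹ * crossS U w ω) := by
    intro ω
    have n1 := nsq_nonneg (crossS U w ω)
    have n2 := nsq_nonneg ((gramS U w ω - 1) * crossS U w ω)
    unfold bad
    split_ifs with hgood
    · have := abs_le.1 (hgood.abs_nsq_inv_mul_sub_le hσ0 hσ1 (crossS U w ω))
      linarith
    · have : 0 ≤ σ * nsq (crossS U w ω) +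
          8 * σ⁻¹ * nsq ((gramS U w ω - 1) * crossS U w ω) := by positivity
      linarith
  have hup' := Ex_mono hπ hup
  have hlo' := Ex_mono hπ hlo
  rw [Ex_add, Ex_add, Ex_const_mul, Ex_const_mul] at hup'
  rw [Ex_sub, Ex_add, Ex_add, Ex_const_mul, Ex_const_mul] at hlo'
  rw [abs_le]
  constructor <;> linarith

/-- Conditioning on the good event changes the truncated second moment only by a factor
`1 + O(γ)`. -/
lemma abs_cond_sub_le (h : WhiteData m U π w γ) {G : ℝ} (hG : 1 ≤ G)
    (hlev : ∀ i, U i ≠ 0 → 1 ≤ G * (U i ⬝ᵥ U i)) (hbad : Ex π m (bad U w) * G ≤ 9 * γ) :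
    |(1 - Ex π m (bad U w))⁻¹ *
        Ex π m (fun ω => (1 - bad U w ω) * nsq ((gramS U w ω)⁻¹ * crossS U w ω)) -
      mainTerm m U π| ≤ 5000 * Real.sqrt γ ^ 3 * nsq (perp U) := by
  have hπ : ∀ i, 0 ≤ π i := fun i => (h.pos i).le
  have hγ := h.γ_pos
  have hg := h.γ_le
  have hq := nsq_nonneg (perp U)
  have hE := h.abs_Ex_good_sub_le hG hlev hbad
  have hM0 := h.mainTerm_nonneg
  have hM1 := h.mainTerm_le
  have hbb : 0 ≤ Ex π m (bad U w) := Ex_nonneg hπ fun ω => bad_nonneg ω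
  have hbγ : Ex π m (bad U w) ≤ 9 * γ := (le_mul_of_one_le_right hbb hG).trans hbad
  set q := nsq (perp U) with hqdef
  set σ := Real.sqrt γ with hσ
  have hσ0 : 0 < σ := Real.sqrt_pos.2 hγ
  have hσ2 : σ ^ 2 = γ := Real.sq_sqrt hγ.le
  have hσ1 : σ ≤ 1 := by
    rw [hσ]; apply Real.sqrt_le_iff.2; constructor <;> norm_num; linarith
  set β := Ex π m (bad U w)
  set E := Ex π m (fun ω => (1 - bad U w ω) * nsq ((gramS U w ω)⁻¹ * crossS U w ω))
  set M := mainTerm m U π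
  have hβ : 1 / 2 ≤ 1 - β := by linarith
  have h1β : 0 < 1 - β := by linarith
  have hinv : (1 - β)⁻¹ ≤ 2 := by
    rw [inv_le_comm₀ h1β (by norm_num)]; linarith
  have e : (1 - β)⁻¹ * E - M = (1 - β)⁻¹ * ((E - M) + β * M) := by field_simp; ring
  rw [e, abs_mul, abs_of_pos (inv_pos.2 h1β)]
  have hbM : β * M ≤ 18 * (σ ^ 3 * q) := by
    calc β * M ≤ 9 * γ * (2 * γ * q) := by gcongr
      _ = 18 * (σ * (σ ^ 3 * q)) := by rw [← hσ2]; ring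
      _ ≤ 18 * (1 * (σ ^ 3 * q)) := by gcongr
      _ = _ := by ring
  have hnum : |(E - M) + β * M| ≤ 2240 * (σ ^ 3 * q) := by
    refine (abs_add_le _ _).trans ?_
    rw [abs_of_nonneg (mul_nonneg hbb hM0)]
    linarith
  calc (1 - β)⁻¹ * |(E - M) + β * M| ≤ 2 * (2240 * (σ ^ 3 * q)) := by gcongr
    _ ≤ 5000 * σ ^ 3 * q := by nlinarith [show 0 ≤ σ ^ 3 * q by positivity]

end WhiteData

/-! ### Whitening: reduction to orthonormal columns -/

section Whitening

variable {n p m b : ℕ} {X U : Matrix (Fin n) (Fin p) ℝ} {B : Matrix (Fin p) (Fin p) ℝ}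
  {π : Fin n → ℝ}

lemma exists_whitening (hX : IsUnit (Xᵀ * X).det) :
    ∃ (U : Matrix (Fin n) (Fin p) ℝ) (B : Matrix (Fin p) (Fin p) ℝ),
      IsUnit B.det ∧ Uᵀ * U = 1 ∧ X = U * B := by
  have hR : (Xᵀ * X).PosSemidef := by
    simpa using Matrix.posSemidef_conjTranspose_mul_self X
  obtain ⟨r, V, hr, hVV, hV⟩ := exists_spectral hR
  set B : Matrix (Fin p) (Fin p) ℝ := Matrix.diagonal (fun i => Real.sqrt (r i)) * Vᵀ with hB
  have hBB : Bᵀ * B = Xᵀ * X := by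
    have h1 := hV 1
    rw [pow_one] at h1
    rw [h1, hB, Matrix.transpose_mul, Matrix.transpose_transpose, Matrix.diagonal_transpose,
      Matrix.mul_assoc, ← Matrix.mul_assoc (Matrix.diagonal _), Matrix.diagonal_mul_diagonal,
      ← Matrix.mul_assoc]
    simp only [pow_one, Real.mul_self_sqrt (hr _)]
  have hBu : IsUnit B.det := by
    rw [← hBB, Matrix.det_mul] at hX
    exact isUnit_of_mul_isUnit_right hX
  refine ⟨X * B⁻¹, B, hBu, ?_, by rw [Matrix.nonsing_inv_mul_cancel_right _ _ hBu]⟩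
  rw [Matrix.transpose_mul, Matrix.mul_assoc, ← Matrix.mul_assoc Xᵀ, ← hBB, Matrix.mul_assoc,
    Matrix.mul_nonsing_inv _ hBu, Matrix.mul_one, ← Matrix.transpose_mul,
    Matrix.mul_nonsing_inv _ hBu, Matrix.transpose_one]

/-- The change of basis `B` cancels from any sandwiched inverse. -/
lemma mul_conj_inv_mul (hB : IsUnit B.det) (A : Matrix (Fin p) (Fin p) ℝ) :
    B * (Bᵀ * A * B)⁻¹ * Bᵀ = A⁻¹ := by
  have hBt : IsUnit Bᵀ.det := by rwa [Matrix.det_transpose]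
  rw [Matrix.mul_inv_rev, Matrix.mul_inv_rev, Matrix.mul_nonsing_inv_cancel_left _ _ hB,
    Matrix.nonsing_inv_mul_cancel_right _ _ hBt]

lemma projX_eq (hB : IsUnit B.det) (hU : Uᵀ * U = 1) : projX (U * B) = U * Uᵀ := by
  have e : (U * B)ᵀ * (U * B) = Bᵀ * 1 * B := by
    rw [Matrix.transpose_mul, Matrix.mul_one, Matrix.mul_assoc, ← Matrix.mul_assoc Uᵀ, hU,
      Matrix.one_mul]
  have h := mul_conj_inv_mul hB (1 : Matrix (Fin p) (Fin p) ℝ)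
  rw [inv_one] at h
  rw [projX, e, Matrix.transpose_mul]
  calc U * B * (Bᵀ * 1 * B)⁻¹ * (Bᵀ * Uᵀ) = U * (B * (Bᵀ * 1 * B)⁻¹ * Bᵀ) * Uᵀ := by
        simp only [Matrix.mul_assoc]
    _ = _ := by rw [h, Matrix.mul_one]

lemma lev_eq (hB : IsUnit B.det) (hU : Uᵀ * U = 1) (i : Fin n) :
    lev (U * B) i = U i ⬝ᵥ U i := by
  have e : lev (U * B) i = projX (U * B) i i := by
    rw [projX, lev, Matrix.dotProduct_mulVec, Matrix.mul_apply]
    simp [dotProduct, Matrix.vecMul, Matrix.mul_apply]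
  rw [e, projX_eq hB hU, Matrix.mul_apply]
  rfl

/-- The debiased sampling matrix picks row `ω s` and scales it by `1 / √(m π - ℓ)`. -/
lemma samplingSdeb_gram (hm : (0 : ℝ) < m) (hπ : ∀ i, 0 < π i) (hl : ∀ i, lev X i < m * π i)
    (ω : Fin m → Fin n) {a : ℕ} (Y : Matrix (Fin n) (Fin a) ℝ) (Y' : Matrix (Fin n) (Fin b) ℝ) :
    (samplingSdeb X π ω * Y)ᵀ * (samplingSdeb X π ω * Y') =
      ∑ s, (m * π (ω s) - lev X (ω s))⁻¹ • Matrix.vecMulVec (Y (ω s)) (Y' (ω s)) := by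
  set g : Fin n → ℝ := fun i =>
    1 / Real.sqrt (1 - lev X i / (m * π i)) * (1 / Real.sqrt (m * π i)) with hg
  have hrow : ∀ {c : ℕ} (Y : Matrix (Fin n) (Fin c) ℝ) (s : Fin m) (j : Fin c),
      (samplingSdeb X π ω * Y) s j = g (ω s) * Y (ω s) j := by
    intro c Y s j
    rw [Matrix.mul_apply, Finset.sum_eq_single (ω s)]
    · simp [samplingSdeb, samplingS, Matrix.diagonal_mul, hg]
    · intro k _ hk
      simp [samplingSdeb, samplingS, Matrix.diagonal_mul, hk]
    · simp
  have hgg : ∀ i, g i * g i = (m * π i - lev X i)⁻¹ := by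
    intro i
    have h1 : 0 < m * π i := mul_pos hm (hπ i)
    have h2 : 0 < 1 - lev X i / (m * π i) := by
      rw [sub_pos, div_lt_one h1]; exact hl i
    have e : g i * g i = (Real.sqrt (1 - lev X i / (m * π i)) *
        Real.sqrt (1 - lev X i / (m * π i)))⁻¹ *
        (Real.sqrt (m * π i) * Real.sqrt (m * π i))⁻¹ := by
      simp only [hg, one_div, mul_inv]; ring
    rw [e, Real.mul_self_sqrt h2.le, Real.mul_self_sqrt h1.le, ← mul_inv, sub_mul, one_mul,
      div_mul_cancel₀ _ h1.ne']
  ext x y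
  simp only [Matrix.sum_apply, Matrix.smul_apply, Matrix.vecMulVec_apply, smul_eq_mul]
  rw [Matrix.mul_apply]
  refine Finset.sum_congr rfl fun s _ => ?_
  rw [Matrix.transpose_apply, hrow, hrow, ← hgg]
  ring

lemma trace_perp_mul_diagonal (hU : Uᵀ * U = 1) (c : Fin n → ℝ) :
    (perp U * Matrix.diagonal c).trace = ∑ i, c i * (perp U i ⬝ᵥ perp U i) := by
  have h1 : perp U * (perp U)ᵀ = perp U := by
    have e : (perp U)ᵀ = perp U := by simp [perp, Matrix.transpose_mul]
    rw [e]
    simp only [perp, Matrix.mul_sub, Matrix.sub_mul, Matrix.mul_one, Matrix.one_mul]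
    rw [Matrix.mul_assoc U Uᵀ, ← Matrix.mul_assoc Uᵀ, hU, Matrix.one_mul]
    simp
  simp only [Matrix.trace, Matrix.diag, Matrix.mul_diagonal]
  refine Finset.sum_congr rfl fun i _ => ?_
  have h2 : perp U i i = perp U i ⬝ᵥ perp U i := by
    conv_lhs => rw [← h1, Matrix.mul_apply]
    rfl
  rw [h2, mul_comm]

lemma sum_lev (hU : Uᵀ * U = 1) : ∑ i, U i ⬝ᵥ U i = p := by
  rw [← nsq_eq_sum_rows, nsq_eq_trace, hU, Matrix.trace_one, Fintype.card_fin]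

end Whitening

namespace WhiteData

variable {n p m : ℕ} {U : Matrix (Fin n) (Fin p) ℝ} {B : Matrix (Fin p) (Fin p) ℝ}
  {π w : Fin n → ℝ} {γ : ℝ}

lemma sketched_gram_eq (h : WhiteData m U π w γ) (hB : IsUnit B.det)
    (hl : ∀ i, lev (U * B) i < m * π i) (hw : ∀ i, w i = (m * π i - U i ⬝ᵥ U i)⁻¹)
    (ω : Fin m → Fin n) :
    (samplingSdeb (U * B) π ω * (U * B))ᵀ * (samplingSdeb (U * B) π ω * (U * B)) =
      Bᵀ * gramS U w ω * B := by
  have h1 := samplingSdeb_gram h.m_pos h.pos hl ω U U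
  simp only [lev_eq hB h.orth, ← hw] at h1
  have e : gramS U w ω = _ := h1.symm
  rw [e, ← Matrix.mul_assoc (samplingSdeb (U * B) π ω) U B, Matrix.transpose_mul _ B]
  simp only [Matrix.mul_assoc]

/-- On the good event the projection error is `U A⁻¹ Z`, because `Uᵀ D - A Uᵀ = Z`. -/
lemma frobNorm_projDeb_sub (h : WhiteData m U π w γ) (hB : IsUnit B.det)
    (hl : ∀ i, lev (U * B) i < m * π i) (hw : ∀ i, w i = (m * π i - U i ⬝ᵥ U i)⁻¹)
    {ω : Fin m → Fin n} (hg : Good (gramS U w ω)) :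
    frobNorm (projDeb (U * B) π ω - projX (U * B)) ^ 2 =
      nsq ((gramS U w ω)⁻¹ * crossS U w ω) := by
  set S := samplingSdeb (U * B) π ω with hS
  set A := gramS U w ω with hA
  have h1 : (S * U)ᵀ * (S * U) = A := by
    have := samplingSdeb_gram h.m_pos h.pos hl ω U U
    simp only [lev_eq hB h.orth, ← hw] at this
    exact this
  have h2 : (S * U)ᵀ * (S * perp U) = crossS U w ω := by
    have := samplingSdeb_gram h.m_pos h.pos hl ω U (perp U)
    simp only [lev_eq hB h.orth, ← hw] at this
    exact this
  have h3 : crossS U w ω = (S * U)ᵀ * S - A * Uᵀ := by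
    rw [← h2, ← h1, perp, Matrix.mul_sub, Matrix.mul_sub, Matrix.mul_one]
    simp only [Matrix.mul_assoc]
  have h4 : projDeb (U * B) π ω = U * (A⁻¹ * ((S * U)ᵀ * S)) := by
    have e := mul_conj_inv_mul hB A
    rw [projDeb, ← hS, hS, h.sketched_gram_eq hB hl hw, ← hS, ← hA, ← Matrix.mul_assoc S U B,
      Matrix.transpose_mul (S * U) B, ← e]
    simp only [Matrix.mul_assoc]
  rw [frobNorm_sq, h4, projX_eq hB h.orth, ← Matrix.mul_sub, nsq_isometry_mul h.orth, h3,
    Matrix.mul_sub, Matrix.nonsing_inv_mul_cancel_left _ _ hg.isUnit_det]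

lemma sum_good (F : (Fin m → Fin n) → ℝ) :
    (open Classical in ∑ ω ∈ Finset.univ.filter (fun ω : Fin m → Fin n => Good (gramS U w ω)),
      samplingP π ω * F ω) = Ex π m (fun ω => (1 - bad U w ω) * F ω) := by
  classical
  rw [Finset.sum_filter, Ex]
  refine Finset.sum_congr rfl fun ω _ => ?_
  unfold bad
  split_ifs <;> simp

end WhiteData

lemma one_le_log_ratio {n : ℕ} (hn : 3 ≤ n) :
    1 ≤ Real.log n / Real.log (Real.log n) := by
  have hn3 : (3 : ℝ) ≤ n := by exact_mod_cast hn
  have h1 : 1 < Real.log n := by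
    rw [Real.lt_log_iff_exp_lt (by linarith)]
    linarith [Real.exp_one_lt_d9]
  have h2 : 0 < Real.log (Real.log n) := Real.log_pos h1
  rw [one_le_div h2]
  linarith [Real.log_le_sub_one_of_pos (by linarith : 0 < Real.log n)]

/-! ### Choice of constants and conclusion -/

/-- **Second moment of the debiased oblique projection** (Theorem 3.2, second
moment): there are absolute constants `C, C' > 0` such that, under the
row-norm condition with exponent `α`, for `0 < δ ≤ n^{−(3+α)}` and
`m ≥ C θ_max(X) p log(p/δ)`, there is an event `ζ` of probability at least
`1 − δ` on which the debiased sketched Gram matrices are invertible and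
`|E_ζ[‖P̌ − P‖_F²] − trace(P⊥ diag(ℓ_i(X)/(m π_i)))| ≤ ε ‖P⊥‖_F²` with
`ε = C' (log n/log log n) √(θ_max(X)³ p³/m³)`. -/
theorem debiased_oblique_projection_second_moment :
    ∃ C C' : ℝ, 0 < C ∧ 0 < C' ∧
      ∀ (n p m : ℕ) (X : Matrix (Fin n) (Fin p) ℝ) (π : Fin n → ℝ) (α : ℝ),
        1 ≤ p → p ≤ n → 3 ≤ n →
        IsUnit (Xᵀ * X).det →
        0 < α →
        (∀ i, X i ≠ 0 → (n : ℝ) ^ (-α) ≤ (X i ⬝ᵥ X i) / frobNorm X ^ 2) →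
        (∀ i, 0 < π i) → (∑ i, π i = 1) →
        (∀ i, lev X i < m * π i) →
        ∀ δ : ℝ, 0 < δ → δ ≤ (n : ℝ) ^ (-(3 + α)) →
        C * thetaMax X π * p * Real.log (p / δ) ≤ m →
        ∃ ζ : Finset (Fin m → Fin n),
          1 - δ ≤ eventProb (samplingP π) ζ ∧
          (∀ ω ∈ ζ,
            IsUnit ((samplingSdeb X π ω * X)ᵀ * (samplingSdeb X π ω * X)).det) ∧
          |condExp (samplingP π) ζ
              (fun ω => frobNorm (projDeb X π ω - projX X) ^ 2) -
            ((1 - projX X) *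
                Matrix.diagonal (fun i => lev X i / (m * π i))).trace|
            ≤ (C' * (Real.log n / Real.log (Real.log n)) *
                Real.sqrt (thetaMax X π ^ 3 * p ^ 3 / m ^ 3)) *
              frobNorm (1 - projX X) ^ 2 := by
  refine ⟨224, 5000, by norm_num, by norm_num, ?_⟩
  intro n p m X π α hp _ hn hX hα hrow hπ hπ1 hl δ hδ hδn hm
  obtain ⟨U, B, hB, hU, rfl⟩ := exists_whitening hX
  have hn3 : (3 : ℝ) ≤ n := by exact_mod_cast hn
  have hn0 : (0 : ℝ) < n := by linarith
  have hp1 : (1 : ℝ) ≤ p := by exact_mod_cast hp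
  have hlev := lev_eq hB hU
  set θ := thetaMax (U * B) π with hθ
  have hm0 : (0 : ℝ) < m := by
    have h1 := hl ⟨0, by omega⟩
    rw [hlev] at h1
    exact pos_of_mul_pos_left (lt_of_le_of_lt (dot_self_nonneg _) h1) (hπ _).le
  have hθi : ∀ i, U i ⬝ᵥ U i ≤ θ * p * π i := by
    intro i
    have h1 : lev (U * B) i / (p * π i) ≤ θ :=
      le_ciSup (f := fun i => lev (U * B) i / (p * π i)) (Set.finite_range _).bddAbove i
    rw [hlev, div_le_iff₀ (mul_pos (by linarith) (hπ i))] at h1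
    linarith
  have hθp : 1 ≤ θ * p := by
    have h1 := Finset.sum_le_sum fun i (_ : i ∈ Finset.univ) => hθi i
    rw [sum_lev hU, ← Finset.mul_sum, hπ1, mul_one] at h1
    linarith
  set γ := θ * p / m with hγ
  have hγm : γ * m = θ * p := by rw [hγ]; field_simp
  have hγ0 : 0 < γ := div_pos (by linarith) hm0
  set G := (n : ℝ) ^ α with hG
  have hG1 : 1 ≤ G := Real.one_le_rpow (by linarith) hα.le
  have hδG : δ * G ≤ 1 / 27 := by
    calc δ * G ≤ (n : ℝ) ^ (-(3 + α)) * G := by gcongr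
      _ = (n : ℝ) ^ (-3 : ℝ) := by rw [hG, ← Real.rpow_add hn0]; congr 1; ring
      _ ≤ (3 : ℝ) ^ (-3 : ℝ) := Real.rpow_le_rpow_of_nonpos (by norm_num) hn3 (by norm_num)
      _ = 1 / 27 := by
        rw [Real.rpow_neg (by norm_num)]; norm_num
  have hδ27 : δ ≤ 1 / 27 := (le_mul_of_one_le_right hδ.le hG1).trans hδG
  have hlog : 1 ≤ Real.log (p / δ) := by
    rw [Real.le_log_iff_exp_le (by positivity), le_div_iff₀ hδ]
    calc Real.exp 1 * δ ≤ 3 * (1 / 27) := by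
          gcongr; linarith [Real.exp_one_lt_d9]
      _ ≤ p := by linarith
  have hγL : γ * (224 * Real.log (p / δ)) ≤ 1 := by
    have e : γ * (224 * Real.log (p / δ)) = 224 * θ * p * Real.log (p / δ) / m := by
      rw [hγ]; ring
    rw [e, div_le_one hm0]; exact hm
  have hγ224 : γ ≤ 1 / 224 := by
    have : γ * (224 * 1) ≤ γ * (224 * Real.log (p / δ)) := by gcongr
    linarith
  set w : Fin n → ℝ := fun i => (m * π i - U i ⬝ᵥ U i)⁻¹ with hw
  have hd : ∀ i, 0 < m * π i - U i ⬝ᵥ U i := fun i => by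
    have := hl i; rw [hlev] at this; linarith
  have h : WhiteData m U π w γ :=
    { orth := hU
      pos := hπ
      sum_one := hπ1
      w_pos := fun i => inv_pos.2 (hd i)
      w_eq := fun i => by
        have := (hd i).ne'
        simp only [hw]; field_simp; ring
      w_le := fun i => by
        have h1 : U i ⬝ᵥ U i ≤ γ * (m * π i) := by rw [← mul_assoc, hγm]; exact hθi i
        have h2 : 0 < m * π i := mul_pos hm0 (hπ i)
        simp only [hw]
        rw [inv_mul_le_iff₀ (hd i)]
        have h3 : U i ⬝ᵥ U i ≤ m * π i / 2 := by nlinarith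
        have h4 : γ * (U i ⬝ᵥ U i) ≤ γ * (m * π i / 2) := by gcongr
        linarith
      γ_le := hγ224
      one_le := by rw [hγm]; exact hθp }
  -- The row-norm condition passes to leverage scores because `‖X_i‖² ≤ ‖U_i‖² ‖B‖²` and
  -- `‖X‖ = ‖B‖` in Frobenius norm.
  have hlevG : ∀ i, U i ≠ 0 → 1 ≤ G * (U i ⬝ᵥ U i) := by
    intro i hi
    have hXi : (U * B) i = U i ᵥ* B := Matrix.mul_apply_eq_vecMul _ _ _
    have h0 : (U * B) i ≠ 0 := by
      intro h0
      rw [hXi] at h0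
      apply hi
      have := congrArg (fun v => v ᵥ* B⁻¹) h0
      simpa [Matrix.vecMul_vecMul, Matrix.mul_nonsing_inv _ hB] using this
    have h1 := hrow i h0
    rw [frobNorm_sq, nsq_isometry_mul hU, hXi] at h1
    have h2 : (n : ℝ) ^ (-α) ≤ U i ⬝ᵥ U i :=
      h1.trans (div_le_of_le_mul₀ (nsq_nonneg _) (dot_self_nonneg _) (vecMul_dot_le _ _))
    calc (1 : ℝ) = G * (n : ℝ) ^ (-α) := by
          rw [hG, ← Real.rpow_add hn0, add_neg_cancel, Real.rpow_zero]
      _ ≤ _ := by gcongr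
  obtain ⟨hβ1, hβ2⟩ := h.Ex_bad_le hp hδ hγL
  have hbad : Ex π m (WhiteData.bad U w) * G ≤ 9 * γ := by
    calc Ex π m (WhiteData.bad U w) * G ≤ δ * (224 * γ) * G := by gcongr
      _ = 224 * γ * (δ * G) := by ring
      _ ≤ 224 * γ * (1 / 27) := by gcongr
      _ ≤ 9 * γ := by linarith
  classical
  have hP : eventProb (samplingP π)
      (Finset.univ.filter (fun ω : Fin m → Fin n => Good (WhiteData.gramS U w ω))) =
      1 - Ex π m (WhiteData.bad U w) := by
    have h1 := WhiteData.sum_good (U := U) (w := w) (π := π) (m := m) (fun _ => 1)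
    simp only [mul_one] at h1
    rw [eventProb]
    convert h1 using 1
    rw [Ex_sub, Ex_const hπ1]
  refine ⟨Finset.univ.filter (fun ω : Fin m → Fin n => Good (WhiteData.gramS U w ω)),
    by rw [hP]; linarith, ?_, ?_⟩
  · intro ω hω
    rw [h.sketched_gram_eq hB hl (fun _ => rfl), Matrix.det_mul, Matrix.det_mul,
      Matrix.det_transpose]
    exact (hB.mul (Finset.mem_filter.1 hω).2.isUnit_det).mul hB
  · have hc : condExp (samplingP π)
        (Finset.univ.filter (fun ω : Fin m → Fin n => Good (WhiteData.gramS U w ω)))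
        (fun ω => frobNorm (projDeb (U * B) π ω - projX (U * B)) ^ 2) =
        (1 - Ex π m (WhiteData.bad U w))⁻¹ * Ex π m (fun ω => (1 - WhiteData.bad U w ω) *
          nsq ((WhiteData.gramS U w ω)⁻¹ * WhiteData.crossS U w ω)) := by
      rw [condExp, hP, smul_eq_mul, ← WhiteData.sum_good]
      congr 1
      have h1 : ∀ ω ∈ Finset.univ.filter
          (fun ω : Fin m → Fin n => Good (WhiteData.gramS U w ω)),
          samplingP π ω • frobNorm (projDeb (U * B) π ω - projX (U * B)) ^ 2 =
          samplingP π ω * nsq ((WhiteData.gramS U w ω)⁻¹ * WhiteData.crossS U w ω) := by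
        intro ω hω
        rw [smul_eq_mul, h.frobNorm_projDeb_sub hB hl (fun _ => rfl) (Finset.mem_filter.1 hω).2]
      convert Finset.sum_congr rfl h1 using 1
    have hperp : 1 - projX (U * B) = perp U := by rw [projX_eq hB hU, perp]
    have ht : (perp U * Matrix.diagonal (fun i => lev (U * B) i / (m * π i))).trace =
        WhiteData.mainTerm m U π := by
      rw [trace_perp_mul_diagonal hU, WhiteData.mainTerm]
      simp only [hlev]
    have hsq : Real.sqrt (θ ^ 3 * p ^ 3 / m ^ 3) = Real.sqrt γ ^ 3 := by
      have e : θ ^ 3 * (p : ℝ) ^ 3 / (m : ℝ) ^ 3 = (Real.sqrt γ ^ 3) ^ 2 := by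
        rw [← pow_mul, mul_comm 3 2, pow_mul, Real.sq_sqrt hγ0.le, hγ]; ring
      rw [e, Real.sqrt_sq (by positivity)]
    rw [hc, hperp, ht, hsq, frobNorm_sq]
    refine (h.abs_cond_sub_le hG1 hlevG hbad).trans ?_
    refine mul_le_mul_of_nonneg_right ?_ (nsq_nonneg _)
    refine mul_le_mul_of_nonneg_right ?_ (by positivity)
    linarith [one_le_log_ratio hn]

end
end

section
/- Bias lower bound for subsampled OLS (Theorem 4.2): There exists an absolute constant c₀ > 0 such that for every integer k ≥ 1, setting p = 4k, and for every n ≥ 2p, there exist X ∈ ℝ^{n×p} with Xᵀ X invertible, y ∈ ℝⁿ, and a sampling distribution π satisfying ℓ_i(X)/(2p) ≤ π i ≤ 2 ℓ_i(X)/p for every i (a 1/2-approximation of exact leverage score sampling), such that for every m ≥ p there is an event ζ ⊆ Ω with P(ζ) ≥ 1 − p·(1 − 1/p)^m on which (S(ω) X)ᵀ S(ω) X is invertible, and for every real number γ one has L(γ · E_ζ[β̃]) − L(β_OLS) ≥ c₀ · (p²/m²) · ‖r‖², where r = y − X β_OLS. -/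
/-!
The design is orthogonal: rows `j` and `p + j` of `X` both equal the unit vector `e_j` (the block
of `j`), and all remaining rows vanish. Every nonzero row has leverage `1/2`, and the rows of each
block are sampled with probabilities `1/(3p)` and `2/(3p)`. The sketched Gram matrix is then
diagonal, invertible as soon as every block is hit (`evt`), and a union bound gives the
probability of that event.

With `p = 2K`, the response is `1` on both rows of `K` of the blocks and `0`, `2` on the two rows
of the other `K` blocks. The least-squares solution is the all-ones vector, and `‖r‖² = 2K`. The
estimator is exact on the blocks of the first kind. On a block of the second kind its error is
`-3D/(4N + D)`, where `N` is the number of hits of the block (`hits`) and `D` the sum of a variable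
with values `2`, `-1` over these hits (`dev`). Conditionally on the block pattern `D` has mean `0`
and variance `2N` (`sum_dev`, `sum_dev_sq`), so that the quadratic lower bound `bias_pointwise`
for the error yields a conditional bias of at least `1/(4N)`. The `K` blocks share at most `m`
draws, so the harmonic-mean inequality bounds the sum of the `K` biases below by `K²/(4m)`
(`sum_bias_ge`), and by Cauchy-Schwarz the sum of their squares is at least `K³/(16m²)`.

A scalar `γ` cannot remove this bias: pairing each biased block with an unbiased one, the squared
error of a pair is at least `b²/5`, where `b` is the bias (`rescale_pair`). The excess loss is
therefore at least `K³/(40m²)`, which is `(1/320) (p²/m²) ‖r‖²`.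
-/

open Matrix Finset

noncomputable section

/-- Least-squares loss `L(β) = ‖y − X β‖²`. -/
def lossL {n p : ℕ} (X : Matrix (Fin n) (Fin p) ℝ) (y : Fin n → ℝ)
    (β : Fin p → ℝ) : ℝ :=
  (y - X *ᵥ β) ⬝ᵥ (y - X *ᵥ β)

/-- OLS solution `β_OLS = (Xᵀ X)⁻¹ Xᵀ y`. -/
def olsSol {n p : ℕ} (X : Matrix (Fin n) (Fin p) ℝ) (y : Fin n → ℝ) : Fin p → ℝ :=
  (Xᵀ * X)⁻¹ *ᵥ (Xᵀ *ᵥ y)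

/-- OLS residual `r = y − X β_OLS`. -/
def olsResid {n p : ℕ} (X : Matrix (Fin n) (Fin p) ℝ) (y : Fin n → ℝ) : Fin n → ℝ :=
  y - X *ᵥ olsSol X y

/-- Subsampled OLS estimator `β̃(ω) = ((S(ω) X)ᵀ S(ω) X)⁻¹ (S(ω) X)ᵀ S(ω) y`. -/
def betaTilde {n p : ℕ} (X : Matrix (Fin n) (Fin p) ℝ) (y : Fin n → ℝ)
    (π : Fin n → ℝ) {m : ℕ} (ω : Fin m → Fin n) : Fin p → ℝ :=
  ((samplingS π ω * X)ᵀ * (samplingS π ω * X))⁻¹ *ᵥ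
    ((samplingS π ω * X)ᵀ *ᵥ (samplingS π ω *ᵥ y))

/-- `Δ(X) = rᵀ diag(ℓ_i(X)/(m π_i)) r`. -/
def deltaOLS {n p : ℕ} (X : Matrix (Fin n) (Fin p) ℝ) (y : Fin n → ℝ)
    (π : Fin n → ℝ) (m : ℕ) : ℝ :=
  olsResid X y ⬝ᵥ
    (Matrix.diagonal (fun i => lev X i / (m * π i)) *ᵥ olsResid X y)


/-- The block of the row `i`: row `i` of the design is supported on column `i % p`. -/
def blk {p n : ℕ} (hp : 0 < p) (i : Fin n) : Fin p := ⟨i.val % p, Nat.mod_lt _ hp⟩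

/-- Sampling distribution: mass `1/(3p)` on the rows `i < p`, `2/(3p)` on the rows
`p ≤ i < 2p`, and none on the (zero) rows `2p ≤ i`. -/
def wt (p : ℕ) {n : ℕ} (i : Fin n) : ℝ :=
  if i.val < p then 1 / (3 * p) else if i.val < 2 * p then 2 / (3 * p) else 0

/-- Design matrix: row `i` is the unit vector of its block if `i < 2p`, and zero otherwise. -/
def dsn {p : ℕ} (n : ℕ) (hp : 0 < p) : Matrix (Fin n) (Fin p) ℝ :=
  Matrix.of fun i j => if blk hp i = j then (if i.val < 2 * p then 1 else 0) else 0

/-- Response: `0` and `2` on the two rows of a block `j < K`, and `1` on both rows of the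
other blocks. -/
def resp (K : ℕ) {p n : ℕ} (hp : 0 < p) (i : Fin n) : ℝ :=
  if i.val < 2 * p then
    (if (blk hp i).val < K then (if i.val < p then 0 else 2) else 1) else 0

/-- The centred variable with values `2` and `-1` on the two rows of each block: conditionally on
the block it has mean `0` and variance `2`. -/
def dvt (p : ℕ) {n : ℕ} (i : Fin n) : ℝ :=
  if i.val < p then 2 else if i.val < 2 * p then -1 else 0

/-- Number of draws that fall in block `j`. -/
def hits {p n m : ℕ} (hp : 0 < p) (ω : Fin m → Fin n) (j : Fin p) : ℝ :=
  ∑ s, if blk hp (ω s) = j then 1 else 0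

/-- Sum of the centred variable `dvt` over the draws in block `j`. -/
def dev {p n m : ℕ} (hp : 0 < p) (ω : Fin m → Fin n) (j : Fin p) : ℝ :=
  ∑ s, if blk hp (ω s) = j then dvt p (ω s) else 0

open Classical in
/-- The event that only nonzero rows are drawn, and every block is drawn at least once. -/
def evt {p : ℕ} (n m : ℕ) (hp : 0 < p) : Finset (Fin m → Fin n) :=
  Finset.univ.filter fun ω =>
    (∀ s, (ω s).val < 2 * p) ∧ Function.Surjective (blk hp ∘ ω)

/-! ### Sums over rows -/

lemma sum_blk {p n : ℕ} (hp : 0 < p) (h : 2 * p ≤ n) (F : Fin n → ℝ)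
    (hF : ∀ i : Fin n, 2 * p ≤ i.val → F i = 0) (j : Fin p) :
    (∑ i, if blk hp i = j then F i else 0)
      = F ⟨j.val, by omega⟩ + F ⟨p + j.val, by omega⟩ := by
  have hne : (⟨j.val, by omega⟩ : Fin n) ≠ ⟨p + j.val, by omega⟩ := by
    simp only [ne_eq, Fin.mk.injEq]; omega
  have h1 : blk hp (⟨j.val, by omega⟩ : Fin n) = j := by
    ext; simp [blk, Nat.mod_eq_of_lt j.2]
  have h2 : blk hp (⟨p + j.val, by omega⟩ : Fin n) = j := by
    ext; simp [blk, Nat.mod_eq_of_lt j.2]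
  rw [← Finset.sum_subset (Finset.subset_univ
    {(⟨j.val, by omega⟩ : Fin n), (⟨p + j.val, by omega⟩ : Fin n)})]
  · rw [Finset.sum_pair hne, if_pos h1, if_pos h2]
  · intro i _ hi
    simp only [Finset.mem_insert, Finset.mem_singleton, not_or, Fin.ext_iff] at hi
    split_ifs with hb
    · apply hF
      by_contra hlt
      have hb' : i.val % p = j.val := congrArg Fin.val hb
      rcases lt_or_ge i.val p with hc | hc
      · rw [Nat.mod_eq_of_lt hc] at hb'; exact hi.1 hb'
      · rw [Nat.mod_eq_sub_mod hc, Nat.mod_eq_of_lt (by omega)] at hb'; omega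
    · rfl

lemma sum_rows {p n : ℕ} (hp : 0 < p) (h : 2 * p ≤ n) (F : Fin n → ℝ)
    (hF : ∀ i : Fin n, 2 * p ≤ i.val → F i = 0) :
    ∑ i, F i = ∑ j : Fin p, (F ⟨j.val, by omega⟩ + F ⟨p + j.val, by omega⟩) := by
  have : ∀ i, F i = ∑ j : Fin p, if blk hp i = j then F i else 0 := fun i => by simp
  rw [Finset.sum_congr rfl fun i _ => this i, Finset.sum_comm]
  exact Finset.sum_congr rfl fun j _ => sum_blk hp h F hF j

lemma wt_nonneg (p : ℕ) {n : ℕ} (i : Fin n) : 0 ≤ wt p i := by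
  unfold wt; split_ifs <;> positivity

lemma wt_dead {p n : ℕ} (i : Fin n) (hi : 2 * p ≤ i.val) : wt p i = 0 := by
  unfold wt; rw [if_neg (by omega), if_neg (by omega)]

lemma wt_pos {p n : ℕ} (hp : 0 < p) (i : Fin n) (hi : i.val < 2 * p) : 0 < wt p i := by
  have : (0 : ℝ) < p := by exact_mod_cast hp
  unfold wt; split_ifs <;> positivity

lemma wt_blk {p n : ℕ} (hp : 0 < p) (h : 2 * p ≤ n) (j : Fin p) :
    (∑ i : Fin n, if blk hp i = j then wt p i else 0) = 1 / p := by
  have : (0 : ℝ) < p := by exact_mod_cast hp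
  rw [sum_blk hp h _ (fun i hi => wt_dead i hi)]
  simp [wt]
  rw [if_pos (by omega)]
  field_simp; norm_num

lemma wt_sum {p n : ℕ} (hp : 0 < p) (h : 2 * p ≤ n) : ∑ i : Fin n, wt p i = 1 := by
  have : (0 : ℝ) < p := by exact_mod_cast hp
  have e : ∀ i : Fin n, wt p i = ∑ j : Fin p, if blk hp i = j then wt p i else 0 :=
    fun i => by simp
  rw [Finset.sum_congr rfl fun i _ => e i, Finset.sum_comm,
    Finset.sum_congr rfl fun j _ => wt_blk hp h j]
  simp [this.ne']

lemma wt_dvt_blk {p n : ℕ} (hp : 0 < p) (h : 2 * p ≤ n) (l : Fin p) :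
    (∑ i : Fin n, if blk hp i = l then wt p i * dvt p i else 0) = 0 := by
  have : (0 : ℝ) < p := by exact_mod_cast hp
  rw [sum_blk hp h _ (fun i hi => by rw [wt_dead i hi, zero_mul])]
  have : p + l.val < 2 * p := by omega
  simp [wt, dvt, this]
  field_simp; norm_num

lemma wt_dvt_sq_blk {p n : ℕ} (hp : 0 < p) (h : 2 * p ≤ n) (l : Fin p) :
    (∑ i : Fin n, if blk hp i = l then wt p i * (dvt p i ^ 2 - 2) else 0) = 0 := by
  have : (0 : ℝ) < p := by exact_mod_cast hp
  rw [sum_blk hp h _ (fun i hi => by rw [wt_dead i hi, zero_mul])]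
  have : p + l.val < 2 * p := by omega
  simp [wt, dvt, this]
  field_simp; norm_num

/-! ### The least-squares problem -/

lemma dsn_gram {p n : ℕ} (hp : 0 < p) (h : 2 * p ≤ n) :
    ((dsn n hp)ᵀ * dsn n hp) = Matrix.diagonal fun _ : Fin p => (2 : ℝ) := by
  ext j l
  rw [Matrix.mul_apply]
  have e : ∀ i : Fin n, (dsn n hp)ᵀ j i * dsn n hp i l
      = if blk hp i = j then (if j = l then (if i.val < 2 * p then 1 else 0) else 0) else 0 := by
    intro i
    by_cases h1 : blk hp i = j
    · subst h1; simp [dsn]; split_ifs <;> simp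
    · simp [dsn, h1]
  rw [Finset.sum_congr rfl fun i _ => e i, sum_blk hp h _ (fun i hi => by
    rw [if_neg (not_lt.2 hi), ite_self])]
  have h1 : p + j.val < 2 * p := by omega
  have h2 : j.val < 2 * p := by omega
  simp only [h1, h2, if_true, Matrix.diagonal_apply]
  split_ifs <;> norm_num

lemma dsn_gram_inv {p n : ℕ} (hp : 0 < p) (h : 2 * p ≤ n) :
    ((dsn n hp)ᵀ * dsn n hp)⁻¹ = Matrix.diagonal fun _ : Fin p => (1 / 2 : ℝ) := by
  rw [dsn_gram hp h]
  apply Matrix.inv_eq_right_inv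
  rw [Matrix.diagonal_mul_diagonal]
  norm_num

lemma dsn_lev {p n : ℕ} (hp : 0 < p) (h : 2 * p ≤ n) (i : Fin n) :
    lev (dsn n hp) i = if i.val < 2 * p then 1 / 2 else 0 := by
  unfold lev
  rw [dsn_gram_inv hp h]
  simp only [dotProduct, Matrix.mulVec_diagonal, dsn, Matrix.of_apply]
  rw [Finset.sum_eq_single (blk hp i)]
  · simp
  · intro b _ hb; simp [hb.symm]
  · simp

lemma dsn_mulVec {p n : ℕ} (hp : 0 < p) (β : Fin p → ℝ) (i : Fin n) :
    (dsn n hp *ᵥ β) i = if i.val < 2 * p then β (blk hp i) else 0 := by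
  simp only [Matrix.mulVec, dotProduct, dsn, Matrix.of_apply]
  rw [Finset.sum_eq_single (blk hp i)]
  · simp
  · intro b _ hb; simp [hb.symm]
  · simp

lemma olsSol_eq (K : ℕ) {p n : ℕ} (hp : 0 < p) (h : 2 * p ≤ n) :
    olsSol (dsn n hp) (resp K hp) = fun _ => 1 := by
  unfold olsSol
  rw [dsn_gram_inv hp h]
  ext j
  rw [Matrix.mulVec_diagonal]
  have : ((dsn n hp)ᵀ *ᵥ resp K hp) j
      = ∑ i : Fin n, if blk hp i = j then resp K hp i else 0 := by
    simp only [Matrix.mulVec, dotProduct, dsn, Matrix.transpose_apply, Matrix.of_apply]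
    refine Finset.sum_congr rfl fun i _ => ?_
    unfold resp
    split_ifs <;> simp
  rw [this, sum_blk hp h _ (fun i hi => by unfold resp; rw [if_neg (not_lt.2 hi)])]
  have h1 : p + j.val < 2 * p := by omega
  have h2 : j.val < 2 * p := by omega
  by_cases hK : j.val < K <;>
    simp [resp, blk, h1, h2, Nat.mod_eq_of_lt j.2, hK]
  norm_num

lemma lossL_eq (K : ℕ) {p n : ℕ} (hp : 0 < p) (h : 2 * p ≤ n) (β : Fin p → ℝ) :
    lossL (dsn n hp) (resp K hp) β
      = ∑ j, (2 * (β j - 1) ^ 2 + if j.val < K then 2 else 0) := by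
  unfold lossL dotProduct
  simp only [Pi.sub_apply, dsn_mulVec]
  rw [sum_rows hp h _ (fun i hi => by simp [resp, not_lt.2 hi])]
  refine Finset.sum_congr rfl fun j _ => ?_
  have h1 : p + j.val < 2 * p := by omega
  have h2 : j.val < 2 * p := by omega
  by_cases hK : j.val < K <;>
    simp [resp, blk, h1, h2, Nat.mod_eq_of_lt j.2, hK] <;> ring

/-! ### Moments of the sample conditionally on the blocks -/

/-- The draws are independent conditionally on the block pattern `blk ∘ ω`. Hence a product of
functions of the single draws integrates to zero against any function of the pattern, as soon as
one factor is conditionally centred. -/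
lemma sum_centred {p n m : ℕ} (hp : 0 < p) (G : (Fin m → Fin p) → ℝ) (φ : Fin m → Fin n → ℝ)
    (t : Fin m) (ht : ∀ l, (∑ i : Fin n, if blk hp i = l then wt p i * φ t i else 0) = 0) :
    ∑ ω : Fin m → Fin n, samplingP (wt p) ω * G (blk hp ∘ ω) * ∏ s, φ s (ω s) = 0 := by
  have key : ∀ ω : Fin m → Fin n, samplingP (wt p) ω * G (blk hp ∘ ω) * ∏ s, φ s (ω s)
      = ∑ σ : Fin m → Fin p,
          G σ * ∏ s, (if blk hp (ω s) = σ s then wt p (ω s) * φ s (ω s) else 0) := by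
    intro ω
    rw [Finset.sum_eq_single (blk hp ∘ ω)]
    · simp [samplingP, Finset.prod_mul_distrib]; ring
    · intro σ _ hσ
      obtain ⟨s, hs⟩ := Function.ne_iff.1 hσ
      rw [Finset.prod_eq_zero (Finset.mem_univ s), mul_zero]
      rw [if_neg (fun h => hs h.symm)]
    · simp
  rw [Finset.sum_congr rfl fun ω _ => key ω, Finset.sum_comm]
  refine Finset.sum_eq_zero fun σ _ => ?_
  rw [← Finset.mul_sum,
    ← Fintype.prod_sum (fun s i => if blk hp i = σ s then wt p i * φ s i else 0),
    Finset.prod_eq_zero (Finset.mem_univ t) (ht (σ t)), mul_zero]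

lemma sum_centred_one {p n m : ℕ} (hp : 0 < p) (G : (Fin m → Fin p) → ℝ) (e : Fin n → ℝ)
    (t : Fin m) (he : ∀ l, (∑ i : Fin n, if blk hp i = l then wt p i * e i else 0) = 0) :
    ∑ ω : Fin m → Fin n, samplingP (wt p) ω * G (blk hp ∘ ω) * e (ω t) = 0 := by
  have := sum_centred hp G (fun s i => if s = t then e i else 1) t (by simpa using he)
  simpa using this

lemma sum_centred_two {p n m : ℕ} (hp : 0 < p) (G : (Fin m → Fin p) → ℝ) (e : Fin n → ℝ)
    (s t : Fin m) (hst : s ≠ t)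
    (he : ∀ l, (∑ i : Fin n, if blk hp i = l then wt p i * e i else 0) = 0) :
    ∑ ω : Fin m → Fin n, samplingP (wt p) ω * G (blk hp ∘ ω) * (e (ω s) * e (ω t)) = 0 := by
  have := sum_centred hp G
    (fun u i => (if u = s then e i else 1) * (if u = t then e i else 1)) s (by
      simpa [hst] using he)
  simp_rw [Finset.prod_mul_distrib] at this
  simpa using this

lemma centred_dvt {p n : ℕ} (hp : 0 < p) (h : 2 * p ≤ n) (j l : Fin p) :
    (∑ i : Fin n, if blk hp i = l then
      wt p i * (if blk hp i = j then dvt p i else 0) else 0) = 0 := by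
  by_cases hj : l = j
  · subst hj
    refine Eq.trans ?_ (wt_dvt_blk hp h l)
    refine Finset.sum_congr rfl fun i _ => ?_
    split_ifs <;> rfl
  · refine Finset.sum_eq_zero fun i _ => ?_
    split_ifs with h1 h2
    · exact absurd (h1.symm.trans h2) hj
    · simp
    · rfl

lemma centred_dvt_sq {p n : ℕ} (hp : 0 < p) (h : 2 * p ≤ n) (j l : Fin p) :
    (∑ i : Fin n, if blk hp i = l then
      wt p i * (if blk hp i = j then dvt p i ^ 2 - 2 else 0) else 0) = 0 := by
  by_cases hj : l = j
  · subst hj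
    refine Eq.trans ?_ (wt_dvt_sq_blk hp h l)
    refine Finset.sum_congr rfl fun i _ => ?_
    split_ifs <;> rfl
  · refine Finset.sum_eq_zero fun i _ => ?_
    split_ifs with h1 h2
    · exact absurd (h1.symm.trans h2) hj
    · simp
    · rfl

lemma sum_dev {p n m : ℕ} (hp : 0 < p) (h : 2 * p ≤ n) (G : (Fin m → Fin p) → ℝ) (j : Fin p) :
    ∑ ω : Fin m → Fin n, samplingP (wt p) ω * G (blk hp ∘ ω) * dev hp ω j = 0 := by
  unfold dev
  simp_rw [Finset.mul_sum]
  rw [Finset.sum_comm]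
  exact Finset.sum_eq_zero fun t _ =>
    sum_centred_one hp G (fun i => if blk hp i = j then dvt p i else 0) t
      (centred_dvt hp h j)

lemma sum_dev_sq {p n m : ℕ} (hp : 0 < p) (h : 2 * p ≤ n) (G : (Fin m → Fin p) → ℝ)
    (j : Fin p) :
    ∑ ω : Fin m → Fin n, samplingP (wt p) ω * G (blk hp ∘ ω) * dev hp ω j ^ 2
      = ∑ ω : Fin m → Fin n, samplingP (wt p) ω * G (blk hp ∘ ω) * (2 * hits hp ω j) := by
  rw [← sub_eq_zero, ← Finset.sum_sub_distrib]
  have e : ∀ ω : Fin m → Fin n,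
      samplingP (wt p) ω * G (blk hp ∘ ω) * dev hp ω j ^ 2
        - samplingP (wt p) ω * G (blk hp ∘ ω) * (2 * hits hp ω j)
      = ∑ s, ∑ t, samplingP (wt p) ω * G (blk hp ∘ ω) *
          ((if blk hp (ω s) = j then dvt p (ω s) else 0)
              * (if blk hp (ω t) = j then dvt p (ω t) else 0)
            - if s = t then (if blk hp (ω s) = j then 2 else 0) else 0) := by
    intro ω
    have h1 : dev hp ω j ^ 2 = ∑ s, ∑ t, (if blk hp (ω s) = j then dvt p (ω s) else 0)
              * (if blk hp (ω t) = j then dvt p (ω t) else 0) := by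
      rw [sq, dev, Finset.sum_mul_sum]
    have h2 : 2 * hits hp ω j
        = ∑ s, ∑ t, if s = t then (if blk hp (ω s) = j then (2 : ℝ) else 0) else 0 := by
      rw [hits, Finset.mul_sum]
      refine Finset.sum_congr rfl fun s _ => ?_
      rw [Finset.sum_ite_eq Finset.univ s, if_pos (Finset.mem_univ s)]
      split_ifs <;> simp
    simp_rw [← Finset.mul_sum, Finset.sum_sub_distrib]
    rw [← h1, ← h2]; ring
  rw [Finset.sum_congr rfl fun ω _ => e ω, Finset.sum_comm]
  refine Finset.sum_eq_zero fun s _ => ?_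
  rw [Finset.sum_comm]
  refine Finset.sum_eq_zero fun t _ => ?_
  by_cases hst : s = t
  · subst hst
    refine Eq.trans ?_ (sum_centred_one hp G
      (fun i => if blk hp i = j then dvt p i ^ 2 - 2 else 0) s (centred_dvt_sq hp h j))
    refine Finset.sum_congr rfl fun ω _ => ?_
    by_cases hb : blk hp (ω s) = j
    · simp only [hb, if_true, sq]
    · simp [hb]
  · refine Eq.trans ?_ (sum_centred_two hp G
      (fun i => if blk hp i = j then dvt p i else 0) s t hst (centred_dvt hp h j))
    simp [hst]

/-! ### The sketched problem -/

lemma sketch_mul_apply {n p m : ℕ} (π : Fin n → ℝ) (ω : Fin m → Fin n)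
    (X : Matrix (Fin n) (Fin p) ℝ) (s : Fin m) (l : Fin p) :
    (samplingS π ω * X) s l = 1 / Real.sqrt (m * π (ω s)) * X (ω s) l := by
  simp [Matrix.mul_apply, samplingS]

lemma sketch_mulVec_apply {n m : ℕ} (π : Fin n → ℝ) (ω : Fin m → Fin n)
    (y : Fin n → ℝ) (s : Fin m) :
    (samplingS π ω *ᵥ y) s = 1 / Real.sqrt (m * π (ω s)) * y (ω s) := by
  simp [Matrix.mulVec, dotProduct, samplingS]

lemma inv_sqrt_sq {m : ℕ} {a : ℝ} (ha : 0 ≤ a) :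
    1 / Real.sqrt (m * a) * (1 / Real.sqrt (m * a)) = 1 / (m * a) := by
  rw [div_mul_div_comm, Real.mul_self_sqrt (by positivity), one_mul]

lemma inv_wt {p n m : ℕ} (hp : 0 < p) (hm : 0 < m) (i : Fin n) (hi : i.val < 2 * p) :
    1 / (m * wt p i) = p / m * (2 + dvt p i / 2) := by
  have : (0 : ℝ) < p := by exact_mod_cast hp
  have : (0 : ℝ) < m := by exact_mod_cast hm
  unfold wt dvt
  by_cases h : i.val < p
  · simp only [h, if_true]; field_simp; norm_num
  · simp only [h, hi, if_true, if_false]; field_simp; norm_num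

lemma sketch_gram {p n m : ℕ} (hp : 0 < p) (hm : 0 < m) (ω : Fin m → Fin n)
    (hω : ∀ s, (ω s).val < 2 * p) :
    (samplingS (wt p) ω * dsn n hp)ᵀ * (samplingS (wt p) ω * dsn n hp)
      = Matrix.diagonal fun j => (p / m : ℝ) * (2 * hits hp ω j + dev hp ω j / 2) := by
  ext j l
  rw [Matrix.mul_apply]
  simp only [Matrix.transpose_apply, sketch_mul_apply]
  have e : ∀ s, 1 / Real.sqrt (m * wt p (ω s)) * dsn n hp (ω s) j
      * (1 / Real.sqrt (m * wt p (ω s)) * dsn n hp (ω s) l)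
      = if j = l then (p / m : ℝ) * (2 * (if blk hp (ω s) = j then 1 else 0)
          + (if blk hp (ω s) = j then dvt p (ω s) else 0) / 2) else 0 := by
    intro s
    rw [mul_mul_mul_comm, inv_sqrt_sq (wt_nonneg p _), inv_wt hp hm _ (hω s)]
    simp only [dsn, Matrix.of_apply, hω s, if_true]
    by_cases h1 : blk hp (ω s) = j
    · subst h1; split_ifs <;> simp
    · simp [h1]
  rw [Finset.sum_congr rfl fun s _ => e s, Matrix.diagonal_apply]
  split_ifs
  · rw [← Finset.mul_sum, Finset.sum_add_distrib, ← Finset.mul_sum, ← Finset.sum_div]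
    rfl
  · simp

lemma sketch_rhs (K : ℕ) {p n m : ℕ} (hp : 0 < p) (hm : 0 < m) (ω : Fin m → Fin n)
    (hω : ∀ s, (ω s).val < 2 * p) (j : Fin p) :
    ((samplingS (wt p) ω * dsn n hp)ᵀ *ᵥ (samplingS (wt p) ω *ᵥ resp K hp)) j
      = (p / m : ℝ) * (2 * hits hp ω j
          + if j.val < K then - dev hp ω j else dev hp ω j / 2) := by
  simp only [Matrix.mulVec, dotProduct, Matrix.transpose_apply, sketch_mul_apply]
  have e : ∀ s, 1 / Real.sqrt (m * wt p (ω s)) * dsn n hp (ω s) j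
      * ∑ i, samplingS (wt p) ω s i * resp K hp i
      = (p / m : ℝ) * (2 * (if blk hp (ω s) = j then 1 else 0)
          + (if blk hp (ω s) = j then dvt p (ω s) else 0)
            * if j.val < K then -1 else 1 / 2) := by
    intro s
    have := sketch_mulVec_apply (wt p) ω (resp K hp) s
    simp only [Matrix.mulVec, dotProduct] at this
    rw [this, mul_mul_mul_comm, inv_sqrt_sq (wt_nonneg p _), inv_wt hp hm _ (hω s)]
    simp only [dsn, Matrix.of_apply, hω s, if_true, resp]
    by_cases h1 : blk hp (ω s) = j
    · subst h1
      by_cases h2 : (blk hp (ω s)).val < K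
      · by_cases h3 : (ω s).val < p
        · simp [h2, dvt, h3]
        · simp [h2, dvt, h3, hω s]; ring
      · simp [h2]; left; ring
    · simp [h1]
  rw [Finset.sum_congr rfl fun s _ => e s, ← Finset.mul_sum, Finset.sum_add_distrib,
    ← Finset.mul_sum, ← Finset.sum_mul]
  change (p / m : ℝ) * (2 * hits hp ω j + dev hp ω j * _) = _
  split_ifs <;> ring

lemma hits_pos {p n m : ℕ} (hp : 0 < p) (ω : Fin m → Fin n) (hω : ω ∈ evt n m hp) (j : Fin p) :
    1 ≤ hits hp ω j := by
  obtain ⟨s, hs⟩ := (Finset.mem_filter.1 hω).2.2 j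
  unfold hits
  refine le_trans ?_ (Finset.single_le_sum (fun s _ => ?_) (Finset.mem_univ s))
  · simp only [Function.comp] at hs; simp [hs]
  · split_ifs <;> norm_num

lemma sum_hits {p n m : ℕ} (hp : 0 < p) (ω : Fin m → Fin n) : ∑ j, hits hp ω j = m := by
  unfold hits; rw [Finset.sum_comm]; simp

lemma dev_bounds {p n m : ℕ} (hp : 0 < p) (ω : Fin m → Fin n) (j : Fin p) :
    -hits hp ω j ≤ dev hp ω j ∧ dev hp ω j ≤ 2 * hits hp ω j := by
  unfold hits dev dvt
  rw [← Finset.sum_neg_distrib, Finset.mul_sum]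
  constructor <;> refine Finset.sum_le_sum fun s _ => ?_ <;> split_ifs <;> norm_num

lemma evt_live {p n m : ℕ} {hp : 0 < p} {ω : Fin m → Fin n} (hω : ω ∈ evt n m hp) :
    ∀ s, (ω s).val < 2 * p := (Finset.mem_filter.1 hω).2.1

lemma gram_entry_pos {p n m : ℕ} (hp : 0 < p) (hm : 0 < m) (ω : Fin m → Fin n)
    (hω : ω ∈ evt n m hp) (j : Fin p) :
    0 < (p / m : ℝ) * (2 * hits hp ω j + dev hp ω j / 2) := by
  have : (0 : ℝ) < p := by exact_mod_cast hp
  have : (0 : ℝ) < m := by exact_mod_cast hm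
  have h1 := hits_pos hp ω hω j
  have h2 := (dev_bounds hp ω j).1
  have : 0 < 2 * hits hp ω j + dev hp ω j / 2 := by linarith
  positivity

lemma sketch_gram_isUnit {p n m : ℕ} (hp : 0 < p) (hm : 0 < m) (ω : Fin m → Fin n)
    (hω : ω ∈ evt n m hp) :
    IsUnit ((samplingS (wt p) ω * dsn n hp)ᵀ * (samplingS (wt p) ω * dsn n hp)).det := by
  rw [sketch_gram hp hm ω (evt_live hω), Matrix.det_diagonal, isUnit_iff_ne_zero,
    Finset.prod_ne_zero_iff]
  exact fun j _ => (gram_entry_pos hp hm ω hω j).ne'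

lemma betaTilde_eq (K : ℕ) {p n m : ℕ} (hp : 0 < p) (hm : 0 < m) (ω : Fin m → Fin n)
    (hω : ω ∈ evt n m hp) (j : Fin p) :
    betaTilde (dsn n hp) (resp K hp) (wt p) ω j
      = if j.val < K then 1 - 3 * dev hp ω j / (4 * hits hp ω j + dev hp ω j) else 1 := by
  have hg := gram_entry_pos hp hm ω hω
  have hinv : (Matrix.diagonal fun j => (p / m : ℝ) * (2 * hits hp ω j + dev hp ω j / 2))⁻¹
      = Matrix.diagonal fun j => ((p / m : ℝ) * (2 * hits hp ω j + dev hp ω j / 2))⁻¹ := by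
    apply Matrix.inv_eq_right_inv
    rw [Matrix.diagonal_mul_diagonal, ← Matrix.diagonal_one]
    congr 1
    ext j
    exact mul_inv_cancel₀ (hg j).ne'
  unfold betaTilde
  rw [sketch_gram hp hm ω (evt_live hω), hinv, Matrix.mulVec_diagonal,
    sketch_rhs K hp hm ω (evt_live hω)]
  have hj := hg j
  have hq : (p / m : ℝ) ≠ 0 := fun h => by rw [h, zero_mul] at hj; exact lt_irrefl _ hj
  have hd : 2 * hits hp ω j + dev hp ω j / 2 ≠ 0 :=
    fun h => by rw [h, mul_zero] at hj; exact lt_irrefl _ hj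
  rw [mul_inv, mul_mul_mul_comm, inv_mul_cancel₀ hq, one_mul]
  have hd' : 4 * hits hp ω j + dev hp ω j ≠ 0 := fun h => hd (by linarith)
  split_ifs
  · rw [inv_mul_eq_div, eq_sub_iff_add_eq, div_add_div _ _ hd hd', div_eq_one_iff_eq
      (mul_ne_zero hd hd')]
    ring
  · exact inv_mul_cancel₀ hd

/-- With `u = D / (4N)` the error of a biased coordinate is `-3u/(1+u)`, and `1 + u ≤ 3/2`, so
it is at least `-3u + 2u²`. -/
lemma bias_pointwise {N D : ℝ} (hN : 0 < N) (h1 : -N ≤ D) (h2 : D ≤ 2 * N) :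
    -(3 / 4) * D / N + 1 / 8 * D ^ 2 / N ^ 2 ≤ -(3 * D / (4 * N + D)) := by
  have h : 0 < 4 * N + D := by linarith
  have : -(3 * D / (4 * N + D)) - (-(3 / 4) * D / N + 1 / 8 * D ^ 2 / N ^ 2)
      = D ^ 2 * (2 * N - D) / (8 * N ^ 2 * (4 * N + D)) := by
    field_simp; ring
  have h3 : 0 ≤ D ^ 2 * (2 * N - D) / (8 * N ^ 2 * (4 * N + D)) := by
    apply div_nonneg
    · exact mul_nonneg (sq_nonneg _) (by linarith)
    · positivity
  linarith

lemma bias_le_one {N D : ℝ} (hN : 0 < N) (h1 : -N ≤ D) :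
    -(3 * D / (4 * N + D)) ≤ 1 := by
  have h : 0 < 4 * N + D := by linarith
  rw [neg_le, le_div_iff₀ h]; linarith

/-! ### Probability of the event -/

lemma samplingP_nonneg_s4 {p n m : ℕ} (ω : Fin m → Fin n) : 0 ≤ samplingP (wt p) ω :=
  Finset.prod_nonneg fun _ _ => wt_nonneg p _

lemma samplingP_dead {p n m : ℕ} (ω : Fin m → Fin n) (h : ¬ ∀ s, (ω s).val < 2 * p) :
    samplingP (wt p) ω = 0 := by
  push Not at h
  obtain ⟨s, hs⟩ := h
  exact Finset.prod_eq_zero (Finset.mem_univ s) (wt_dead _ hs)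

lemma samplingP_sum {p n : ℕ} (m : ℕ) (hp : 0 < p) (h : 2 * p ≤ n) :
    ∑ ω : Fin m → Fin n, samplingP (wt p) ω = 1 := by
  unfold samplingP
  rw [← Fintype.sum_pow, wt_sum hp h, one_pow]

lemma samplingP_miss {p n : ℕ} (m : ℕ) (hp : 0 < p) (h : 2 * p ≤ n) (j : Fin p) :
    (∑ ω : Fin m → Fin n, if ∀ s, blk hp (ω s) ≠ j then samplingP (wt p) ω else 0)
      = (1 - 1 / (p : ℝ)) ^ m := by
  have e : ∀ ω : Fin m → Fin n, (if ∀ s, blk hp (ω s) ≠ j then samplingP (wt p) ω else 0)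
      = ∏ s, (wt p (ω s) - if blk hp (ω s) = j then wt p (ω s) else 0) := by
    intro ω
    split_ifs with hω
    · exact Finset.prod_congr rfl fun s _ => by simp [hω s]
    · push Not at hω
      obtain ⟨s, hs⟩ := hω
      rw [Finset.prod_eq_zero (Finset.mem_univ s)]
      simp [hs]
  rw [Finset.sum_congr rfl fun ω _ => e ω,
    ← Fintype.sum_pow (fun i : Fin n => wt p i - if blk hp i = j then wt p i else 0),
    Finset.sum_sub_distrib, wt_sum hp h, wt_blk hp h]

lemma evt_prob_ge {p n : ℕ} (m : ℕ) (hp : 0 < p) (h : 2 * p ≤ n) :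
    1 - (p : ℝ) * (1 - 1 / (p : ℝ)) ^ m ≤ eventProb (samplingP (wt p)) (evt n m hp) := by
  have h1 : ∑ j : Fin p,
      (∑ ω : Fin m → Fin n, if ∀ s, blk hp (ω s) ≠ j then samplingP (wt p) ω else 0)
      = p * (1 - 1 / (p : ℝ)) ^ m := by
    rw [Finset.sum_congr rfl fun j _ => samplingP_miss m hp h j]; simp
  rw [← h1, ← samplingP_sum m hp h, sub_le_iff_le_add, Finset.sum_comm]
  have h2 : eventProb (samplingP (wt p)) (evt n m hp)
      = ∑ ω : Fin m → Fin n, if ω ∈ evt n m hp then samplingP (wt p) ω else 0 := by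
    simp [eventProb]
  rw [h2, ← Finset.sum_add_distrib]
  refine Finset.sum_le_sum fun ω _ => ?_
  have h0 : ∀ j ∈ (Finset.univ : Finset (Fin p)),
      0 ≤ if ∀ s, blk hp (ω s) ≠ j then samplingP (wt p) ω else 0 := fun j _ => by
    split_ifs
    · exact samplingP_nonneg_s4 ω
    · exact le_rfl
  by_cases hω : ω ∈ evt n m hp
  · rw [if_pos hω]
    linarith [Finset.sum_nonneg h0]
  · rw [if_neg hω, zero_add]
    by_cases hl : ∀ s, (ω s).val < 2 * p
    · have : ¬ Function.Surjective (blk hp ∘ ω) := fun hs =>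
        hω (Finset.mem_filter.2 ⟨Finset.mem_univ _, hl, hs⟩)
      unfold Function.Surjective at this
      push Not at this
      obtain ⟨j, hj⟩ := this
      refine le_trans ?_ (Finset.single_le_sum h0 (Finset.mem_univ j))
      have hj' : ∀ s, blk hp (ω s) ≠ j := hj
      rw [if_pos hj']
    · rw [samplingP_dead ω hl]
      exact Finset.sum_nonneg (fun j hj => by simp)

lemma evt_prob_pos {p n m : ℕ} (hp : 0 < p) (h : 2 * p ≤ n) (hm : p ≤ m) :
    0 < eventProb (samplingP (wt p)) (evt n m hp) := by
  have hlt : ∀ s : Fin m, s.val % p < p := fun s => Nat.mod_lt _ hp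
  -- A sample of positive probability that hits the blocks cyclically.
  let ω : Fin m → Fin n := fun s => ⟨s.val % p, by have := hlt s; omega⟩
  have hl : ∀ s, (ω s).val < 2 * p := fun s => by have := hlt s; simp only [ω]; omega
  have hω : ω ∈ evt n m hp := by
    refine Finset.mem_filter.2 ⟨Finset.mem_univ _, hl, fun j => ⟨⟨j.val, by omega⟩, ?_⟩⟩
    ext; simp [blk, ω, Nat.mod_eq_of_lt j.2]
  refine lt_of_lt_of_le ?_ (Finset.single_le_sum (fun ω _ => samplingP_nonneg_s4 ω) hω)
  exact Finset.prod_pos fun s _ => wt_pos hp _ (hl s)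

/-! ### The bias -/

open Classical in
/-- Rows of zero weight do not contribute, so sums over the event are sums over all samples
against the indicator of a property of the block pattern. -/
lemma sum_evt {p n m : ℕ} (hp : 0 < p) (F : (Fin m → Fin n) → ℝ) :
    ∑ ω ∈ evt n m hp, samplingP (wt p) ω * F ω
      = ∑ ω, samplingP (wt p) ω *
          (if Function.Surjective (blk hp ∘ ω) then 1 else 0) * F ω := by
  unfold evt
  rw [Finset.sum_filter]
  refine Finset.sum_congr rfl fun ω _ => ?_
  by_cases hl : ∀ s, (ω s).val < 2 * p
  · by_cases hs : Function.Surjective (blk hp ∘ ω) <;> simp [hl, hs]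
  · rw [if_neg (fun h => hl h.1), samplingP_dead ω hl]; simp

lemma sum_evt_error {p n m : ℕ} (hp : 0 < p) (h : 2 * p ≤ n) (j : Fin p) :
    ∑ ω ∈ evt n m hp, samplingP (wt p) ω * (1 / (4 * hits hp ω j))
      ≤ ∑ ω ∈ evt n m hp, samplingP (wt p) ω *
          (-(3 * dev hp ω j / (4 * hits hp ω j + dev hp ω j))) := by
  classical
  let N : (Fin m → Fin p) → ℝ := fun σ => ∑ s, if σ s = j then 1 else 0
  let I : (Fin m → Fin p) → ℝ := fun σ => if Function.Surjective σ then 1 else 0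
  have hN : ∀ ω : Fin m → Fin n, N (blk hp ∘ ω) = hits hp ω j := fun _ => rfl
  have e1 : ∑ ω ∈ evt n m hp, samplingP (wt p) ω * (-(3 / 4) * dev hp ω j / hits hp ω j) = 0 := by
    rw [sum_evt]
    refine Eq.trans (Finset.sum_congr rfl fun ω _ => ?_)
      (sum_dev hp h (fun σ => I σ * (-(3 / 4) / N σ)) j)
    simp only [hN, I]; ring
  have e2 : ∑ ω ∈ evt n m hp, samplingP (wt p) ω * (1 / 8 * dev hp ω j ^ 2 / hits hp ω j ^ 2)
      = ∑ ω ∈ evt n m hp, samplingP (wt p) ω * (1 / (4 * hits hp ω j)) := by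
    have := sum_dev_sq (m := m) hp h (fun σ => I σ * (1 / 8 / N σ ^ 2)) j
    rw [sum_evt]
    refine Eq.trans (Eq.trans (Finset.sum_congr rfl fun ω _ => ?_) this) ?_
    · simp only [hN, I]; ring
    rw [← sub_eq_zero, sum_evt, ← Finset.sum_sub_distrib]
    refine Finset.sum_eq_zero fun ω _ => ?_
    simp only [hN, I]
    by_cases h0 : hits hp ω j = 0
    · simp [h0]
    · field_simp; ring
  rw [← e2, ← zero_add (∑ ω ∈ evt n m hp, _), ← e1, ← Finset.sum_add_distrib]
  refine Finset.sum_le_sum fun ω hω => ?_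
  rw [← mul_add]
  have hb := dev_bounds hp ω j
  exact mul_le_mul_of_nonneg_left
    (bias_pointwise (by linarith [hits_pos hp ω hω j]) hb.1 hb.2) (samplingP_nonneg_s4 ω)

lemma condExp_apply {Ω : Type*} {p : ℕ} (P : Ω → ℝ) (ζ : Finset Ω) (f : Ω → Fin p → ℝ)
    (j : Fin p) :
    condExp P ζ f j = (∑ ω ∈ ζ, P ω * f ω j) / eventProb P ζ := by
  simp [condExp, Finset.sum_apply, div_eq_inv_mul]

lemma mean_unbiased {K p n m : ℕ} (hp : 0 < p) (h : 2 * p ≤ n) (hm : p ≤ m)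
    (j : Fin p) (hj : ¬ j.val < K) :
    condExp (samplingP (wt p)) (evt n m hp) (betaTilde (dsn n hp) (resp K hp) (wt p)) j = 1 := by
  rw [condExp_apply, div_eq_one_iff_eq (evt_prob_pos hp h hm).ne']
  refine Finset.sum_congr rfl fun ω hω => ?_
  rw [betaTilde_eq K hp (by omega) ω hω, if_neg hj, mul_one]

lemma mean_biased {K p n m : ℕ} (hp : 0 < p) (h : 2 * p ≤ n) (hm : p ≤ m)
    (j : Fin p) (hj : j.val < K) :
    condExp (samplingP (wt p)) (evt n m hp) (betaTilde (dsn n hp) (resp K hp) (wt p)) j - 1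
      = (∑ ω ∈ evt n m hp, samplingP (wt p) ω *
          (-(3 * dev hp ω j / (4 * hits hp ω j + dev hp ω j))))
        / eventProb (samplingP (wt p)) (evt n m hp) := by
  rw [condExp_apply, sub_eq_iff_eq_add, div_add_one (evt_prob_pos hp h hm).ne']
  congr 1
  rw [eventProb, ← Finset.sum_add_distrib]
  refine Finset.sum_congr rfl fun ω hω => ?_
  rw [betaTilde_eq K hp (by omega) ω hω, if_pos hj]; ring

lemma mean_biased_ge {K p n m : ℕ} (hp : 0 < p) (h : 2 * p ≤ n) (hm : p ≤ m)
    (j : Fin p) (hj : j.val < K) :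
    (∑ ω ∈ evt n m hp, samplingP (wt p) ω * (1 / (4 * hits hp ω j)))
        / eventProb (samplingP (wt p)) (evt n m hp)
      ≤ condExp (samplingP (wt p)) (evt n m hp)
          (betaTilde (dsn n hp) (resp K hp) (wt p)) j - 1 := by
  rw [mean_biased hp h hm j hj]
  exact div_le_div_of_nonneg_right (sum_evt_error hp h j) (evt_prob_pos hp h hm).le

lemma mean_biased_nonneg {K p n m : ℕ} (hp : 0 < p) (h : 2 * p ≤ n) (hm : p ≤ m)
    (j : Fin p) (hj : j.val < K) :
    0 ≤ condExp (samplingP (wt p)) (evt n m hp)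
          (betaTilde (dsn n hp) (resp K hp) (wt p)) j - 1 := by
  refine le_trans ?_ (mean_biased_ge hp h hm j hj)
  refine div_nonneg (Finset.sum_nonneg fun ω hω => ?_) (evt_prob_pos hp h hm).le
  have := hits_pos hp ω hω j
  have := samplingP_nonneg_s4 (p := p) ω
  positivity

lemma mean_biased_le {K p n m : ℕ} (hp : 0 < p) (h : 2 * p ≤ n) (hm : p ≤ m)
    (j : Fin p) (hj : j.val < K) :
    condExp (samplingP (wt p)) (evt n m hp)
          (betaTilde (dsn n hp) (resp K hp) (wt p)) j - 1 ≤ 1 := by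
  rw [mean_biased hp h hm j hj, div_le_one (evt_prob_pos hp h hm)]
  refine Finset.sum_le_sum fun ω hω => ?_
  exact mul_le_of_le_one_right (samplingP_nonneg_s4 ω)
    (bias_le_one (by linarith [hits_pos hp ω hω j]) (dev_bounds hp ω j).1)

lemma card_low {K p : ℕ} (hpK : p = 2 * K) :
    (Finset.univ.filter fun j : Fin p => j.val < K).card = K ∧
    (Finset.univ.filter fun j : Fin p => ¬ j.val < K).card = K := by
  have h1 : (Finset.univ.filter fun j : Fin p => j.val < K).card = K := by
    rw [Fin.card_filter_val_lt]; omega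
  have h2 := Finset.card_filter_add_card_filter_not (s := (Finset.univ : Finset (Fin p)))
    (fun j : Fin p => j.val < K)
  rw [Finset.card_univ, Fintype.card_fin] at h2
  exact ⟨h1, by omega⟩

/-- Harmonic-mean bound: the `K` blocks share at most `m` draws. It follows by summing the tangent
line of `x ↦ 1/x` at the point `m / K`. -/
lemma sum_inv_hits {K p n m : ℕ} (hpK : p = 2 * K) (hp : 0 < p) (hm : 0 < m)
    (ω : Fin m → Fin n) (hω : ω ∈ evt n m hp) :
    (K : ℝ) ^ 2 / (4 * m)
      ≤ ∑ j : Fin p with j.val < K, 1 / (4 * hits hp ω j) := by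
  have hm' : (0 : ℝ) < m := by exact_mod_cast hm
  have h1 : ∑ j : Fin p with j.val < K, hits hp ω j ≤ m := by
    rw [← sum_hits hp ω]
    exact Finset.sum_le_sum_of_subset_of_nonneg (Finset.filter_subset _ _)
      (fun j _ _ => by linarith [hits_pos hp ω hω j])
  have h2 : ∀ j : Fin p, 1 / 4 * (2 * (K / m : ℝ) - hits hp ω j * (K / m : ℝ) ^ 2)
      ≤ 1 / (4 * hits hp ω j) := by
    intro j
    have hN := hits_pos hp ω hω j
    have hN' : 0 < hits hp ω j := by linarith
    rw [le_div_iff₀ (by positivity)]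
    nlinarith [sq_nonneg (hits hp ω j * (K / m : ℝ) - 1)]
  refine le_trans ?_ (Finset.sum_le_sum fun j _ => h2 j)
  rw [← Finset.mul_sum, Finset.sum_sub_distrib, Finset.sum_const, (card_low hpK).1,
    nsmul_eq_mul, ← Finset.sum_mul]
  have h3 := mul_le_mul_of_nonneg_right h1 (sq_nonneg (K / m : ℝ))
  have h4 : (m : ℝ) * (K / m : ℝ) ^ 2 = K ^ 2 / m := by field_simp
  have h5 : (K : ℝ) * (2 * (K / m : ℝ)) = 2 * (K ^ 2 / m) := by ring
  have h6 : (K : ℝ) ^ 2 / (4 * m) = 1 / 4 * (K ^ 2 / m) := by field_simp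
  rw [h4] at h3
  rw [h5, h6]; linarith

lemma sum_bias_ge {K p n m : ℕ} (hpK : p = 2 * K) (hp : 0 < p) (h : 2 * p ≤ n) (hm : p ≤ m) :
    (K : ℝ) ^ 2 / (4 * m) ≤ ∑ j : Fin p with j.val < K,
      (condExp (samplingP (wt p)) (evt n m hp)
          (betaTilde (dsn n hp) (resp K hp) (wt p)) j - 1) := by
  refine le_trans ?_ (Finset.sum_le_sum fun j hj =>
    mean_biased_ge hp h hm j (Finset.mem_filter.1 hj).2)
  rw [← Finset.sum_div, le_div_iff₀ (evt_prob_pos hp h hm), Finset.sum_comm, eventProb,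
    Finset.mul_sum]
  refine Finset.sum_le_sum fun ω hω => ?_
  rw [← Finset.mul_sum, mul_comm]
  exact mul_le_mul_of_nonneg_left (sum_inv_hits hpK hp (by omega) ω hω) (samplingP_nonneg_s4 ω)

lemma sum_bias_sq_ge {K p n m : ℕ} (hK : 0 < K) (hpK : p = 2 * K) (hp : 0 < p) (h : 2 * p ≤ n)
    (hm : p ≤ m) :
    (K : ℝ) ^ 3 / (16 * m ^ 2) ≤ ∑ j : Fin p with j.val < K,
      (condExp (samplingP (wt p)) (evt n m hp)
          (betaTilde (dsn n hp) (resp K hp) (wt p)) j - 1) ^ 2 := by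
  have h1 := sum_bias_ge hpK hp h hm
  have h2 := sq_sum_le_card_mul_sum_sq (s := Finset.univ.filter fun j : Fin p => j.val < K)
    (f := fun j => condExp (samplingP (wt p)) (evt n m hp)
          (betaTilde (dsn n hp) (resp K hp) (wt p)) j - 1)
  rw [(card_low hpK).1] at h2
  have hK' : (0 : ℝ) < K := by exact_mod_cast hK
  have hm' : (0 : ℝ) < m := by exact_mod_cast (by omega : 0 < m)
  have h3 := (pow_le_pow_left₀ (by positivity) h1 2).trans h2
  have h4 : ((K : ℝ) ^ 2 / (4 * m)) ^ 2 = K * (K ^ 3 / (16 * m ^ 2)) := by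
    field_simp; norm_num
  rw [h4] at h3
  exact le_of_mul_le_mul_left h3 hK'

/-- Squared distance of `(1, 1)` from the line spanned by `(1, 1 + b)`: rescaling cannot correct
a biased and an unbiased coordinate at the same time. -/
lemma rescale_pair {b : ℝ} (h0 : 0 ≤ b) (h1 : b ≤ 1) (γ : ℝ) :
    b ^ 2 / 5 ≤ (γ * (1 + b) - 1) ^ 2 + (γ - 1) ^ 2 := by
  -- Cauchy-Schwarz for the vector `(-1, 1 + b)`, whose squared norm is at most `5`.
  have h2 : b ^ 2 ≤ (1 + (1 + b) ^ 2) * ((γ * (1 + b) - 1) ^ 2 + (γ - 1) ^ 2) := by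
    nlinarith [sq_nonneg ((1 + b) * (γ * (1 + b) - 1) + (γ - 1))]
  have h3 : (1 + (1 + b) ^ 2) ≤ 5 := by nlinarith
  have h4 := mul_le_mul_of_nonneg_right h3
    (add_nonneg (sq_nonneg (γ * (1 + b) - 1)) (sq_nonneg (γ - 1)))
  linarith

lemma excess_loss_ge {K p n m : ℕ} (hK : 0 < K) (hpK : p = 2 * K) (hp : 0 < p) (h : 2 * p ≤ n)
    (hm : p ≤ m) (γ : ℝ) :
    (K : ℝ) ^ 3 / (40 * m ^ 2)
      ≤ lossL (dsn n hp) (resp K hp) (γ • condExp (samplingP (wt p)) (evt n m hp)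
            (betaTilde (dsn n hp) (resp K hp) (wt p)))
          - lossL (dsn n hp) (resp K hp) (olsSol (dsn n hp) (resp K hp)) := by
  rw [olsSol_eq K hp h, lossL_eq K hp h, lossL_eq K hp h, ← Finset.sum_sub_distrib]
  have hsq := sum_bias_sq_ge hK hpK hp h hm
  have hge := fun j hj => mean_biased_nonneg (K := K) hp h hm j hj
  have hle := fun j hj => mean_biased_le (K := K) hp h hm j hj
  have hun := fun j hj => mean_unbiased (K := K) hp h hm j hj
  generalize condExp (samplingP (wt p)) (evt n m hp)
    (betaTilde (dsn n hp) (resp K hp) (wt p)) = c at *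
  rw [← Finset.sum_filter_add_sum_filter_not Finset.univ (fun j : Fin p => j.val < K)]
  have e2 : ∑ j : Fin p with ¬ j.val < K,
      ((2 * ((γ • c) j - 1) ^ 2 + if j.val < K then 2 else 0)
        - (2 * ((1 : ℝ) - 1) ^ 2 + if j.val < K then 2 else 0))
      = ∑ j : Fin p with j.val < K, 2 * (γ - 1) ^ 2 := by
    rw [Finset.sum_const, (card_low hpK).1]
    conv_rhs => rw [← (card_low hpK).2]
    rw [← Finset.sum_const]
    refine Finset.sum_congr rfl fun j hj => ?_
    rw [Pi.smul_apply, smul_eq_mul, hun j (Finset.mem_filter.1 hj).2]; ring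
  rw [e2, ← Finset.sum_add_distrib]
  have h40 : (K : ℝ) ^ 3 / (40 * m ^ 2) = 2 / 5 * (K ^ 3 / (16 * m ^ 2)) := by
    have hm' : (0 : ℝ) < m := by exact_mod_cast (by omega : 0 < m)
    field_simp; norm_num
  rw [h40]
  refine (mul_le_mul_of_nonneg_left hsq (by norm_num)).trans ?_
  rw [Finset.mul_sum]
  refine Finset.sum_le_sum fun j hj => ?_
  have hj := (Finset.mem_filter.1 hj).2
  have := rescale_pair (hge j hj) (hle j hj) γ
  rw [add_sub_cancel] at this
  rw [Pi.smul_apply, smul_eq_mul]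
  linarith

lemma resid_eq {K p n : ℕ} (hpK : p = 2 * K) (hp : 0 < p) (h : 2 * p ≤ n) :
    olsResid (dsn n hp) (resp K hp) ⬝ᵥ olsResid (dsn n hp) (resp K hp) = 2 * K := by
  have := lossL_eq K hp h (olsSol (dsn n hp) (resp K hp))
  rw [olsSol_eq K hp h] at this
  simp only [sub_self] at this
  unfold olsResid
  rw [olsSol_eq K hp h]
  refine this.trans ?_
  have e := (card_low hpK).1
  simp only [ne_eq, OfNat.ofNat_ne_zero, not_false_eq_true, zero_pow, mul_zero, zero_add]
  rw [← Finset.sum_filter, Finset.sum_const, e, nsmul_eq_mul, mul_comm]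

/-- **Bias lower bound for subsampled OLS** (Theorem 4.2): there is an absolute
constant `c₀ > 0` such that for every `k ≥ 1`, `p = 4k`, and every `n ≥ 2p`,
there exist `X`, `y` and a `1/2`-approximate leverage score sampling
distribution `π` such that for every `m ≥ p` there is an event `ζ` with
`P(ζ) ≥ 1 − p (1 − 1/p)^m` on which the sketched Gram matrices are invertible,
and for every scalar `γ`, `L(γ E_ζ[β̃]) − L(β_OLS) ≥ c₀ (p²/m²) ‖r‖²`. -/
theorem subsampled_ols_bias_lower_bound :
    ∃ c₀ : ℝ, 0 < c₀ ∧
      ∀ k : ℕ, 1 ≤ k →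
      ∀ n : ℕ, 2 * (4 * k) ≤ n →
        ∃ (X : Matrix (Fin n) (Fin (4 * k)) ℝ) (y : Fin n → ℝ) (π : Fin n → ℝ),
          IsUnit (Xᵀ * X).det ∧
          (∀ i, 0 ≤ π i) ∧ (∑ i, π i = 1) ∧
          (∀ i, lev X i / (2 * (4 * k)) ≤ π i ∧ π i ≤ 2 * lev X i / (4 * k)) ∧
          ∀ m : ℕ, 4 * k ≤ m →
            ∃ ζ : Finset (Fin m → Fin n),
              1 - (4 * k : ℝ) * (1 - 1 / (4 * k : ℝ)) ^ m
                  ≤ eventProb (samplingP π) ζ ∧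
              0 < eventProb (samplingP π) ζ ∧
              (∀ ω ∈ ζ,
                IsUnit ((samplingS π ω * X)ᵀ * (samplingS π ω * X)).det) ∧
              ∀ γ : ℝ,
                c₀ * ((4 * k : ℝ) ^ 2 / (m : ℝ) ^ 2) *
                    (olsResid X y ⬝ᵥ olsResid X y)
                  ≤ lossL X y (γ • condExp (samplingP π) ζ (betaTilde X y π))
                      - lossL X y (olsSol X y) := by
  refine ⟨1 / 320, by norm_num, fun k hk n hn => ?_⟩
  have hp : 0 < 4 * k := by omega
  have hk' : (0 : ℝ) < k := by exact_mod_cast hk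
  refine ⟨dsn n hp, resp (2 * k) hp, wt (4 * k), ?_, wt_nonneg _, wt_sum hp hn, fun i => ?_,
    fun m hm => ⟨evt n m hp, ?_, evt_prob_pos hp hn hm,
      sketch_gram_isUnit hp (by omega), fun γ => ?_⟩⟩
  · rw [dsn_gram hp hn, Matrix.det_diagonal]
    simp
  · rw [dsn_lev hp hn]
    unfold wt
    push_cast
    by_cases h1 : i.val < 4 * k
    · have h2 : i.val < 2 * (4 * k) := by omega
      simp only [h1, h2, if_true]
      constructor <;> rw [div_le_div_iff₀ (by positivity) (by positivity)] <;> nlinarith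
    · by_cases h2 : i.val < 2 * (4 * k)
      · simp only [h1, h2, if_true, if_false]
        constructor <;> rw [div_le_div_iff₀ (by positivity) (by positivity)] <;> nlinarith
      · simp [h1, h2]
  · have := evt_prob_ge m hp hn
    push_cast at this
    exact this
  · refine le_trans (le_of_eq ?_) (excess_loss_ge (K := 2 * k) (by omega) (by omega) hp hn hm γ)
    rw [resid_eq (by omega) hp hn]
    have hm' : (0 : ℝ) < m := by exact_mod_cast (by omega : 0 < m)
    push_cast
    field_simp; norm_num

end
end
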